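/- arXiv:2502.09727 — 2 statements merged into one kernel-verified Lean document; each statement's English description precedes it below -/
import Mathlib

section
/- Let M be a connected, noncompact topological manifold without boundary with dim M ≥ 2. If M is contractible, then M has exactly one end. -/
/-- `M` has exactly one end: for every compact `K ⊆ M`, exactly one connected component of
`M \ K` has noncompact closure. -/
def HasOneEnd (M : Type*) [TopologicalSpace M] : Prop :=
  ∀ K : Set M, IsCompact K →
    ∃! C : Set M, (∃ x ∈ Kᶜ, C = connectedComponentIn Kᶜ x) ∧ ¬ IsCompact (closure C)

/-!
Suppose that the complement of a compact set `K` has two unbounded components `A` and `B`. Contract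
`M` to a point `p`, follow the contraction at `x` up to time `u x` with `u` compactly supported and
`u = 1` on `K`, and send everything outside `A` to `p`: this gives a continuous `g : M → M` that is
the identity on `A` off a compact set. It is proper over `{p}ᶜ`, which is connected because the
dimension is at least two, so the parity of the number of points of its regular fibers over `{p}ᶜ`
is constant. Far out, however, a point of `A` has one preimage and a point of `B` has none.

The constancy of the parity is a local statement about zeros of maps to a normed space. For a smooth
map `G` the parity of the number of zeros is the integral modulo two of the pullback under `G` of a
bump form of total mass one at the origin. By Stokes' theorem this integral does not change along a
homotopy without zeros on the boundary. Smooth approximation extends this to continuous maps that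
are local homeomorphisms at their zeros, first in a Euclidean chart and then, by perturbing one
chart at a time, on a manifold.
-/

section

open Set Filter Topology MeasureTheory
open scoped ContDiff

section Stokes

variable {E F : Type*} [NormedAddCommGroup E] [NormedSpace ℝ E]
  [NormedAddCommGroup F] [NormedSpace ℝ F] {n : ℕ}

section Integral

variable [MeasurableSpace E] [BorelSpace E] {μ : Measure E}

lemma integral_fderiv_apply_eq_zero [FiniteDimensional ℝ E] [μ.IsAddHaarMeasure] {g : E → ℝ}
    (hg : ContDiff ℝ 1 g) (hc : HasCompactSupport g) (v : E) : ∫ x, fderiv ℝ g x v ∂μ = 0 := by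
  have hint : Integrable g μ := hg.continuous.integrable_of_hasCompactSupport hc
  have hint' : Integrable (fun x => fderiv ℝ g x v) μ :=
    ((hg.continuous_fderiv one_ne_zero).clm_apply continuous_const).integrable_of_hasCompactSupport
      (hc.fderiv_apply ℝ v)
  simpa using integral_mul_fderiv_eq_neg_fderiv_mul_of_integrable (μ := μ)
    (f := fun _ : E => (1 : ℝ)) (g := g) (v := v) (by simp) (by simpa using hint')
    (by simpa using hint) (fun _ _ => by fun_prop) (fun x _ => hg.differentiable one_ne_zero x)

lemma hasDerivAt_integral_of_compact_support [IsFiniteMeasureOnCompacts μ] {a : ℝ × E → F}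
    (ha : ContDiff ℝ 1 a) {C : Set E} (hC : IsCompact C) (hs : ∀ t, ∀ x ∉ C, a (t, x) = 0)
    (t : ℝ) :
    HasDerivAt (fun t => ∫ x, a (t, x) ∂μ) (∫ x, fderiv ℝ a (t, x) (1, 0) ∂μ) t := by
  have hd : Continuous fun q => fderiv ℝ a q (1, 0) :=
    (ha.continuous_fderiv one_ne_zero).clm_apply continuous_const
  have hderiv : ∀ t x, HasDerivAt (fun t => a (t, x)) (fderiv ℝ a (t, x) (1, 0)) t := fun t x =>
    (ha.differentiable one_ne_zero (t, x)).hasFDerivAt.comp_hasDerivAt t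
      ((hasDerivAt_id t).prodMk (hasDerivAt_const t x))
  have hz : ∀ t, ∀ x ∉ C, fderiv ℝ a (t, x) (1, 0) = 0 := fun t x hx =>
    (hderiv t x).unique (by simpa only [hs _ x hx] using hasDerivAt_const t (0 : F))
  obtain ⟨B, hB⟩ := ((isCompact_Icc (a := t - 1) (b := t + 1)).prod hC).exists_bound_of_continuousOn
    hd.continuousOn
  have hmeas : ∀ {b : ℝ × E → F}, Continuous b → (∀ t, ∀ x ∉ C, b (t, x) = 0) → ∀ t,
      Integrable (fun x => b (t, x)) μ := fun hb h0 t =>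
    (hb.comp (.prodMk_right t)).integrable_of_hasCompactSupport (.intro hC (h0 t))
  refine (hasDerivAt_integral_of_dominated_loc_of_deriv_le
    (F' := fun t x => fderiv ℝ a (t, x) (1, 0)) (bound := C.indicator fun _ => B)
    (Icc_mem_nhds (by linarith : t - 1 < t) (by linarith : t < t + 1))
    (.of_forall fun s => (hmeas ha.continuous hs s).aestronglyMeasurable)
    (hmeas ha.continuous hs t) (hmeas hd hz t).aestronglyMeasurable
    (.of_forall fun x s hsI => ?_)
    ((integrable_indicator_iff hC.measurableSet).2 (integrableOn_const hC.measure_lt_top.ne))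
    (.of_forall fun x s _ => hderiv s x)).2
  by_cases hx : x ∈ C
  · simpa only [indicator_of_mem hx] using hB (s, x) ⟨hsI, hx⟩
  · simp only [hz s x hx, norm_zero, indicator_of_notMem hx, le_refl]

variable [FiniteDimensional ℝ E]

/-- The terms of `dα (1, 0) (0, e₀) ⋯ (0, eₙ₋₁) = 0` other than the `t`-derivative are derivatives
of compactly supported functions on the slice. -/
lemma integral_fderiv_slice_eq_zero_of_extDeriv_eq_zero [μ.IsAddHaarMeasure]
    {α : ℝ × E → (ℝ × E) [⋀^Fin n]→L[ℝ] ℝ} (hα : Differentiable ℝ α)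
    (hα' : ∀ v, ContDiff ℝ 1 (α · v)) (hclosed : ∀ q, extDeriv α q = 0) {C : Set E}
    (hC : IsCompact C) (hs : ∀ t, ∀ x ∉ C, α (t, x) = 0) (e : Fin n → E) (t : ℝ) :
    ∫ x, fderiv ℝ (α · fun j => (0, e j)) (t, x) (1, 0) ∂μ = 0 := by
  let v : Fin (n + 1) → ℝ × E := Fin.cons (1, 0) fun j => (0, e j)
  let b (j : Fin n) (x : E) : ℝ := α (t, x) (j.succ.removeNth v)
  have hb : ∀ j, ContDiff ℝ 1 (b j) := fun j => (hα' _).comp (contDiff_prodMk_right t)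
  have hbc : ∀ j, HasCompactSupport (b j) := fun j =>
    .intro hC fun x hx => by simp [b, hs t x hx]
  have hslice : ∀ j x, fderiv ℝ (α · (j.succ.removeNth v)) (t, x) (0, e j) =
      fderiv ℝ (b j) x (e j) := fun j x => by
    have h := ((hα' (j.succ.removeNth v)).differentiable one_ne_zero (t, x)).hasFDerivAt.comp x
      (hasFDerivAt_prodMk_right t x)
    exact (congrArg (· (e j)) h.fderiv).symm
  have hsum : ∀ x, fderiv ℝ (α · fun j => (0, e j)) (t, x) (1, 0) =
      -∑ j : Fin n, (-1 : ℝ) ^ (j.succ : ℕ) * fderiv ℝ (b j) x (e j) := fun x => by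
    have h := extDeriv_apply (hα (t, x)) v
    rw [hclosed, Fin.sum_univ_succ, Fin.val_zero, pow_zero, one_smul] at h
    simp only [zsmul_eq_mul, Int.cast_pow, Int.cast_neg, Int.cast_one] at h
    simp_rw [← hslice]
    exact eq_neg_of_add_eq_zero_left h.symm
  simp_rw [hsum]
  rw [integral_neg, integral_finsetSum _ fun j _ => ?_, neg_eq_zero]
  · exact Finset.sum_eq_zero fun j _ => by
      rw [integral_const_mul, integral_fderiv_apply_eq_zero (hb j) (hbc j), mul_zero]
  · exact ((((hb j).continuous_fderiv one_ne_zero).clm_apply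
      continuous_const).integrable_of_hasCompactSupport ((hbc j).fderiv_apply ℝ _)).const_mul _

theorem integral_slice_eq_of_extDeriv_eq_zero [μ.IsAddHaarMeasure]
    {α : ℝ × E → (ℝ × E) [⋀^Fin n]→L[ℝ] ℝ} (hα : Differentiable ℝ α)
    (hα' : ∀ v, ContDiff ℝ 1 (α · v)) (hclosed : ∀ q, extDeriv α q = 0) {C : Set E}
    (hC : IsCompact C) (hs : ∀ t, ∀ x ∉ C, α (t, x) = 0) (e : Fin n → E) (t₀ t₁ : ℝ) :
    ∫ x, α (t₀, x) (fun j => (0, e j)) ∂μ = ∫ x, α (t₁, x) (fun j => (0, e j)) ∂μ := by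
  have hderiv : ∀ t, HasDerivAt (fun t => ∫ x, α (t, x) (fun j => (0, e j)) ∂μ) 0 t := fun t => by
    have h := hasDerivAt_integral_of_compact_support (μ := μ) (hα' fun j => (0, e j)) hC
      (fun t x hx => by simp [hs t x hx]) t
    rwa [integral_fderiv_slice_eq_zero_of_extDeriv_eq_zero hα hα' hclosed hC hs e t] at h
  exact is_const_of_deriv_eq_zero (fun t => (hderiv t).differentiableAt)
    (fun t => (hderiv t).deriv) t₀ t₁

end Integral

section Pullback

lemma alternatingMap_eq_zero_of_finrank_lt [FiniteDimensional ℝ E] {k : ℕ}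
    (h : Module.finrank ℝ E < k) (f : E [⋀^Fin k]→L[ℝ] F) : f = 0 := by
  ext v
  refine f.toAlternatingMap.map_linearDependent v fun hv => ?_
  exact absurd hv.fintype_card_le_finrank (by simpa using h)

variable {V : Type*} [NormedAddCommGroup V] [NormedSpace ℝ V]

lemma extDeriv_smul_eq_zero {χ : V → ℝ} {α : V → V [⋀^Fin n]→L[ℝ] F} {q : V}
    (hχ : DifferentiableAt ℝ χ q) (hα : DifferentiableAt ℝ α q) (hclosed : extDeriv α q = 0)
    (h : fderiv ℝ χ q = 0 ∨ α q = 0) : extDeriv (fun q => χ q • α q) q = 0 := by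
  have hfderiv : fderiv ℝ (fun q => χ q • α q) q = χ q • fderiv ℝ α q := by
    rw [fderiv_fun_smul hχ hα]
    rcases h with h | h <;> ext <;> simp [h]
  rw [extDeriv] at hclosed ⊢
  rw [hfderiv, ContinuousAlternatingMap.alternatizeUncurryFin_smul, hclosed, smul_zero]

lemma extDeriv_pullback_eq_zero_of_finrank_lt [FiniteDimensional ℝ E]
    (hn : Module.finrank ℝ E < n + 1) {η : E → E [⋀^Fin n]→L[ℝ] F} {H : V → E} {q : V}
    (hη : DifferentiableAt ℝ η (H q)) (hH : ContDiffAt ℝ 2 H q) :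
    extDeriv (fun q => (η (H q)).compContinuousLinearMap (fderiv ℝ H q)) q = 0 := by
  rw [extDeriv_pullback hη hH (by simp), alternatingMap_eq_zero_of_finrank_lt hn (extDeriv _ _)]
  rfl

end Pullback

section TopForm

lemma exists_contDiff_homotopy_mem_segment {V : Type*} [NormedAddCommGroup V]
    [NormedSpace ℝ V] {r : ℕ∞} {G₀ G₁ : V → E} (h₀ : ContDiff ℝ r G₀) (h₁ : ContDiff ℝ r G₁) :
    ∃ H : ℝ × V → E, ContDiff ℝ r H ∧ (∀ x, H (0, x) = G₀ x) ∧ (∀ x, H (1, x) = G₁ x) ∧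
      ∀ q, H q ∈ segment ℝ (G₀ q.2) (G₁ q.2) := by
  refine ⟨fun q => AffineMap.lineMap (G₀ q.2) (G₁ q.2) (Real.smoothTransition q.1), ?_, by simp,
    by simp, fun q => ?_⟩
  · simp only [AffineMap.lineMap_apply_module']
    exact ((Real.smoothTransition.contDiff.comp contDiff_fst).smul
      ((h₁.comp contDiff_snd).sub (h₀.comp contDiff_snd))).add (h₀.comp contDiff_snd)
  · rw [segment_eq_image_lineMap]
    exact ⟨_, ⟨Real.smoothTransition.nonneg _, Real.smoothTransition.le_one _⟩, rfl⟩

lemma apply_fderiv_slice_eq_det_fderiv {vol : E [⋀^Fin n]→L[ℝ] ℝ} {b : Fin n → E}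
    (hvol : ∀ f : E →L[ℝ] E, vol (fun j => f (b j)) = f.det) {H : ℝ × E → E} {t : ℝ} {x : E}
    (hH : DifferentiableAt ℝ H (t, x)) :
    vol (fun j => fderiv ℝ H (t, x) (0, b j)) = (fderiv ℝ (fun x => H (t, x)) x).det := by
  have h := hH.hasFDerivAt.comp x (hasFDerivAt_prodMk_right t x)
  rw [← hvol]
  exact congrArg (fun f : E →L[ℝ] E => vol fun j => f (b j)) h.fderiv.symm

variable [FiniteDimensional ℝ E]

lemma exists_alternatingMap_apply_eq_det (b : Module.Basis (Fin n) ℝ E) :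
    ∃ vol : E [⋀^Fin n]→L[ℝ] ℝ, ∀ f : E →L[ℝ] E, vol (fun j => f (b j)) = f.det := by
  have hcont : Continuous b.det := by
    simp only [funext fun v => b.det_apply v]
    exact Continuous.matrix_det (continuous_matrix fun i j =>
      (b.coord i).continuous_of_finiteDimensional.comp (continuous_apply j))
  refine ⟨{ b.det with cont := hcont }, fun f => ?_⟩
  exact (b.det_comp (f : E →ₗ[ℝ] E) b).trans (by rw [b.det_self, mul_one])

theorem integral_mul_det_fderiv_eq_of_segment [MeasurableSpace E] [BorelSpace E] {μ : Measure E}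
    [μ.IsAddHaarMeasure] {χ ρ : E → ℝ} {G₀ G₁ : E → E} (hχ : ContDiff ℝ 1 χ)
    (hχc : HasCompactSupport χ) (hρ : ContDiff ℝ 1 ρ) (h₀ : ContDiff ℝ 2 G₀)
    (h₁ : ContDiff ℝ 2 G₁)
    (hcond : ∀ x, fderiv ℝ χ x ≠ 0 → ∀ y ∈ segment ℝ (G₀ x) (G₁ x), ρ y = 0) :
    ∫ x, χ x * (ρ (G₀ x) * (fderiv ℝ G₀ x).det) ∂μ =
      ∫ x, χ x * (ρ (G₁ x) * (fderiv ℝ G₁ x).det) ∂μ := by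
  obtain ⟨vol, hvol⟩ := exists_alternatingMap_apply_eq_det (Module.finBasis ℝ E)
  obtain ⟨H, hH, hH₀, hH₁, hHseg⟩ := exists_contDiff_homotopy_mem_segment h₀ h₁
  have hHfderiv : ContDiff ℝ 1 (fderiv ℝ H) := hH.fderiv_right (by norm_num)
  have hη : Differentiable ℝ fun y => ρ y • vol := (hρ.differentiable one_ne_zero).smul_const _
  let β : ℝ × E → (ℝ × E) [⋀^Fin _]→L[ℝ] ℝ := fun q =>
    (ρ (H q) • vol).compContinuousLinearMap (fderiv ℝ H q)
  have hβ : Differentiable ℝ β := fun q =>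
    ((hη.comp (hH.differentiable two_ne_zero)) q).continuousAlternatingMapCompContinuousLinearMap
      (hHfderiv.differentiable one_ne_zero q)
  have hχd : Differentiable ℝ fun q : ℝ × E => χ q.2 :=
    (hχ.differentiable one_ne_zero).comp differentiable_snd
  let α : ℝ × E → (ℝ × E) [⋀^Fin _]→L[ℝ] ℝ := fun q => χ q.2 • β q
  have hα : ∀ v, ContDiff ℝ 1 (α · v) := fun v =>
    (hχ.comp contDiff_snd).mul ((hρ.comp (hH.of_le one_le_two)).mul
      (vol.toContinuousMultilinearMap.contDiff.comp
        (contDiff_pi.2 fun j => hHfderiv.clm_apply contDiff_const)))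
  have hclosed : ∀ q, extDeriv α q = 0 := fun q => by
    refine extDeriv_smul_eq_zero (hχd q) (hβ q) (extDeriv_pullback_eq_zero_of_finrank_lt
      (Nat.lt_succ_self _) (hη _) hH.contDiffAt) (or_iff_not_imp_left.2 fun h => ?_)
    have hne : fderiv ℝ χ q.2 ≠ 0 := fun h0 => h <| by
      have hcomp := (hχ.differentiable one_ne_zero q.2).hasFDerivAt.comp q hasFDerivAt_snd
      exact hcomp.fderiv.trans (by rw [h0, ContinuousLinearMap.zero_comp])
    ext v
    simp [β, hcond q.2 hne _ (hHseg q)]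
  have hslice : ∀ (t : ℝ) {G : E → E}, (∀ x, H (t, x) = G x) → ∀ x,
      α (t, x) (fun j => (0, Module.finBasis ℝ E j)) =
        χ x * (ρ (G x) * (fderiv ℝ G x).det) := fun t G hG x => by
    rw [← funext hG, ← apply_fderiv_slice_eq_det_fderiv hvol (hH.differentiable two_ne_zero _)]
    rfl
  have hsupp : ∀ t, ∀ x ∉ tsupport χ, α (t, x) = 0 := fun t x hx => by
    simp only [α, image_eq_zero_of_notMem_tsupport hx, zero_smul]
  have hconst : ∫ x, α (0, x) (fun j => (0, Module.finBasis ℝ E j)) ∂μ =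
      ∫ x, α (1, x) (fun j => (0, Module.finBasis ℝ E j)) ∂μ :=
    integral_slice_eq_of_extDeriv_eq_zero (hχd.smul hβ) hα hclosed hχc hsupp _ 0 1
  simpa only [hslice 0 hH₀, hslice 1 hH₁] using hconst

end TopForm

end Stokes

/-- The number of elements of `s` modulo two, to be used for finite sets only: it is the junk value
`0` on an infinite set. -/
noncomputable def parity {X : Type*} (s : Set X) : ZMod 2 := s.ncard

lemma finite_of_isLocalHomeomorphOn {X Y : Type*} [TopologicalSpace X] [TopologicalSpace Y]
    {f : X → Y} {y : Y} {s : Set X} (hs : IsCompact s) (hf : IsLocalHomeomorphOn f s)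
    (hsy : s ⊆ f ⁻¹' {y}) : s.Finite := by
  refine hs.finite (isDiscrete_iff_forall_mem_exists_isOpen.2 fun x hx => ?_)
  obtain ⟨e, hxe, rfl⟩ := hf x hx
  refine ⟨e.source, e.open_source, Subset.antisymm (fun z hz => ?_) (by simp [hx, hxe])⟩
  exact e.injOn hz.1 hxe ((hsy hz.2).trans (hsy hx).symm)

lemma intCast_sum_sign_eq_card {ι : Type*} (Z : Finset ι) {d : ι → ℝ} (hd : ∀ z ∈ Z, d z ≠ 0) :
    ((∑ z ∈ Z, (SignType.sign (d z) : ℤ) : ℤ) : ZMod 2) = Z.card := by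
  rw [Int.cast_sum, Finset.cast_card]
  refine Finset.sum_congr rfl fun z hz => ?_
  rcases (hd z hz).lt_or_gt with h | h
  · rw [sign_neg h]; rfl
  · rw [sign_pos h]; rfl

section SmoothParity

variable {E : Type*} [NormedAddCommGroup E] [NormedSpace ℝ E] [FiniteDimensional ℝ E]
  {C : Set E} {G G₀ G₁ : E → E}

lemma isLocalHomeomorphOn_of_det_fderiv_ne_zero {s : Set E} (hG : ∀ x ∈ s, ContDiffAt ℝ 1 G x)
    (hdet : ∀ x ∈ s, (fderiv ℝ G x).det ≠ 0) : IsLocalHomeomorphOn G s := fun x hx => by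
  have h : HasStrictFDerivAt G
      ((fderiv ℝ G x).toContinuousLinearEquivOfDetNeZero (hdet x hx) : E →L[ℝ] E) x := by
    simpa using (hG x hx).hasStrictFDerivAt one_ne_zero
  exact ⟨h.toOpenPartialHomeomorph G, h.mem_toOpenPartialHomeomorph_source, rfl⟩

omit [FiniteDimensional ℝ E] in
lemma continuous_det_fderiv (hG : ContDiff ℝ 1 G) : Continuous fun x => (fderiv ℝ G x).det :=
  ContinuousLinearMap.continuous_det.comp (hG.continuous_fderiv one_ne_zero)

lemma exists_isOpen_injOn_sign_det_fderiv_eq (hG : ContDiff ℝ 1 G) {z : E}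
    (hz : (fderiv ℝ G z).det ≠ 0) {U : Set E} (hU : U ∈ 𝓝 z) :
    ∃ V ⊆ U, IsOpen V ∧ z ∈ V ∧ InjOn G V ∧ IsOpen (G '' V) ∧
      ∀ x ∈ V, SignType.sign (fderiv ℝ G x).det = SignType.sign (fderiv ℝ G z).det := by
  obtain ⟨e, hze, rfl⟩ := isLocalHomeomorphOn_of_det_fderiv_ne_zero (s := {z})
    (fun _ _ => hG.contDiffAt) (by simpa using hz) z rfl
  have hsign : ∀ᶠ x in 𝓝 z,
      SignType.sign (fderiv ℝ e x).det = SignType.sign (fderiv ℝ e z).det :=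
    ((continuousAt_sign_of_ne_zero hz).comp (f := fun x => (fderiv ℝ e x).det)
      (continuous_det_fderiv hG).continuousAt).eventually_mem
      ((isOpen_discrete {SignType.sign (fderiv ℝ e z).det}).mem_nhds rfl)
  obtain ⟨V, hV, hVo, hzV⟩ := mem_nhds_iff.1
    (inter_mem (inter_mem hU (e.open_source.mem_nhds hze)) hsign)
  have hVe : V ⊆ e.source := fun x hx => (hV hx).1.2
  exact ⟨V, fun x hx => (hV hx).1.1, hVo, hzV, e.injOn.mono hVe,
    e.isOpen_image_of_subset_source hVo hVe, fun x hx => (hV hx).2⟩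

lemma exists_pairwiseDisjoint_injOn_sign_det_fderiv_eq (hG : ContDiff ℝ 1 G) {Z : Finset E}
    (hdet : ∀ z ∈ Z, (fderiv ℝ G z).det ≠ 0) {O : Set E} (hO : IsOpen O) (hZO : ↑Z ⊆ O) :
    ∃ V : E → Set E, (Z : Set E).PairwiseDisjoint V ∧ ∀ z ∈ Z, V z ⊆ O ∧ IsOpen (V z) ∧
      z ∈ V z ∧ InjOn G (V z) ∧ IsOpen (G '' V z) ∧
      ∀ x ∈ V z, SignType.sign (fderiv ℝ G x).det = SignType.sign (fderiv ℝ G z).det := by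
  obtain ⟨U, hU, hUdisj⟩ := Z.finite_toSet.t2_separation
  choose! V hVU hV using fun z (hz : z ∈ Z) =>
    exists_isOpen_injOn_sign_det_fderiv_eq hG (hdet z hz)
      (inter_mem ((hU z).2.mem_nhds (hU z).1) (hO.mem_nhds (hZO hz)))
  exact ⟨V, fun a ha b hb hab => (hUdisj ha hb hab).mono (fun x hx => (hVU a ha hx).1)
    fun x hx => (hVU b hb hx).1, fun z hz => ⟨fun x hx => (hVU z hz hx).2, hV z hz⟩⟩

lemma finite_zeros_of_det_fderiv_ne_zero (hC : IsCompact C) (hG : ContDiff ℝ 1 G)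
    (hdet : ∀ x ∈ C ∩ G ⁻¹' {0}, (fderiv ℝ G x).det ≠ 0) : (C ∩ G ⁻¹' {0}).Finite :=
  finite_of_isLocalHomeomorphOn
    (hC.inter_right (isClosed_singleton.preimage hG.continuous))
    (isLocalHomeomorphOn_of_det_fderiv_ne_zero (fun _ _ => hG.contDiffAt) hdet) inter_subset_right

section Integral

variable [MeasurableSpace E] [BorelSpace E] {μ : Measure E} [μ.IsAddHaarMeasure]

lemma setIntegral_comp_mul_det_fderiv_eq {V : Set E} (hV : MeasurableSet V)
    (hG : ∀ x ∈ V, DifferentiableAt ℝ G x) (hinj : InjOn G V) {σ : SignType}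
    (hσ : ∀ x ∈ V, SignType.sign (fderiv ℝ G x).det = σ) {ρ : E → ℝ}
    (hρ : Function.support ρ ⊆ G '' V) :
    ∫ x in V, ρ (G x) * (fderiv ℝ G x).det ∂μ = σ * ∫ y, ρ y ∂μ := by
  rw [← setIntegral_eq_integral_of_forall_compl_eq_zero fun y hy =>
      Function.notMem_support.1 fun h => hy (hρ h),
    integral_image_eq_integral_abs_det_fderiv_smul μ hV
      (fun x hx => (hG x hx).hasFDerivAt.hasFDerivWithinAt) hinj, ← integral_const_mul]
  refine setIntegral_congr_fun hV fun x hx => ?_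
  simp only [← hσ x hx, smul_eq_mul, ← mul_assoc, sign_mul_abs]
  exact mul_comm _ _

lemma exists_mem_nhds_forall_integral_eq_sum_sign (hC : IsCompact C) (hG : ContDiff ℝ 1 G)
    {Z : Finset E} (hZ : ↑Z = C ∩ G ⁻¹' {0}) (hZC : ↑Z ⊆ interior C)
    (hdet : ∀ x ∈ Z, (fderiv ℝ G x).det ≠ 0) :
    ∃ W ∈ 𝓝 (0 : E), ∀ χ ρ : E → ℝ, Continuous χ → Continuous ρ →
      Function.support χ ⊆ C → Function.support ρ ⊆ W → (∀ x ∈ C, ρ (G x) ≠ 0 → χ x = 1) →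
      ∫ x, χ x * (ρ (G x) * (fderiv ℝ G x).det) ∂μ =
        ∑ z ∈ Z, SignType.sign (fderiv ℝ G z).det * ∫ y, ρ y ∂μ := by
  obtain ⟨V, hVdisj, hV⟩ :=
    exists_pairwiseDisjoint_injOn_sign_det_fderiv_eq hG hdet isOpen_interior hZC
  choose hVC hVo hzV hVinj hVim hVsign using hV
  have hmem {x : E} (hx : x ∈ C ∩ G ⁻¹' {0}) : x ∈ Z := hZ.superset hx
  have hout : (G '' (C \ ⋃ z ∈ Z, V z))ᶜ ∈ 𝓝 0 := by
    refine ((hC.diff (isOpen_biUnion hVo)).image hG.continuous).isClosed.isOpen_compl.mem_nhds ?_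
    rintro ⟨x, ⟨hxC, hxV⟩, hx⟩
    exact hxV (mem_biUnion (hmem ⟨hxC, hx⟩) (hzV x (hmem ⟨hxC, hx⟩)))
  have him : (⋂ z ∈ Z, G '' V z) ∈ 𝓝 0 := (Filter.biInter_finset_mem Z).2 fun z hz =>
    (hVim z hz).mem_nhds ⟨z, hzV z hz, (hZ.subset hz).2⟩
  refine ⟨_, inter_mem hout him, fun χ ρ hχ hρ hχC hρW hχρ => ?_⟩
  have hint : Integrable (fun x => χ x * (ρ (G x) * (fderiv ℝ G x).det)) μ := by
    refine (hχ.mul ((hρ.comp hG.continuous).mul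
      (continuous_det_fderiv hG))).integrable_of_hasCompactSupport (.intro hC fun x hx => ?_)
    exact mul_eq_zero_of_left (Function.notMem_support.1 fun h => hx (hχC h)) _
  have hzero : ∀ x ∉ ⋃ z ∈ Z, V z, χ x * (ρ (G x) * (fderiv ℝ G x).det) = 0 := fun x hx => by
    by_contra h
    have hxC : x ∈ C := hχC (left_ne_zero_of_mul h)
    have hρx : ρ (G x) ≠ 0 := left_ne_zero_of_mul (right_ne_zero_of_mul h)
    exact (hρW hρx).1 ⟨x, ⟨hxC, hx⟩, rfl⟩
  rw [← setIntegral_eq_integral_of_forall_compl_eq_zero hzero,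
    integral_biUnion_finset _ (fun z hz => (hVo z hz).measurableSet) hVdisj
      fun z _ => hint.integrableOn]
  refine Finset.sum_congr rfl fun z hz => ?_
  rw [← setIntegral_comp_mul_det_fderiv_eq (hVo z hz).measurableSet
    (fun x _ => hG.differentiable one_ne_zero x) (hVinj z hz) (hVsign z hz)
    (fun y hy => mem_iInter₂.1 (hρW hy).2 z hz)]
  refine setIntegral_congr_fun (hVo z hz).measurableSet fun x hx => ?_
  by_cases hρx : ρ (G x) = 0
  · simp only [hρx, zero_mul, mul_zero]
  · simp only [hχρ x (interior_subset (hVC z hz hx)) hρx, one_mul]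

lemma exists_intCast_eq_parity_zeros_and_integral_eq (hC : IsCompact C) (hG : ContDiff ℝ 1 G)
    (hdet : ∀ x ∈ C ∩ G ⁻¹' {0}, (fderiv ℝ G x).det ≠ 0) (hint : C ∩ G ⁻¹' {0} ⊆ interior C) :
    ∃ m : ℤ, (m : ZMod 2) = parity (C ∩ G ⁻¹' {0}) ∧
      ∃ W ∈ 𝓝 (0 : E), ∀ χ ρ : E → ℝ, Continuous χ → Continuous ρ →
        Function.support χ ⊆ C → Function.support ρ ⊆ W → (∀ x ∈ C, ρ (G x) ≠ 0 → χ x = 1) →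
        ∫ y, ρ y ∂μ = 1 → ∫ x, χ x * (ρ (G x) * (fderiv ℝ G x).det) ∂μ = m := by
  obtain ⟨Z, hZ⟩ := (finite_zeros_of_det_fderiv_ne_zero hC hG hdet).exists_finset_coe
  obtain ⟨W, hW, h⟩ := exists_mem_nhds_forall_integral_eq_sum_sign (μ := μ) hC hG hZ
    (hZ.trans_subset hint) fun z hz => hdet z (hZ.subset hz)
  refine ⟨∑ z ∈ Z, (SignType.sign (fderiv ℝ G z).det : ℤ), ?_, W, hW,
    fun χ ρ hχ hρ hχC hρW hχρ hρ1 => ?_⟩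
  · rw [intCast_sum_sign_eq_card Z fun z hz => hdet z (hZ.subset hz), parity, ← hZ,
      ncard_coe_finset]
  · simp [h χ ρ hχ hρ hχC hρW hχρ, hρ1]

end Integral

lemma exists_contDiff_eq_one_nhdsSet_support_subset {N : Set E} (hN : IsClosed N)
    (hNC : N ⊆ interior C) :
    ∃ χ : E → ℝ, ContDiff ℝ ∞ χ ∧ (∀ᶠ x in 𝓝ˢ N, χ x = 1) ∧ Function.support χ ⊆ C := by
  obtain ⟨χ, hχ1, hχ0, -⟩ := exists_contMDiffMap_one_nhds_of_subset_interior
    (n := ⊤) (modelWithCornersSelf ℝ E) hN hNC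
  exact ⟨χ, χ.contMDiff.contDiff, hχ1, fun x hx => by_contra fun h => hx (hχ0 x h)⟩

omit [FiniteDimensional ℝ E] in
lemma continuous_lineMap_uncurry (h₀ : Continuous G₀) (h₁ : Continuous G₁) :
    Continuous fun q : E × ℝ => AffineMap.lineMap (k := ℝ) (G₀ q.1) (G₁ q.1) q.2 := by
  simp only [AffineMap.lineMap_apply_module]
  fun_prop

omit [FiniteDimensional ℝ E] in
lemma isCompact_biUnion_segment {S : Set E} (hS : IsCompact S) (h₀ : Continuous G₀)
    (h₁ : Continuous G₁) : IsCompact (⋃ x ∈ S, segment ℝ (G₀ x) (G₁ x)) := by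
  convert (hS.prod (isCompact_Icc (a := (0 : ℝ)) (b := 1))).image
    (continuous_lineMap_uncurry h₀ h₁) using 1
  ext y
  simp only [segment_eq_image_lineMap, mem_iUnion, mem_image, Prod.exists, mem_prod]
  grind

omit [FiniteDimensional ℝ E] in
lemma isCompact_setOf_segment_inter_nonempty (hC : IsCompact C) (h₀ : Continuous G₀)
    (h₁ : Continuous G₁) {B : Set E} (hB : IsClosed B) :
    IsCompact {x ∈ C | (segment ℝ (G₀ x) (G₁ x) ∩ B).Nonempty} := by
  convert ((hC.prod (isCompact_Icc (a := (0 : ℝ)) (b := 1))).inter_right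
    (hB.preimage (continuous_lineMap_uncurry h₀ h₁))).image continuous_fst using 1
  ext x
  simp only [segment_eq_image_lineMap, Set.Nonempty, mem_ofPred_eq, mem_inter_iff, mem_image,
    Prod.exists, mem_prod, mem_preimage]
  grind

lemma exists_contDiff_bump_eventually_eq_one_of_segment [MeasurableSpace E] [BorelSpace E]
    {μ : Measure E} [μ.IsAddHaarMeasure] (hC : IsCompact C) (h₀ : Continuous G₀)
    (h₁ : Continuous G₁) (hseg : ∀ x ∈ frontier C, 0 ∉ segment ℝ (G₀ x) (G₁ x)) {W : Set E}
    (hW : W ∈ 𝓝 0) :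
    ∃ χ ρ : E → ℝ, ContDiff ℝ ∞ χ ∧ ContDiff ℝ ∞ ρ ∧ Function.support χ ⊆ C ∧
      Function.support ρ ⊆ W ∧ ∫ y, ρ y ∂μ = 1 ∧
      ∀ x ∈ C, ∀ y ∈ segment ℝ (G₀ x) (G₁ x), ρ y ≠ 0 → χ =ᶠ[𝓝 x] fun _ => 1 := by
  have hnhds : W \ ⋃ x ∈ frontier C, segment ℝ (G₀ x) (G₁ x) ∈ 𝓝 (0 : E) :=
    sdiff_mem hW <| (isCompact_biUnion_segment (hC.of_isClosed_subset isClosed_frontier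
      hC.isClosed.frontier_subset) h₀ h₁).isClosed.isOpen_compl.mem_nhds (by simpa using hseg)
  obtain ⟨ε, hε, hεW⟩ := Metric.nhds_basis_closedBall.mem_iff.1 hnhds
  let b : ContDiffBump (0 : E) := ⟨ε / 2, ε, by linarith, by linarith⟩
  have hbε : Function.support (b.normed μ) ⊆ Metric.closedBall 0 ε := by
    rw [b.support_normed_eq]
    exact Metric.ball_subset_closedBall
  let N := {x ∈ C | (segment ℝ (G₀ x) (G₁ x) ∩ Metric.closedBall 0 ε).Nonempty}
  have hN : N ⊆ interior C := fun x ⟨hxC, y, hyseg, hyε⟩ => by_contra fun hxi =>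
    (hεW hyε).2 (mem_biUnion ⟨subset_closure hxC, hxi⟩ hyseg)
  obtain ⟨χ, hχ, hχ1, hχC⟩ := exists_contDiff_eq_one_nhdsSet_support_subset
    (isCompact_setOf_segment_inter_nonempty hC h₀ h₁ Metric.isClosed_closedBall).isClosed hN
  exact ⟨χ, b.normed μ, hχ, b.contDiff_normed, hχC, fun y hy => (hεW (hbε hy)).1,
    b.integral_normed, fun x hx y hy hρy =>
      hχ1.filter_mono (nhds_le_nhdsSet (show x ∈ N from ⟨hx, y, hy, hbε hρy⟩))⟩

theorem parity_zeros_eq_of_contDiff_of_segment (hC : IsCompact C) (h₀ : ContDiff ℝ 2 G₀)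
    (h₁ : ContDiff ℝ 2 G₁) (hdet₀ : ∀ x ∈ C ∩ G₀ ⁻¹' {0}, (fderiv ℝ G₀ x).det ≠ 0)
    (hdet₁ : ∀ x ∈ C ∩ G₁ ⁻¹' {0}, (fderiv ℝ G₁ x).det ≠ 0)
    (hseg : ∀ x ∈ frontier C, 0 ∉ segment ℝ (G₀ x) (G₁ x)) :
    parity (C ∩ G₀ ⁻¹' {0}) = parity (C ∩ G₁ ⁻¹' {0}) := by
  borelize E
  have hint : ∀ x ∈ C, 0 ∈ segment ℝ (G₀ x) (G₁ x) → x ∈ interior C := fun x hx h =>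
    by_contra fun hxi => hseg x ⟨subset_closure hx, hxi⟩ h
  obtain ⟨m₀, hm₀, W₀, hW₀, H₀⟩ := exists_intCast_eq_parity_zeros_and_integral_eq
    (μ := Measure.addHaar) hC (h₀.of_le one_le_two) hdet₀
    fun x hx => hint x hx.1 (hx.2 ▸ left_mem_segment ℝ _ _)
  obtain ⟨m₁, hm₁, W₁, hW₁, H₁⟩ := exists_intCast_eq_parity_zeros_and_integral_eq
    (μ := Measure.addHaar) hC (h₁.of_le one_le_two) hdet₁
    fun x hx => hint x hx.1 (hx.2 ▸ right_mem_segment ℝ _ _)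
  obtain ⟨χ, ρ, hχ, hρ, hχC, hρW, hρ1, hχρ⟩ :=
    exists_contDiff_bump_eventually_eq_one_of_segment (μ := Measure.addHaar) hC h₀.continuous
      h₁.continuous hseg (inter_mem hW₀ hW₁)
  have hcond : ∀ x, fderiv ℝ χ x ≠ 0 → ∀ y ∈ segment ℝ (G₀ x) (G₁ x), ρ y = 0 :=
    fun x hx y hy => by_contra fun hρy => hx <| by
      have hxC : x ∈ C := hC.isClosed.closure_subset_iff.2 hχC (support_fderiv_subset ℝ hx)
      rw [(hχρ x hxC y hy hρy).fderiv_eq, fderiv_const_apply]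
  have heq := integral_mul_det_fderiv_eq_of_segment (μ := Measure.addHaar)
    (hχ.of_le (by simp)) (.intro hC fun x hx => Function.notMem_support.1 fun h => hx (hχC h))
    (hρ.of_le (by simp)) h₀ h₁ hcond
  rw [H₀ χ ρ hχ.continuous hρ.continuous hχC (hρW.trans inter_subset_left)
      (fun x hx h => (hχρ x hx _ (left_mem_segment ℝ _ _) h).self_of_nhds) hρ1,
    H₁ χ ρ hχ.continuous hρ.continuous hχC (hρW.trans inter_subset_right)
      (fun x hx h => (hχρ x hx _ (right_mem_segment ℝ _ _) h).self_of_nhds) hρ1,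
    Int.cast_inj] at heq
  rw [← hm₀, ← hm₁, heq]

end SmoothParity

section Parity

variable {ι X Y : Type*}

lemma parity_singleton (x : X) : parity {x} = 1 := by
  simp [parity]

lemma parity_image_of_injOn {f : X → Y} {s : Set X} (hf : InjOn f s) :
    parity (f '' s) = parity s := by
  simp only [parity, hf.ncard_image]

lemma parity_inter_add_parity_sdiff {s : Set X} (hs : s.Finite) (t : Set X) :
    parity (s ∩ t) + parity (s \ t) = parity s := by
  simp only [parity, ← ncard_inter_add_ncard_sdiff_eq_ncard s t hs, Nat.cast_add]

lemma parity_biUnion (Z : Finset ι) {s : ι → Set X} (hs : ∀ i ∈ Z, (s i).Finite)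
    (hdisj : (Z : Set ι).PairwiseDisjoint s) :
    parity (⋃ i ∈ Z, s i) = ∑ i ∈ Z, parity (s i) := by
  have h := Z.finite_toSet.ncard_biUnion hs hdisj
  rw [finsum_mem_coe_finset] at h
  simpa [parity] using congrArg (Nat.cast (R := ZMod 2)) h

lemma parity_eq_parity_image_mul {s : Set X} (hs : s.Finite) {f : X → Y} {d : ZMod 2}
    (h : ∀ x ∈ s, parity (s ∩ f ⁻¹' {f x}) = d) : parity s = parity (f '' s) * d := by
  obtain ⟨Z, hZ⟩ := (hs.image f).exists_finset_coe
  have hs_eq : ⋃ y ∈ Z, s ∩ f ⁻¹' {y} = s := by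
    ext x
    simpa [← Finset.mem_coe, hZ] using fun hx => ⟨x, hx, rfl⟩
  rw [← hs_eq, parity_biUnion Z (fun y _ => hs.inter_of_left _), hs_eq, ← hZ, parity,
    ncard_coe_finset, ← nsmul_eq_mul]
  · refine Finset.sum_eq_card_nsmul fun y hy => ?_
    obtain ⟨x, hx, rfl⟩ := hZ.subset hy
    exact h x hx
  · exact fun y _ y' _ hyy' => disjoint_left.2 fun x hx hx' => hyy' (hx.2.symm.trans hx'.2)

end Parity

lemma exists_pos_forall_le_norm {X E : Type*} [TopologicalSpace X] [NormedAddCommGroup E]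
    {C : Set X} {F : X → E} (hC : IsCompact C) (hF : ContinuousOn F C) (h : ∀ x ∈ C, F x ≠ 0) :
    ∃ m > 0, ∀ x ∈ C, m ≤ ‖F x‖ :=
  hC.exists_forall_le' hF.norm fun x hx => norm_pos_iff.2 (h x hx)

section RegularApproximation

variable {E : Type*} [NormedAddCommGroup E] [NormedSpace ℝ E] [FiniteDimensional ℝ E]
  {C : Set E} {F G : E → E}

lemma exists_contDiff_norm_sub_lt (hC : IsClosed C) (hF : ContinuousOn F C) {δ : ℝ} (hδ : 0 < δ) :
    ∃ G : E → E, ContDiff ℝ ∞ G ∧ ∀ x ∈ C, ‖G x - F x‖ < δ := by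
  obtain ⟨F', hF'⟩ := ContinuousMap.exists_restrict_eq hC ⟨_, hF.domRestrict⟩
  obtain ⟨G, hG, hGF, -⟩ := F'.continuous.exists_contDiff_approx ⊤ continuous_const fun _ => hδ
  refine ⟨G, hG, fun x hx => ?_⟩
  have hFx : F' x = F x := DFunLike.congr_fun hF' ⟨x, hx⟩
  rw [← hFx, ← dist_eq_norm]
  exact hGF x

lemma exists_norm_lt_det_fderiv_ne_zero (hG : Differentiable ℝ G) {Y : Set E} (hY : Y.Countable)
    {δ : ℝ} (hδ : 0 < δ) :
    ∃ w : E, ‖w‖ < δ ∧ ∀ x, G x - w ∈ Y → (fderiv ℝ G x).det ≠ 0 := by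
  borelize E
  let μ : Measure E := Measure.addHaar
  have hcrit : μ (G '' {x | (fderiv ℝ G x).det = 0}) = 0 :=
    addHaar_image_eq_zero_of_det_fderivWithin_eq_zero μ
      (fun x _ => (hG x).hasFDerivAt.hasFDerivWithinAt) fun x hx => hx
  have hshift : μ (⋃ y ∈ Y, (· + y) ⁻¹' (G '' {x | (fderiv ℝ G x).det = 0})) = 0 :=
    (measure_biUnion_null_iff hY).2 fun y _ => by rw [measure_preimage_add_right, hcrit]
  obtain ⟨w, hw, hwY⟩ := not_subset.1 fun h =>
    (Metric.measure_ball_pos μ (0 : E) hδ).ne' (measure_mono_null h hshift)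
  refine ⟨w, mem_ball_zero_iff.1 hw, fun x hx hdet => hwY ?_⟩
  exact mem_biUnion hx ⟨x, hdet, (add_sub_cancel w _).symm⟩

lemma exists_contDiff_norm_sub_lt_det_fderiv_ne_zero (hC : IsClosed C) (hF : ContinuousOn F C)
    {δ : ℝ} (hδ : 0 < δ) {Y : Set E} (hY : Y.Countable) :
    ∃ G : E → E, ContDiff ℝ ∞ G ∧ (∀ x ∈ C, ‖G x - F x‖ < δ) ∧
      ∀ x, G x ∈ Y → (fderiv ℝ G x).det ≠ 0 := by
  obtain ⟨G, hG, hGF⟩ := exists_contDiff_norm_sub_lt hC hF (half_pos hδ)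
  obtain ⟨w, hw, hdet⟩ :=
    exists_norm_lt_det_fderiv_ne_zero (hG.differentiable (by simp)) hY (half_pos hδ)
  refine ⟨fun x => G x - w, hG.sub contDiff_const, fun x hx => ?_, fun x hx => ?_⟩
  · calc ‖G x - w - F x‖ = ‖G x - F x - w‖ := by rw [sub_right_comm]
      _ ≤ ‖G x - F x‖ + ‖w‖ := norm_sub_le _ _
      _ < δ := by linarith [hGF x hx]
  · rw [fderiv_sub_const]
    exact hdet x hx

omit [FiniteDimensional ℝ E] in
lemma zero_notMem_segment_of_norm_sub_lt {a b v : E} (ha : ‖a - v‖ < ‖v‖) (hb : ‖b - v‖ < ‖v‖) :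
    0 ∉ segment ℝ a b := fun h => by
  have := (convex_ball v ‖v‖).segment_subset (mem_ball_iff_norm.2 ha) (mem_ball_iff_norm.2 hb) h
  simp at this

/-- `G` is a smooth map with nondegenerate zeros in `C`, so close to `F` on the frontier of `C`
that the segment from `G x` to `F x` avoids the origin there; the parity of its number of zeros is
then the mod 2 degree of `F` on `C`. -/
structure IsRegularApprox (F : E → E) (C : Set E) (G : E → E) : Prop where
  contDiff : ContDiff ℝ ∞ G
  norm_sub_lt : ∀ x ∈ frontier C, ‖G x - F x‖ < ‖F x‖
  det_fderiv_ne_zero : ∀ x ∈ C ∩ G ⁻¹' {0}, (fderiv ℝ G x).det ≠ 0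

lemma IsRegularApprox.parity_zeros_eq {G' : E → E} (hG : IsRegularApprox F C G)
    (hG' : IsRegularApprox F C G') (hC : IsCompact C) :
    parity (C ∩ G ⁻¹' {0}) = parity (C ∩ G' ⁻¹' {0}) :=
  parity_zeros_eq_of_contDiff_of_segment hC (contDiff_infty.1 hG.contDiff 2)
    (contDiff_infty.1 hG'.contDiff 2) hG.det_fderiv_ne_zero hG'.det_fderiv_ne_zero fun x hx =>
      zero_notMem_segment_of_norm_sub_lt (hG.norm_sub_lt x hx) (hG'.norm_sub_lt x hx)

lemma countable_zeros_of_det_fderiv_ne_zero (hG : ContDiff ℝ 1 G)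
    (hdet : ∀ x, G x = 0 → (fderiv ℝ G x).det ≠ 0) : (G ⁻¹' {0}).Countable := by
  rw [← univ_inter (G ⁻¹' {0}), ← iUnion_compactCovering, iUnion_inter]
  exact countable_iUnion fun k => (finite_zeros_of_det_fderiv_ne_zero
    (isCompact_compactCovering E k) hG fun x hx => hdet x hx.2).countable

/-- The two approximations are chosen one after the other: `K` first, then `G` with all zeros of
`K` as regular values. -/
lemma exists_contDiff_comp_approx_sub {e : OpenPartialHomeomorph E E} (hC : IsCompact C)
    (hCe : C ⊆ e.source) (z : E) {δ κ : ℝ} (hδ : 0 < δ) (hκ : 0 < κ) :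
    ∃ G K : E → E, ContDiff ℝ ∞ G ∧ ContDiff ℝ ∞ K ∧ (∀ x ∈ C, ‖G x - e x‖ < δ) ∧
      (∀ x ∈ C, ‖K (G x) - (x - z)‖ < κ) ∧ (∀ y, K y = 0 → (fderiv ℝ K y).det ≠ 0) ∧
      ∀ x, K (G x) = 0 → (fderiv ℝ G x).det ≠ 0 := by
  have he : ContinuousOn e C := e.continuousOn.mono hCe
  have himg : IsCompact (e '' C) := hC.image_of_continuousOn he
  obtain ⟨K, hK, hKe, hKdet⟩ := exists_contDiff_norm_sub_lt_det_fderiv_ne_zero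
    (F := fun y => e.symm y - z) himg.isClosed
    ((e.continuousOn_symm.mono (image_subset_iff.2 fun x hx => e.map_source (hCe hx))).sub
      continuousOn_const) (half_pos hκ) (countable_singleton 0)
  have hKcont : ∃ η > 0, ∀ x ∈ C, ∀ y, ‖y - e x‖ < η → ‖K y - K (e x)‖ < κ / 2 := by
    obtain ⟨η, hη, h⟩ := Metric.mem_uniformity_dist.1 <|
      himg.uniformContinuousAt_of_continuousAt K (fun a _ => hK.continuous.continuousAt)
        (Metric.dist_mem_uniformity (half_pos hκ))
    refine ⟨η, hη, fun x hx y hy => ?_⟩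
    rw [← dist_eq_norm, dist_comm] at hy ⊢
    exact h hy (mem_image_of_mem e hx)
  obtain ⟨η, hη, hKη⟩ := hKcont
  obtain ⟨G, hG, hGe, hGdet⟩ := exists_contDiff_norm_sub_lt_det_fderiv_ne_zero hC.isClosed he
    (lt_min hδ hη) (countable_zeros_of_det_fderiv_ne_zero (hK.of_le (by simp)) hKdet)
  refine ⟨G, K, hG, hK, fun x hx => (hGe x hx).trans_le (min_le_left _ _), fun x hx => ?_,
    hKdet, hGdet⟩
  have hKex := hKe (e x) (mem_image_of_mem e hx)
  rw [e.left_inv (hCe hx)] at hKex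
  calc ‖K (G x) - (x - z)‖ = ‖(K (G x) - K (e x)) + (K (e x) - (x - z))‖ := by
        rw [sub_add_sub_cancel]
    _ ≤ ‖K (G x) - K (e x)‖ + ‖K (e x) - (x - z)‖ := norm_add_le _ _
    _ < κ := by linarith [hKη x hx (G x) ((hGe x hx).trans_le (min_le_right _ _))]

omit [FiniteDimensional ℝ E] in
lemma det_fderiv_comp {K : E → E} {x : E} (hK : DifferentiableAt ℝ K (G x))
    (hG : DifferentiableAt ℝ G x) :
    (fderiv ℝ (K ∘ G) x).det = (fderiv ℝ K (G x)).det * (fderiv ℝ G x).det := by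
  rw [fderiv_comp x hK hG]
  exact LinearMap.det_comp _ _

lemma parity_zeros_comp_eq_one {z : E} (hz : z ∈ interior C) (hC : IsCompact C) {G K : E → E}
    (hG : ContDiff ℝ ∞ G) (hK : ContDiff ℝ ∞ K) (hKdet : ∀ y, K y = 0 → (fderiv ℝ K y).det ≠ 0)
    (hGdet : ∀ x, K (G x) = 0 → (fderiv ℝ G x).det ≠ 0)
    (hKG : ∀ x ∈ frontier C, ‖K (G x) - (x - z)‖ < ‖x - z‖) :
    parity (C ∩ (K ∘ G) ⁻¹' {0}) = 1 := by
  have hKG' : IsRegularApprox (fun x => x - z) C (K ∘ G) := by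
    refine ⟨hK.comp hG, hKG, fun x hx => ?_⟩
    rw [det_fderiv_comp (hK.differentiable (by simp) _) (hG.differentiable (by simp) _)]
    exact mul_ne_zero (hKdet _ hx.2) (hGdet x hx.2)
  have hsub : IsRegularApprox (fun x => x - z) C (fun x => x - z) := by
    refine ⟨contDiff_id.sub contDiff_const, fun x hx => ?_, fun x _ => ?_⟩
    · rw [sub_self, norm_zero, norm_pos_iff, sub_ne_zero]
      rintro rfl
      exact hx.2 hz
    · rw [fderiv_sub_const, fderiv_fun_id]
      exact (LinearMap.det_id.trans_ne one_ne_zero)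
  have hzero : C ∩ (fun x => x - z) ⁻¹' {0} = {z} := by
    ext x
    simpa [sub_eq_zero] using fun h : x = z => h ▸ interior_subset hz
  rw [hKG'.parity_zeros_eq hsub hC, hzero, parity_singleton]

lemma exists_isRegularApprox_sub_parity_zeros_comp_eq_one (hC : IsCompact C)
    {e : OpenPartialHomeomorph E E} (hCe : C ⊆ e.source) {z : E} (hz : z ∈ interior C)
    (hez : e z = 0) :
    ∃ G K : E → E, parity (C ∩ (K ∘ G) ⁻¹' {0}) = 1 ∧
      ∀ x ∈ C ∩ (K ∘ G) ⁻¹' {0}, IsRegularApprox e C (fun x' => G x' - G x) := by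
  have hfr : frontier C ⊆ C := hC.isClosed.frontier_subset
  have hfrC : IsCompact (frontier C) := hC.of_isClosed_subset isClosed_frontier hfr
  have hfrz : ∀ x ∈ frontier C, x ≠ z := fun x hx h => hx.2 (h ▸ hz)
  obtain ⟨m, hm, hme⟩ := exists_pos_forall_le_norm hfrC (e.continuousOn.mono (hfr.trans hCe))
    fun x hx h => hfrz x hx <|
      e.injOn (hCe (hfr hx)) (hCe (interior_subset hz)) (h.trans hez.symm)
  obtain ⟨r, hr, hrz⟩ := exists_pos_forall_le_norm (F := fun x => x - z) hfrC
    (by fun_prop) fun x hx => sub_ne_zero.2 (hfrz x hx)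
  obtain ⟨κ, hκ, hκe⟩ := Metric.continuousAt_iff.1
    (e.continuousAt (hCe (interior_subset hz))) (m / 3) (by positivity)
  obtain ⟨G, K, hG, hK, hGe, hKG, hKdet, hGdet⟩ :=
    exists_contDiff_comp_approx_sub hC hCe z (by positivity : 0 < m / 3) (lt_min hr hκ)
  refine ⟨G, K, parity_zeros_comp_eq_one hz hC hG hK hKdet hGdet fun x hx =>
    ((hKG x (hfr hx)).trans_le (min_le_left _ _)).trans_le (hrz x hx), fun x ⟨hxC, hKx⟩ =>
    ⟨hG.sub contDiff_const, fun x' hx' => ?_, fun x' hx' => ?_⟩⟩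
  · have hxz : dist x z < κ := by
      rw [dist_eq_norm, ← norm_neg, ← zero_sub, ← show K (G x) = 0 from hKx]
      exact (hKG x hxC).trans_le (min_le_right _ _)
    have hex : ‖e x‖ < m / 3 := by simpa [hez] using hκe hxz
    calc ‖G x' - G x - e x'‖ = ‖G x' - e x' - (G x - e x) - e x‖ := by congr 1; abel
      _ ≤ ‖G x' - e x'‖ + ‖G x - e x‖ + ‖e x‖ :=
        (norm_sub_le _ _).trans (by gcongr; exact norm_sub_le _ _)
      _ < m := by linarith [hGe x' (hfr hx'), hGe x hxC]
      _ ≤ ‖e x'‖ := hme x' hx'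
  · rw [fderiv_sub_const]
    exact hGdet x' (by rw [sub_eq_zero.1 hx'.2]; exact hKx)

/-- Some composite `K ∘ G` with `G` close to `e` and `K` close to the inverse of `e` is close to a
translation, so it has an odd number of zeros. They are partitioned by the fibres of `G`, all of
which have the same parity: the mod 2 degree of `e`. That degree thus divides `1`. -/
lemma exists_isRegularApprox_parity_zeros_eq_one (hC : IsCompact C)
    {e : OpenPartialHomeomorph E E} (hCe : C ⊆ e.source) {z : E} (hz : z ∈ interior C)
    (hez : e z = 0) :
    ∃ G, IsRegularApprox e C G ∧ parity (C ∩ G ⁻¹' {0}) = 1 := by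
  obtain ⟨G, K, hone, happrox⟩ :=
    exists_isRegularApprox_sub_parity_zeros_comp_eq_one hC hCe hz hez
  set Z := C ∩ (K ∘ G) ⁻¹' {0}
  have hZcard : Z.ncard ≠ 0 := fun h => by simp [parity, h] at hone
  obtain ⟨x₀, hx₀⟩ := nonempty_of_ncard_ne_zero hZcard
  refine ⟨_, happrox x₀ hx₀, ?_⟩
  have hfiber : ∀ x ∈ Z, parity (Z ∩ G ⁻¹' {G x}) =
      parity (C ∩ (fun x' => G x' - G x₀) ⁻¹' {0}) := fun x hx => by
    rw [← (happrox x hx).parity_zeros_eq (happrox x₀ hx₀) hC]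
    congr 1
    ext x'
    simp only [mem_inter_iff, mem_preimage, mem_singleton_iff, sub_eq_zero, Z, and_assoc]
    refine and_congr_right fun _ => and_iff_right_of_imp fun h => ?_
    rw [Function.comp_apply, h]
    exact hx.2
  have hdvd : ∀ a d : ZMod 2, a * d = 1 → d = 1 := by decide
  exact hdvd _ _ ((parity_eq_parity_image_mul (finite_of_ncard_ne_zero hZcard) hfiber).symm.trans
    hone)

lemma exists_pairwiseDisjoint_isCompact_parity_eq_one {Z : Finset E} (hZC : ↑Z ⊆ interior C)
    (hZ : ∀ z ∈ Z, F z = 0) (hF : IsLocalHomeomorphOn F Z) :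
    ∃ B : E → Set E, (Z : Set E).PairwiseDisjoint B ∧ ∀ z ∈ Z, IsCompact (B z) ∧
      z ∈ interior (B z) ∧ B z ⊆ interior C ∧
      ∃ G, IsRegularApprox F (B z) G ∧ parity (B z ∩ G ⁻¹' {0}) = 1 := by
  obtain ⟨U, hU, hUdisj⟩ := Z.finite_toSet.t2_separation
  have hB : ∀ z ∈ Z, ∃ B ⊆ U z, IsCompact B ∧ z ∈ interior B ∧ B ⊆ interior C ∧
      ∃ G, IsRegularApprox F B G ∧ parity (B ∩ G ⁻¹' {0}) = 1 := fun z hz => by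
    obtain ⟨e, hze, rfl⟩ := hF z hz
    obtain ⟨B, hB, hzB, hBU⟩ := exists_compact_subset
      (((hU z).2.inter isOpen_interior).inter e.open_source) ⟨⟨(hU z).1, hZC hz⟩, hze⟩
    exact ⟨B, fun x hx => (hBU hx).1.1, hB, hzB, fun x hx => (hBU hx).1.2,
      exists_isRegularApprox_parity_zeros_eq_one hB (fun x hx => (hBU hx).2) hzB (hZ z hz)⟩
  choose! B hBU hB using hB
  exact ⟨B, fun z hz z' hz' hzz' => (hUdisj hz hz' hzz').mono (hBU z hz) (hBU z' hz'), hB⟩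

lemma parity_zeros_eq_card_of_norm_sub_lt {Z : Finset E} {B : E → Set E}
    (hBdisj : (Z : Set E).PairwiseDisjoint B) (hB : ∀ z ∈ Z, IsCompact (B z))
    (hBC : ∀ z ∈ Z, B z ⊆ C)
    (hodd : ∀ z ∈ Z, ∃ G', IsRegularApprox F (B z) G' ∧ parity (B z ∩ G' ⁻¹' {0}) = 1)
    (hG : ContDiff ℝ ∞ G) (hGdet : ∀ x ∈ G ⁻¹' {0}, (fderiv ℝ G x).det ≠ 0)
    (hGF : ∀ x ∈ C, (∀ z ∈ Z, x ∉ interior (B z)) → ‖G x - F x‖ < ‖F x‖) :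
    parity (C ∩ G ⁻¹' {0}) = Z.card := by
  have honeB : ∀ z ∈ Z, parity (B z ∩ G ⁻¹' {0}) = 1 := fun z hz => by
    obtain ⟨G', hG', hone⟩ := hodd z hz
    have hfr : frontier (B z) ⊆ B z := (hB z hz).isClosed.frontier_subset
    have hG : IsRegularApprox F (B z) G := by
      refine ⟨hG, fun x hx => hGF x (hBC z hz (hfr hx)) fun z' hz' hxz' => ?_,
        fun x hx => hGdet x hx.2⟩
      obtain rfl | hne := eq_or_ne z' z
      · exact hx.2 hxz'
      · exact disjoint_left.1 (hBdisj hz' hz hne) (interior_subset hxz') (hfr hx)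
    rw [← hone, hG.parity_zeros_eq hG' (hB z hz)]
  have hunion : C ∩ G ⁻¹' {0} = ⋃ z ∈ Z, B z ∩ G ⁻¹' {0} := by
    refine Subset.antisymm (fun x ⟨hxC, hGx⟩ => ?_) (iUnion₂_subset fun z hz =>
      inter_subset_inter_left _ (hBC z hz))
    by_contra hx
    have hlt := hGF x hxC fun z hz hxz => hx (mem_biUnion hz ⟨interior_subset hxz, hGx⟩)
    rw [show G x = 0 from hGx, zero_sub, norm_neg] at hlt
    exact hlt.false
  rw [hunion, parity_biUnion Z (fun z hz => finite_zeros_of_det_fderiv_ne_zero (hB z hz)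
    (contDiff_infty.1 hG 1) fun x hx => hGdet x hx.2)
    (hBdisj.mono_on fun z _ => inter_subset_left), Finset.sum_congr rfl honeB, Finset.sum_const,
    nsmul_one]

lemma exists_isRegularApprox_parity_zeros_eq (hC : IsCompact C) (hF : ContinuousOn F C)
    (hZ : C ∩ F ⁻¹' {0} ⊆ interior C) (hFZ : IsLocalHomeomorphOn F (C ∩ F ⁻¹' {0})) :
    ∃ G, IsRegularApprox F C G ∧ parity (C ∩ G ⁻¹' {0}) = parity (C ∩ F ⁻¹' {0}) := by
  have hfin : (C ∩ F ⁻¹' {0}).Finite := finite_of_isLocalHomeomorphOn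
    (hC.of_isClosed_subset (hF.preimage_isClosed_of_isClosed hC.isClosed isClosed_singleton)
      inter_subset_left) hFZ inter_subset_right
  obtain ⟨Z, hZC⟩ := hfin.exists_finset_coe
  rw [← hZC] at hZ hFZ ⊢
  obtain ⟨B, hBdisj, hB⟩ := exists_pairwiseDisjoint_isCompact_parity_eq_one hZ
    (fun z hz => (hZC.subset hz).2) hFZ
  choose hBc hzB hBC hBG using hB
  obtain ⟨m, hm, hmF⟩ := exists_pos_forall_le_norm
    (hC.diff (isOpen_biUnion fun z (_ : z ∈ Z) => isOpen_interior (s := B z)))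
    (hF.mono sdiff_subset) fun x hx h =>
      hx.2 (mem_biUnion (hZC.superset ⟨hx.1, h⟩) (hzB x (hZC.superset ⟨hx.1, h⟩)))
  obtain ⟨G, hG, hGF, hGdet⟩ := exists_contDiff_norm_sub_lt_det_fderiv_ne_zero hC.isClosed hF hm
    (countable_singleton 0)
  have hclose : ∀ x ∈ C, (∀ z ∈ Z, x ∉ interior (B z)) → ‖G x - F x‖ < ‖F x‖ :=
    fun x hx hxB => (hGF x hx).trans_le (hmF x ⟨hx, by simpa using hxB⟩)
  refine ⟨G, ⟨hG, fun x hx => hclose x (hC.isClosed.frontier_subset hx) fun z hz hxz =>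
    hx.2 (hBC z hz (interior_subset hxz)), fun x hx => hGdet x hx.2⟩, ?_⟩
  rw [parity_zeros_eq_card_of_norm_sub_lt hBdisj hBc
    (fun z hz => (hBC z hz).trans interior_subset) hBG hG hGdet hclose, parity, ncard_coe_finset]

theorem parity_zeros_eq_of_eqOn_frontier {F₀ F₁ : E → E} (hC : IsCompact C)
    (h₀ : ContinuousOn F₀ C) (h₁ : ContinuousOn F₁ C) (hZ₀ : C ∩ F₀ ⁻¹' {0} ⊆ interior C)
    (hZ₁ : C ∩ F₁ ⁻¹' {0} ⊆ interior C) (hF₀ : IsLocalHomeomorphOn F₀ (C ∩ F₀ ⁻¹' {0}))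
    (hF₁ : IsLocalHomeomorphOn F₁ (C ∩ F₁ ⁻¹' {0})) (heq : EqOn F₀ F₁ (frontier C)) :
    parity (C ∩ F₀ ⁻¹' {0}) = parity (C ∩ F₁ ⁻¹' {0}) := by
  obtain ⟨G₀, hG₀, hpar₀⟩ := exists_isRegularApprox_parity_zeros_eq hC h₀ hZ₀ hF₀
  obtain ⟨G₁, hG₁, hpar₁⟩ := exists_isRegularApprox_parity_zeros_eq hC h₁ hZ₁ hF₁
  have hG₁' : IsRegularApprox F₀ C G₁ :=
    ⟨hG₁.contDiff, fun x hx => heq hx ▸ hG₁.norm_sub_lt x hx, hG₁.det_fderiv_ne_zero⟩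
  rw [← hpar₀, ← hpar₁, hG₀.parity_zeros_eq hG₁' hC]

end RegularApproximation

lemma isLocalHomeomorphOn_of_eqOn_isOpen {X Y : Type*} [TopologicalSpace X] [TopologicalSpace Y]
    {f g : X → Y} {s V : Set X} (hf : IsLocalHomeomorphOn f s) (hV : IsOpen V) (hsV : s ⊆ V)
    (h : EqOn g f V) : IsLocalHomeomorphOn g s := .mk g s fun x hx => by
  obtain ⟨e, hxe, rfl⟩ := hf x hx
  exact ⟨e.restrOpen V hV, ⟨hxe, hsV hx⟩, fun y hy => h hy.2⟩

lemma exists_isOpen_superset_of_source_of_union {X E : Type*} [TopologicalSpace X]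
    [TopologicalSpace E] [ChartedSpace E X] {P : Set X → Prop} (hempty : P ∅)
    (hsource : ∀ e : OpenPartialHomeomorph X E, P e.source)
    (hunion : ∀ U V, IsOpen U → IsOpen V → P U → P V → P (U ∪ V)) {T O : Set X}
    (hT : IsCompact T) (hO : IsOpen O) (hTO : T ⊆ O) :
    ∃ U, IsOpen U ∧ T ⊆ U ∧ U ⊆ O ∧ P U := by
  refine hT.induction_on (p := fun T => ∃ U, IsOpen U ∧ T ⊆ U ∧ U ⊆ O ∧ P U)
    ⟨∅, isOpen_empty, Subset.rfl, empty_subset O, hempty⟩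
    (fun s t hst ⟨U, hU, htU, hUO⟩ => ⟨U, hU, hst.trans htU, hUO⟩)
    (fun s t ⟨U, hU, hsU, hUO, hPU⟩ ⟨V, hV, htV, hVO, hPV⟩ => ⟨U ∪ V, hU.union hV,
      union_subset_union hsU htV, union_subset hUO hVO, hunion U V hU hV hPU hPV⟩)
    fun x hx => ?_
  let e := (chartAt E x).restrOpen O hO
  have hxe : x ∈ e.source := ⟨mem_chart_source E x, hTO hx⟩
  exact ⟨e.source, mem_nhdsWithin_of_mem_nhds (e.open_source.mem_nhds hxe), e.source,
    e.open_source, Subset.rfl, inter_subset_right, hsource e⟩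

section Perturbation

variable {X E : Type*} [TopologicalSpace X] [T2Space X] [LocallyCompactSpace X]
  [NormedAddCommGroup E] [NormedSpace ℝ E] {F G F₀ F₁ : X → E} {K N T U V : Set X}

lemma exists_continuous_eqOn_mem_segment (hF : Continuous F) (hK : IsCompact K) (hU : IsOpen U)
    (hKU : K ⊆ U) (hG : ContinuousOn G U) :
    ∃ H : X → E, Continuous H ∧ EqOn H G K ∧ (∃ L, IsCompact L ∧ L ⊆ U ∧ EqOn H F Lᶜ) ∧
      ∀ x, H x ∈ segment ℝ (F x) (G x) := by
  obtain ⟨μ, hμK, hμc, hμU, hμ⟩ := exists_continuousMap_one_of_isCompact_subset_isOpen hK hU hKU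
  have hμ₀ : ∀ x ∉ tsupport μ, μ x = 0 := fun x hx => image_eq_zero_of_notMem_tsupport hx
  refine ⟨fun x => AffineMap.lineMap (F x) (G x) (μ x), ?_, fun x hx => by simp [hμK hx],
    ⟨tsupport μ, hμc, hμU, fun x hx => by simp [hμ₀ x hx]⟩,
    fun x => segment_eq_image_lineMap ℝ (F x) (G x) ▸ mem_image_of_mem _ (hμ x)⟩
  refine continuous_iff_continuousAt.2 fun x => ?_
  by_cases hx : x ∈ tsupport μ
  · have hGx : ContinuousAt G x := hG.continuousAt (hU.mem_nhds (hμU hx))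
    simp only [AffineMap.lineMap_apply_module]
    fun_prop
  · refine hF.continuousAt.congr ?_
    filter_upwards [(isClosed_tsupport μ).isOpen_compl.mem_nhds hx] with z hz
    simp [hμ₀ z hz]

omit [NormedSpace ℝ E] in
lemma exists_isCompact_shell_forall_ne_zero (hF : Continuous F) (hN : IsOpen N) (hT : IsCompact T)
    (hU : IsOpen U) (hTU : T ⊆ U) (hreg : IsLocalHomeomorphOn F (F ⁻¹' {0} \ (T ∪ N))) :
    ∃ K₁ K₂, IsCompact K₁ ∧ IsCompact K₂ ∧ T ⊆ interior K₁ ∧ K₁ ⊆ interior K₂ ∧ K₂ ⊆ U ∧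
      ∀ x ∈ K₂ \ (interior K₁ ∪ N), F x ≠ 0 := by
  obtain ⟨L, hL, hTL, hLU⟩ := exists_compact_between hT hU hTU
  obtain ⟨T', hT', hTT', hT'L⟩ := exists_compact_between hT isOpen_interior hTL
  have hfin : ((L ∩ F ⁻¹' {0}) \ (interior T' ∪ N)).Finite := by
    refine finite_of_isLocalHomeomorphOn ?_ (hreg.mono ?_) (sdiff_subset.trans inter_subset_right)
    · exact (hL.inter_right (isClosed_singleton.preimage hF)).diff (isOpen_interior.union hN)
    · exact sdiff_subset_sdiff inter_subset_right (union_subset_union_left N hTT')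
  have hO : IsOpen (interior L \ (((L ∩ F ⁻¹' {0}) \ (interior T' ∪ N)) \ T')) :=
    isOpen_interior.sdiff (hfin.subset sdiff_subset).isClosed
  obtain ⟨K₂, hK₂, hTK₂, hK₂O⟩ := exists_compact_between hT' hO
    fun x hx => ⟨hT'L hx, fun h => h.2 hx⟩
  obtain ⟨K₁, hK₁, hTK₁, hK₁₂⟩ := exists_compact_between hT' isOpen_interior hTK₂
  have hTT'' : T ⊆ T' := hTT'.trans interior_subset
  refine ⟨K₁, K₂, hK₁, hK₂, hTT''.trans hTK₁, hK₁₂,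
    hK₂O.trans (sdiff_subset.trans (interior_subset.trans hLU)), fun x ⟨hx, hxK₁⟩ hFx => ?_⟩
  rw [mem_union, not_or] at hxK₁
  have hxT' : x ∉ T' := fun h => hxK₁.1 (hTK₁ h)
  exact (hK₂O hx).2 ⟨⟨⟨interior_subset (hK₂O hx).1, hFx⟩,
    fun h => h.elim (fun h => hxT' (interior_subset h)) hxK₁.2⟩, hxT'⟩

/-- Zeros of maps `X → E` can be made regular over `U`: if `F` is regular at its zeros off a compact
`T ⊆ U` and an open `N`, a modification of `F` on a compact subset of `U` is regular at all its
zeros off `N`. Here "regular" means being a local homeomorphism. The set `N` is where nothing is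
claimed; it makes the notion stable under unions. -/
def IsPerturbableOn (E : Type*) [NormedAddCommGroup E] (U : Set X) : Prop :=
  ∀ ⦃F : X → E⦄ ⦃T N : Set X⦄, Continuous F → IsOpen N → IsCompact T → T ⊆ U →
    IsLocalHomeomorphOn F (F ⁻¹' {0} \ (T ∪ N)) →
    ∃ F' : X → E, Continuous F' ∧ (∃ K, IsCompact K ∧ K ⊆ U ∧ EqOn F' F Kᶜ) ∧
      IsLocalHomeomorphOn F' (F' ⁻¹' {0} \ N)

omit [NormedSpace ℝ E] in
lemma IsPerturbableOn.union (hU : IsOpen U) (hV : IsOpen V) (hPU : IsPerturbableOn E U)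
    (hPV : IsPerturbableOn E V) : IsPerturbableOn E (U ∪ V) := by
  intro F T N hF hN hT hTUV hreg
  obtain ⟨T₁, T₂, hT₁, hT₂, hT₁U, hT₂V, rfl⟩ := hT.binary_compact_cover hU hV hTUV
  obtain ⟨L, hL, hT₂L, hLV⟩ := exists_compact_between hT₂ hV hT₂V
  obtain ⟨F', hF', ⟨K₁, hK₁, hK₁U, hF'F⟩, hreg'⟩ := hPU hF (isOpen_interior.union hN) hT₁ hT₁U
    (N := interior L ∪ N) (hreg.mono (sdiff_subset_sdiff_right (by
      rw [union_assoc]; exact union_subset_union_right _ (union_subset_union_left _ hT₂L))))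
  obtain ⟨F'', hF'', ⟨K₂, hK₂, hK₂V, hF''F'⟩, hreg''⟩ := hPV hF' hN hL hLV
    (hreg'.mono (sdiff_subset_sdiff_right (union_subset_union_left _ interior_subset)))
  refine ⟨F'', hF'', ⟨K₁ ∪ K₂, hK₁.union hK₂, union_subset_union hK₁U hK₂V, fun x hx => ?_⟩, hreg''⟩
  rw [compl_union] at hx
  rw [hF''F' hx.2, hF'F hx.1]

variable [FiniteDimensional ℝ E]

omit [T2Space X] [LocallyCompactSpace X] in
lemma exists_isLocalHomeomorphOn_zeros_norm_sub_lt (e : OpenPartialHomeomorph X E)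
    (hK : IsCompact K) (hKe : K ⊆ e.source) (hF : Continuous F) {δ : ℝ} (hδ : 0 < δ) :
    ∃ S : X → E, ContinuousOn S e.source ∧ IsLocalHomeomorphOn S (e.source ∩ S ⁻¹' {0}) ∧
      ∀ x ∈ K, ‖S x - F x‖ < δ := by
  obtain ⟨G, hG, hGF, hdet⟩ := exists_contDiff_norm_sub_lt_det_fderiv_ne_zero
    (hK.image_of_continuousOn (e.continuousOn.mono hKe)).isClosed (F := F ∘ e.symm)
    (hF.comp_continuousOn (e.continuousOn_symm.mono
      (image_subset_iff.2 fun x hx => e.map_source (hKe hx)))) hδ (countable_singleton 0)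
  refine ⟨G ∘ e, hG.continuous.comp_continuousOn e.continuousOn, ?_, fun x hx => ?_⟩
  · exact (isLocalHomeomorphOn_of_det_fderiv_ne_zero
      (fun y _ => (contDiff_infty.1 hG 1).contDiffAt) hdet).comp
      (IsLocalHomeomorphOn.OpenPartialHomeomorph.isLocalHomeomorphOn e |>.mono inter_subset_left)
      fun x hx => hx.2
  · simpa [e.left_inv (hKe hx)] using hGF (e x) (mem_image_of_mem e hx)

lemma isPerturbableOn_source (e : OpenPartialHomeomorph X E) : IsPerturbableOn E e.source := by
  intro F T N hF hN hT hTe hreg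
  obtain ⟨K₁, K₂, hK₁, hK₂, hTK₁, hK₁₂, hK₂e, hne⟩ :=
    exists_isCompact_shell_forall_ne_zero hF hN hT e.open_source hTe hreg
  obtain ⟨m, hm, hmF⟩ := exists_pos_forall_le_norm (hK₂.diff (isOpen_interior.union hN))
    hF.continuousOn hne
  obtain ⟨S, hS, hSreg, hSF⟩ := exists_isLocalHomeomorphOn_zeros_norm_sub_lt e hK₂ hK₂e hF hm
  have hK₂' : interior K₂ ⊆ e.source := interior_subset.trans hK₂e
  obtain ⟨F', hF', hF'S, ⟨K, hK, hKK₂, hF'F⟩, hseg⟩ := exists_continuous_eqOn_mem_segment hF hK₁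
    isOpen_interior hK₁₂ (hS.mono hK₂')
  refine ⟨F', hF', ⟨K, hK, hKK₂.trans hK₂', hF'F⟩, ?_⟩
  have hreg₁ : IsLocalHomeomorphOn F' (interior K₁ ∩ F' ⁻¹' {0}) :=
    isLocalHomeomorphOn_of_eqOn_isOpen (hSreg.mono fun x ⟨hx, hFx⟩ =>
      ⟨hK₂' (hK₁₂ (interior_subset hx)), (hF'S (interior_subset hx)).symm.trans hFx⟩)
      isOpen_interior inter_subset_left (hF'S.mono interior_subset)
  have hreg₂ : IsLocalHomeomorphOn F' ((Kᶜ ∩ F' ⁻¹' {0}) \ (interior K₁ ∪ N)) :=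
    isLocalHomeomorphOn_of_eqOn_isOpen (hreg.mono fun x ⟨⟨hx, hFx⟩, hxN⟩ =>
      ⟨(hF'F hx).symm.trans hFx, fun h => hxN (h.imp_left (hTK₁ ·))⟩)
      hK.isClosed.isOpen_compl (sdiff_subset.trans inter_subset_left) hF'F
  have hne' : ∀ x ∈ K \ (interior K₁ ∪ N), F' x ≠ 0 := fun x ⟨hxK, hx⟩ hFx => by
    have hmx : m ≤ ‖F x‖ := hmF x ⟨interior_subset (hKK₂ hxK), hx⟩
    refine zero_notMem_segment_of_norm_sub_lt (a := F x)
      (by simpa only [sub_self, norm_zero] using hm.trans_le hmx)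
      ((hSF x (interior_subset (hKK₂ hxK))).trans_le hmx) (hFx ▸ hseg x)
  intro x ⟨hx, hxN⟩
  by_cases hxK₁ : x ∈ interior K₁
  · exact hreg₁ x ⟨hxK₁, hx⟩
  · have hx' : x ∉ interior K₁ ∪ N := fun h => h.elim hxK₁ hxN
    exact hreg₂ x ⟨⟨fun hxK => hne' x ⟨hxK, hx'⟩ hx, hx⟩, hx'⟩

variable [ChartedSpace E X]

theorem exists_isLocalHomeomorphOn_zeros_eqOn_compl (hF : Continuous F) (hT : IsCompact T)
    (hU : IsOpen U) (hTU : T ⊆ U) (hreg : IsLocalHomeomorphOn F (F ⁻¹' {0} \ T)) :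
    ∃ F' : X → E, Continuous F' ∧ (∃ K, IsCompact K ∧ K ⊆ U ∧ EqOn F' F Kᶜ) ∧
      IsLocalHomeomorphOn F' (F' ⁻¹' {0}) := by
  have hempty : IsPerturbableOn E (∅ : Set X) := fun F T N hF _ _ hT hreg =>
    ⟨F, hF, ⟨∅, isCompact_empty, Subset.rfl, fun _ _ => rfl⟩,
      by rwa [subset_empty_iff.1 hT, empty_union] at hreg⟩
  obtain ⟨V, -, hTV, hVU, hPV⟩ := exists_isOpen_superset_of_source_of_union (E := E) hempty
    isPerturbableOn_source (fun _ _ => IsPerturbableOn.union) hT hU hTU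
  obtain ⟨F', hF', ⟨K, hK, hKV, hF'F⟩, hreg'⟩ :=
    hPV hF isOpen_empty hT hTV (by rwa [union_empty])
  exact ⟨F', hF', ⟨K, hK, hKV.trans hVU, hF'F⟩, by rwa [sdiff_empty] at hreg'⟩

end Perturbation

lemma parity_eq_of_inter_of_sdiff_eq {X : Type*} {s₀ s₁ t : Set X} (h₀ : (s₀ ∩ t).Finite)
    (h₁ : (s₁ ∩ t).Finite) (hpar : parity (s₀ ∩ t) = parity (s₁ ∩ t)) (hdiff : s₀ \ t = s₁ \ t) :
    parity s₀ = parity s₁ := by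
  have hinf {s : Set X} (h : (s \ t).Infinite) : parity s = 0 := by
    simp [parity, (h.mono sdiff_subset).ncard]
  by_cases h : (s₀ \ t).Finite
  · have hs₀ := inter_union_sdiff s₀ t ▸ h₀.union h
    have hs₁ := inter_union_sdiff s₁ t ▸ h₁.union (hdiff ▸ h)
    rw [← parity_inter_add_parity_sdiff hs₀ t, ← parity_inter_add_parity_sdiff hs₁ t, hpar, hdiff]
  · rw [hinf h, hinf (hdiff ▸ h)]

section ZeroParity

variable {X E : Type*} [TopologicalSpace X] [NormedAddCommGroup E] [NormedSpace ℝ E]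
  [FiniteDimensional ℝ E] {F₀ F₁ : X → E} {K T U V : Set X}

lemma parity_inter_zeros_eq_of_subset_source (e : OpenPartialHomeomorph X E) (hK : IsCompact K)
    (hKe : K ⊆ e.source) (h₀ : ContinuousOn F₀ K) (h₁ : ContinuousOn F₁ K)
    (hZ₀ : K ∩ F₀ ⁻¹' {0} ⊆ interior K) (hZ₁ : K ∩ F₁ ⁻¹' {0} ⊆ interior K)
    (hF₀ : IsLocalHomeomorphOn F₀ (K ∩ F₀ ⁻¹' {0}))
    (hF₁ : IsLocalHomeomorphOn F₁ (K ∩ F₁ ⁻¹' {0})) (heq : EqOn F₀ F₁ (K \ interior K)) :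
    parity (K ∩ F₀ ⁻¹' {0}) = parity (K ∩ F₁ ⁻¹' {0}) := by
  have hsymm : MapsTo e.symm (e '' K) K := fun _ ⟨x, hx, hxy⟩ => by
    rwa [← hxy, e.left_inv (hKe hx)]
  have htarget : e '' K ⊆ e.target := image_subset_iff.2 fun x hx => e.map_source (hKe hx)
  have hint : e '' interior K ⊆ interior (e '' K) :=
    interior_maximal (image_mono interior_subset)
      (e.isOpen_image_of_subset_source isOpen_interior (interior_subset.trans hKe))
  have hzeros (F : X → E) : e '' K ∩ (F ∘ e.symm) ⁻¹' {0} = e '' (K ∩ F ⁻¹' {0}) := by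
    ext y
    constructor
    · rintro ⟨⟨x, hx, rfl⟩, hFx⟩
      exact ⟨x, ⟨hx, by simpa [e.left_inv (hKe hx)] using hFx⟩, rfl⟩
    · rintro ⟨x, ⟨hx, hFx⟩, rfl⟩
      exact ⟨mem_image_of_mem e hx, by simpa [e.left_inv (hKe hx)] using hFx⟩
  have hcont {F : X → E} (hF : ContinuousOn F K) : ContinuousOn (F ∘ e.symm) (e '' K) :=
    hF.comp (e.continuousOn_symm.mono htarget) hsymm
  have hreg {F : X → E} (hF : IsLocalHomeomorphOn F (K ∩ F ⁻¹' {0})) :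
      IsLocalHomeomorphOn (F ∘ e.symm) (e '' K ∩ (F ∘ e.symm) ⁻¹' {0}) :=
    hF.comp (IsLocalHomeomorphOn.OpenPartialHomeomorph.isLocalHomeomorphOn e.symm |>.mono
      (inter_subset_left.trans htarget)) fun y hy => ⟨hsymm hy.1, hy.2⟩
  have hfrontier : frontier (e '' K) ⊆ e '' K \ e '' interior K := fun y hy =>
    ⟨(hK.image_of_continuousOn (e.continuousOn.mono hKe)).isClosed.frontier_subset hy,
      fun h => hy.2 (hint h)⟩
  have hpar := parity_zeros_eq_of_eqOn_frontier
    (hK.image_of_continuousOn (e.continuousOn.mono hKe)) (hcont h₀) (hcont h₁)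
    (hzeros F₀ ▸ (image_mono hZ₀).trans hint) (hzeros F₁ ▸ (image_mono hZ₁).trans hint)
    (hreg hF₀) (hreg hF₁) fun y hy => heq ⟨hsymm (hfrontier hy).1,
      fun h => (hfrontier hy).2 ⟨e.symm y, h, e.right_inv (htarget (hfrontier hy).1)⟩⟩
  rwa [hzeros, hzeros, parity_image_of_injOn (e.injOn.mono (inter_subset_left.trans hKe)),
    parity_image_of_injOn (e.injOn.mono (inter_subset_left.trans hKe))] at hpar

variable [T2Space X] [LocallyCompactSpace X]

/-- Modifying a map `X → E` with regular zeros on a compact subset of `U` does not change the parity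
of its number of zeros, as long as they stay regular. -/
def HasParityInvarianceOn (E : Type*) [NormedAddCommGroup E] (U : Set X) : Prop :=
  ∀ ⦃F₀ F₁ : X → E⦄ ⦃T : Set X⦄, Continuous F₀ → Continuous F₁ → IsCompact T → T ⊆ U →
    EqOn F₀ F₁ Tᶜ → IsLocalHomeomorphOn F₀ (F₀ ⁻¹' {0}) → IsLocalHomeomorphOn F₁ (F₁ ⁻¹' {0}) →
    parity (F₀ ⁻¹' {0}) = parity (F₁ ⁻¹' {0})

lemma hasParityInvarianceOn_source (e : OpenPartialHomeomorph X E) :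
    HasParityInvarianceOn E e.source := by
  intro F₀ F₁ T h₀ h₁ hT hTe heq hF₀ hF₁
  obtain ⟨K, K', hK, -, hTK, hKK', hK'e, hne⟩ := exists_isCompact_shell_forall_ne_zero h₀
    isOpen_empty hT e.open_source hTe (hF₀.mono sdiff_subset)
  have heqK : EqOn F₀ F₁ (interior K)ᶜ := heq.mono (compl_subset_compl.2 hTK)
  have hZ₀ : K ∩ F₀ ⁻¹' {0} ⊆ interior K := fun x ⟨hx, hFx⟩ => by
    by_contra hxK
    exact hne x ⟨interior_subset (hKK' hx), by simpa using hxK⟩ hFx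
  have hZ₁ : K ∩ F₁ ⁻¹' {0} ⊆ interior K := fun x ⟨hx, hFx⟩ => by
    by_contra hxK
    exact hxK (hZ₀ ⟨hx, (heqK hxK).trans hFx⟩)
  have hfin {F : X → E} (hF : Continuous F) (hreg : IsLocalHomeomorphOn F (F ⁻¹' {0})) :
      (F ⁻¹' {0} ∩ K).Finite :=
    finite_of_isLocalHomeomorphOn (hK.inter_left (isClosed_singleton.preimage hF))
      (hreg.mono inter_subset_left) inter_subset_left
  refine parity_eq_of_inter_of_sdiff_eq (hfin h₀ hF₀) (hfin h₁ hF₁) ?_ ?_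
  · rw [inter_comm, inter_comm (F₁ ⁻¹' {0})]
    exact parity_inter_zeros_eq_of_subset_source e hK (interior_subset.trans' hKK' |>.trans hK'e)
      h₀.continuousOn h₁.continuousOn hZ₀ hZ₁ (hF₀.mono inter_subset_right)
      (hF₁.mono inter_subset_right) (heqK.mono fun x hx => hx.2)
  · ext x
    refine and_congr_left fun hx => ?_
    rw [mem_preimage, mem_preimage, heqK fun h => hx (interior_subset h)]

variable [ChartedSpace E X]

lemma HasParityInvarianceOn.union (hU : IsOpen U) (hV : IsOpen V)
    (hPU : HasParityInvarianceOn E U) (hPV : HasParityInvarianceOn E V) :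
    HasParityInvarianceOn E (U ∪ V) := by
  intro F₀ F₁ T h₀ h₁ hT hTUV heq hF₀ hF₁
  obtain ⟨T₁, T₂, hT₁, hT₂, hT₁U, hT₂V, rfl⟩ := hT.binary_compact_cover hU hV hTUV
  obtain ⟨K, hK, hTK, hKU⟩ := exists_compact_between hT₁ hU hT₁U
  obtain ⟨G, hG, hGK, ⟨L, hL, hLU, hGL⟩, hseg⟩ :=
    exists_continuous_eqOn_mem_segment h₀ hK hU hKU h₁.continuousOn
  have hGT : EqOn G F₀ (T₁ ∪ T₂)ᶜ := fun x hx => by simpa [← heq hx] using hseg x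
  have hG₁ : EqOn G F₁ (T₂ \ interior K)ᶜ := fun x hx => by
    by_cases hxK : x ∈ interior K
    · exact hGK (interior_subset hxK)
    · have hxT : x ∈ (T₁ ∪ T₂)ᶜ := fun h => h.elim (fun h => hxK (hTK h)) fun h => hx ⟨h, hxK⟩
      exact (hGT hxT).trans (heq hxT)
  have hT₂K : IsCompact (T₂ \ interior K) := hT₂.diff isOpen_interior
  have hreg : IsLocalHomeomorphOn G (G ⁻¹' {0} \ (L ∩ (T₂ \ interior K))) := by
    rw [sdiff_inter]
    refine fun x hx => hx.elim (fun hx => ?_) fun hx => ?_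
    · exact isLocalHomeomorphOn_of_eqOn_isOpen
        (hF₀.mono fun z hz => (hGL hz.2).symm.trans hz.1) hL.isClosed.isOpen_compl
        (fun z hz => hz.2) hGL x hx
    · exact isLocalHomeomorphOn_of_eqOn_isOpen
        (hF₁.mono fun z hz => (hG₁ hz.2).symm.trans hz.1) hT₂K.isClosed.isOpen_compl
        (fun z hz => hz.2) hG₁ x hx
  obtain ⟨G', hG', ⟨Q, hQ, hQUV, hG'G⟩, hregG'⟩ := exists_isLocalHomeomorphOn_zeros_eqOn_compl hG
    (hT₂K.inter_left hL.isClosed) (hU.inter hV)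
    (inter_subset_inter hLU (sdiff_subset.trans hT₂V)) hreg
  have h₀' : EqOn F₀ G' (L ∪ Q)ᶜ := fun x hx => by
    rw [compl_union] at hx
    rw [hG'G hx.2, hGL hx.1]
  have h₁' : EqOn G' F₁ ((T₂ \ interior K) ∪ Q)ᶜ := fun x hx => by
    rw [compl_union] at hx
    rw [hG'G hx.2, hG₁ hx.1]
  rw [hPU h₀ hG' (hL.union hQ) (union_subset hLU (hQUV.trans inter_subset_left)) h₀' hF₀ hregG',
    hPV hG' h₁ (hT₂K.union hQ) (union_subset (sdiff_subset.trans hT₂V)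
      (hQUV.trans inter_subset_right)) h₁' hregG' hF₁]

theorem parity_zeros_eq_of_eqOn_compl (h₀ : Continuous F₀) (h₁ : Continuous F₁) (hT : IsCompact T)
    (heq : EqOn F₀ F₁ Tᶜ) (hF₀ : IsLocalHomeomorphOn F₀ (F₀ ⁻¹' {0}))
    (hF₁ : IsLocalHomeomorphOn F₁ (F₁ ⁻¹' {0})) :
    parity (F₀ ⁻¹' {0}) = parity (F₁ ⁻¹' {0}) := by
  have hempty : HasParityInvarianceOn E (∅ : Set X) := fun F₀ F₁ T _ _ _ hT heq _ _ => by
    rw [subset_empty_iff.1 hT, compl_empty, eqOn_univ] at heq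
    rw [heq]
  obtain ⟨U, -, hTU, -, hPU⟩ := exists_isOpen_superset_of_source_of_union (E := E) hempty
    hasParityInvarianceOn_source (fun _ _ => HasParityInvarianceOn.union) hT isOpen_univ
    (subset_univ T)
  exact hPU h₀ h₁ hT hTU heq hF₀ hF₁

theorem parity_zeros_eq_of_segment (h₀ : Continuous F₀) (h₁ : Continuous F₁) (hT : IsCompact T)
    (hseg : ∀ x ∉ T, 0 ∉ segment ℝ (F₀ x) (F₁ x)) (hF₀ : IsLocalHomeomorphOn F₀ (F₀ ⁻¹' {0}))
    (hF₁ : IsLocalHomeomorphOn F₁ (F₁ ⁻¹' {0})) :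
    parity (F₀ ⁻¹' {0}) = parity (F₁ ⁻¹' {0}) := by
  obtain ⟨K, hK, hTK, -⟩ := exists_compact_between hT isOpen_univ (subset_univ T)
  obtain ⟨H, hH, hHK, ⟨L, hL, -, hHL⟩, hHseg⟩ :=
    exists_continuous_eqOn_mem_segment h₀ hK isOpen_univ (subset_univ K) h₁.continuousOn
  have hHT : H ⁻¹' {0} ⊆ T := fun x hx => by
    by_contra hxT
    exact hseg x hxT ((show H x = 0 from hx) ▸ hHseg x)
  have hF₁T : F₁ ⁻¹' {0} ⊆ T := fun x hx => by
    by_contra hxT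
    exact hseg x hxT ((show F₁ x = 0 from hx) ▸ right_mem_segment ℝ _ _)
  have hTK' : T ⊆ K := hTK.trans interior_subset
  have hzeros : H ⁻¹' {0} = F₁ ⁻¹' {0} := by
    ext x
    exact ⟨fun hx => (hHK (hTK' (hHT hx))).symm.trans hx, fun hx => (hHK (hTK' (hF₁T hx))).trans hx⟩
  rw [← hzeros]
  refine parity_zeros_eq_of_eqOn_compl h₀ hH hL hHL.symm hF₀ (isLocalHomeomorphOn_of_eqOn_isOpen
    (hzeros ▸ hF₁) isOpen_interior (hHT.trans hTK) (hHK.mono interior_subset))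

end ZeroParity

section FiberParity

lemma exists_openPartialHomeomorph_target_eq_univ {Y E : Type*} [TopologicalSpace Y]
    [NormedAddCommGroup E] [NormedSpace ℝ E] [ChartedSpace E Y] {O : Set Y} (hO : IsOpen O)
    {y : Y} (hy : y ∈ O) :
    ∃ φ : OpenPartialHomeomorph Y E, y ∈ φ.source ∧ φ.source ⊆ O ∧ φ.target = univ ∧
      φ y = 0 := by
  let e := (chartAt E y).restrOpen O hO
  have hye : y ∈ e.source := ⟨mem_chart_source E y, hy⟩
  obtain ⟨r, hr, hball⟩ := Metric.isOpen_iff.1 e.open_target (e y) (e.map_source hye)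
  refine ⟨e.trans (OpenPartialHomeomorph.univBall (e y) r).symm, ?_, ?_, ?_, ?_⟩
  · simp [hye, hr, OpenPartialHomeomorph.univBall_target (e y) hr]
  · exact fun z hz => (hz.1 : z ∈ e.source).2
  · rw [OpenPartialHomeomorph.trans_target, OpenPartialHomeomorph.symm_target,
      OpenPartialHomeomorph.univBall_source, univ_inter, eq_univ_iff_forall]
    intro v
    refine hball ?_
    rw [← OpenPartialHomeomorph.univBall_target (e y) hr]
    exact OpenPartialHomeomorph.map_source _ (by simp)
  · have hzero := (OpenPartialHomeomorph.univBall (e y) r).left_inv (x := 0) (by simp)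
    rwa [OpenPartialHomeomorph.univBall_apply_zero] at hzero

variable {X Y : Type*} [TopologicalSpace X] [TopologicalSpace Y] {f f' f₀ f₁ : X → Y}
  {V V' : Set Y} {y : Y}

/-- `f'` is a modification of `f` over `V`: it differs from `f` only on a compact subset of
`f ⁻¹' V`, and there it still takes values in `V`. -/
structure IsModificationOver (f f' : X → Y) (V : Set Y) : Prop where
  continuous : Continuous f'
  exists_isCompact : ∃ T, IsCompact T ∧ T ⊆ f ⁻¹' V ∧ EqOn f' f Tᶜ
  mapsTo : MapsTo f' (f ⁻¹' V) V

lemma IsModificationOver.refl (hf : Continuous f) : IsModificationOver f f V :=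
  ⟨hf, ⟨∅, isCompact_empty, empty_subset _, fun _ _ => rfl⟩, fun _ hx => hx⟩

lemma IsModificationOver.mono (h : IsModificationOver f f' V) (hV : V ⊆ V') :
    IsModificationOver f f' V' := by
  obtain ⟨hf', ⟨T, hT, hTV, heq⟩, hmaps⟩ := h
  refine ⟨hf', ⟨T, hT, hTV.trans (preimage_mono hV), heq⟩, fun x hx => ?_⟩
  by_cases hxT : x ∈ T
  · exact hV (hmaps (hTV hxT))
  · rwa [heq hxT]

lemma IsModificationOver.preimage_eq (h : IsModificationOver f f' V) : f' ⁻¹' V = f ⁻¹' V := by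
  refine Subset.antisymm (fun x hx => ?_) h.mapsTo
  obtain ⟨T, -, hTV, heq⟩ := h.exists_isCompact
  by_cases hxT : x ∈ T
  · exact hTV hxT
  · rwa [mem_preimage, ← heq hxT]

/-- Every modification of `f` over `V` has `d` points modulo two in each of its regular fibers over
`V`. -/
def HasParityOver (f : X → Y) (V : Set Y) (d : ZMod 2) : Prop :=
  ∀ ⦃y⦄, y ∈ V → ∀ ⦃f' : X → Y⦄, IsModificationOver f f' V →
    IsLocalHomeomorphOn f' (f' ⁻¹' {y}) → parity (f' ⁻¹' {y}) = d

section Coordinate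

variable {E : Type*} [NormedAddCommGroup E] {φ : OpenPartialHomeomorph Y E} {U : Set X}

lemma isLocalHomeomorphOn_coordinate_iff (hf : Continuous f) (hUo : IsOpen U)
    (hU : U ⊆ f ⁻¹' φ.source) (s : Set U) :
    IsLocalHomeomorphOn (fun x : U => φ (f x)) s ↔ IsLocalHomeomorphOn f (Subtype.val '' s) := by
  have hφ : IsLocalHomeomorphOn φ ((f ∘ Subtype.val) '' s) :=
    IsLocalHomeomorphOn.OpenPartialHomeomorph.isLocalHomeomorphOn φ |>.mono
      (image_subset_iff.2 fun x _ => hU x.2)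
  have hval : IsLocalHomeomorphOn (Subtype.val : U → X) s :=
    hUo.isOpenEmbedding_subtypeVal.isLocalHomeomorph.isLocalHomeomorphOn
  constructor
  · intro h
    exact .of_comp_right (IsLocalHomeomorphOn.of_comp_left h hφ
      fun x _ => (hf.comp continuous_subtype_val).continuousAt) hval
  · exact fun h => hφ.comp (h.comp hval (mapsTo_image _ s)) (mapsTo_image _ s)

omit [TopologicalSpace X] in
lemma preimage_coordinate_zero (hU : U = f ⁻¹' φ.source) (hy : y ∈ φ.source) (hφy : φ y = 0) :
    Subtype.val '' ((fun x : U => φ (f x)) ⁻¹' {0}) = f ⁻¹' {y} := by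
  subst hU
  ext x
  simp only [mem_image, mem_preimage, mem_singleton_iff, Subtype.exists, exists_and_right,
    exists_eq_right, ← hφy]
  exact ⟨fun ⟨hx, h⟩ => φ.injOn hx hy h, fun h => ⟨h ▸ hy, congrArg φ h⟩⟩

lemma exists_isModificationOver_of_eqOn_compl [T2Space X] (hf : Continuous f)
    (hφ : φ.target = univ) {F : f ⁻¹' φ.source → E} (hF : Continuous F) {K : Set (f ⁻¹' φ.source)}
    (hK : IsCompact K) (heq : EqOn F (fun x => φ (f x)) Kᶜ) :
    ∃ f', IsModificationOver f f' φ.source ∧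
      ∀ x : f ⁻¹' φ.source, φ (f' x) = F x := by
  classical
  have hKX := hK.image continuous_subtype_val
  let f' : X → Y := fun x => if h : x ∈ f ⁻¹' φ.source then φ.symm (F ⟨x, h⟩) else f x
  have hf'F (x : f ⁻¹' φ.source) : f' x = φ.symm (F x) := dif_pos x.2
  have hf'f : EqOn f' f (Subtype.val '' K)ᶜ := fun x hx => by
    by_cases h : x ∈ f ⁻¹' φ.source
    · rw [hf'F ⟨x, h⟩, heq fun hxK => hx ⟨_, hxK, rfl⟩, φ.left_inv h]
    · exact dif_neg h
  have hcont : Continuous f' := by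
    have hU : ContinuousOn f' (f ⁻¹' φ.source) := continuousOn_iff_continuous_domRestrict.2 <| by
      refine (φ.continuousOn_symm.comp_continuous hF fun x => hφ ▸ mem_univ _).congr fun x => ?_
      exact (hf'F x).symm
    refine continuous_iff_continuousAt.2 fun x => ?_
    by_cases hx : x ∈ f ⁻¹' φ.source
    · exact hU.continuousAt ((φ.open_source.preimage hf).mem_nhds hx)
    · refine hf.continuousAt.congr (hf'f.symm.eventuallyEq_of_mem ?_)
      exact hKX.isClosed.isOpen_compl.mem_nhds fun h => hx (Subtype.coe_image_subset _ K h)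
  refine ⟨f', ⟨hcont, ⟨_, hKX, Subtype.coe_image_subset _ K, hf'f⟩, fun x hx => ?_⟩, fun x => ?_⟩
  · rw [hf'F ⟨x, hx⟩]
    exact φ.map_target (hφ ▸ mem_univ _)
  · rw [hf'F, φ.right_inv (hφ ▸ mem_univ _)]

lemma IsModificationOver.coordinate_sub (hf' : IsModificationOver f f' φ.source) (hy : y ∈ φ.source)
    (hreg : IsLocalHomeomorphOn f' (f' ⁻¹' {y})) :
    let F : f ⁻¹' φ.source → E := fun x => φ (f' x) - φ y
    Continuous F ∧ IsLocalHomeomorphOn F (F ⁻¹' {0}) ∧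
      parity (F ⁻¹' {0}) = parity (f' ⁻¹' {y}) := by
  intro F
  let ψ : OpenPartialHomeomorph Y E := φ.transHomeomorph (Homeomorph.subRight (φ y))
  have hzeros : Subtype.val '' (F ⁻¹' {0}) = f' ⁻¹' {y} :=
    preimage_coordinate_zero (φ := ψ) hf'.preimage_eq.symm hy (sub_self (φ y))
  refine ⟨?_, ?_, ?_⟩
  · exact ψ.continuousOn.comp_continuous (hf'.continuous.comp continuous_subtype_val)
      fun x => hf'.mapsTo x.2
  · refine (isLocalHomeomorphOn_coordinate_iff (φ := ψ) hf'.continuous ?_ hf'.mapsTo _).2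
      (hzeros.symm ▸ hreg)
    exact hf'.preimage_eq ▸ φ.open_source.preimage hf'.continuous
  · rw [← hzeros, parity_image_of_injOn Subtype.val_injective.injOn]

end Coordinate

section ModificationInChart

variable {E : Type*} [NormedAddCommGroup E] [NormedSpace ℝ E] [FiniteDimensional ℝ E] [T2Space X]
  [LocallyCompactSpace X] [ChartedSpace E X] {φ : OpenPartialHomeomorph Y E} {y₀ y₁ : Y}

lemma exists_isModificationOver_isLocalHomeomorphOn (hf : Continuous f) (hy : y ∈ φ.source)
    (hφ : φ.target = univ) (hφy : φ y = 0) (hfy : IsCompact (f ⁻¹' {y})) :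
    ∃ f', IsModificationOver f f' φ.source ∧ IsLocalHomeomorphOn f' (f' ⁻¹' {y}) := by
  let U : TopologicalSpace.Opens X := ⟨f ⁻¹' φ.source, φ.open_source.preimage hf⟩
  have := U.2.locallyCompactSpace
  let F : U → E := fun x => φ (f x)
  have hF : Continuous F :=
    φ.continuousOn.comp_continuous (hf.comp continuous_subtype_val) fun x => x.2
  have hcompact : IsCompact (F ⁻¹' {0}) := by
    rw [Subtype.isCompact_iff]
    exact (preimage_coordinate_zero rfl hy hφy).symm ▸ hfy
  obtain ⟨F', hF', ⟨K, hK, -, hF'F⟩, hreg⟩ := exists_isLocalHomeomorphOn_zeros_eqOn_compl hF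
    hcompact isOpen_univ (subset_univ _) fun x hx => (hx.2 hx.1).elim
  obtain ⟨f', hf', hf'F'⟩ := exists_isModificationOver_of_eqOn_compl hf hφ hF' hK hF'F
  obtain rfl : (fun x : U => φ (f' x)) = F' := funext hf'F'
  refine ⟨f', hf', ?_⟩
  rw [← preimage_coordinate_zero hf'.preimage_eq.symm hy hφy]
  exact (isLocalHomeomorphOn_coordinate_iff hf'.continuous U.2 hf'.mapsTo _).1 hreg

lemma parity_fiber_eq_of_isModificationOver (hy₀ : y₀ ∈ φ.source) (hy₁ : y₁ ∈ φ.source)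
    (hφ : φ.target = univ) (hproper : ∀ K ⊆ φ.source, IsCompact K → IsCompact (f ⁻¹' K))
    (hf₀ : IsModificationOver f f₀ φ.source) (hf₁ : IsModificationOver f f₁ φ.source)
    (hreg₀ : IsLocalHomeomorphOn f₀ (f₀ ⁻¹' {y₀})) (hreg₁ : IsLocalHomeomorphOn f₁ (f₁ ⁻¹' {y₁})) :
    parity (f₀ ⁻¹' {y₀}) = parity (f₁ ⁻¹' {y₁}) := by
  let U : TopologicalSpace.Opens X :=
    ⟨f ⁻¹' φ.source, hf₀.preimage_eq ▸ φ.open_source.preimage hf₀.continuous⟩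
  have := U.2.locallyCompactSpace
  obtain ⟨hF₀, hregF₀, hpar₀⟩ := hf₀.coordinate_sub hy₀ hreg₀
  obtain ⟨hF₁, hregF₁, hpar₁⟩ := hf₁.coordinate_sub hy₁ hreg₁
  obtain ⟨T₀, hT₀, hT₀U, heq₀⟩ := hf₀.exists_isCompact
  obtain ⟨T₁, hT₁, hT₁U, heq₁⟩ := hf₁.exists_isCompact
  let C : Set Y := φ.symm '' segment ℝ (φ y₀) (φ y₁)
  have hCφ : C ⊆ φ.source := image_subset_iff.2 fun v _ => φ.map_target (hφ ▸ mem_univ v)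
  have hC : IsCompact C := by
    refine IsCompact.image_of_continuousOn ?_ (φ.continuousOn_symm.mono (hφ ▸ subset_univ _))
    exact segment_eq_image_lineMap ℝ (φ y₀) (φ y₁) ▸
      isCompact_Icc.image AffineMap.lineMap_continuous
  have hT : IsCompact ((↑) ⁻¹' (T₀ ∪ T₁ ∪ f ⁻¹' C) : Set U) := by
    refine IsInducing.subtypeVal.isCompact_preimage' ((hT₀.union hT₁).union (hproper C hCφ hC)) ?_
    exact Subtype.range_coe.symm ▸ union_subset (union_subset hT₀U hT₁U) (preimage_mono hCφ)
  rw [← hpar₀, ← hpar₁]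
  refine parity_zeros_eq_of_segment (X := U) hF₀ hF₁ hT (fun x hx hseg => ?_) hregF₀ hregF₁
  simp only [mem_preimage, mem_union, not_or] at hx
  obtain ⟨⟨hxT₀, hxT₁⟩, hxC⟩ := hx
  rw [heq₀ hxT₀, heq₁ hxT₁] at hseg
  obtain ⟨s, t, hs, ht, hst, hzero⟩ := hseg
  refine hxC ⟨φ (f x), ⟨s, t, hs, ht, hst, ?_⟩, φ.left_inv x.2⟩
  linear_combination (norm := module) hst • φ (f x) - hzero

lemma exists_hasParityOver (hφ : φ.target = univ)
    (hproper : ∀ K ⊆ φ.source, IsCompact K → IsCompact (f ⁻¹' K)) :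
    ∃ d, HasParityOver f φ.source d := by
  by_cases h : ∃ y ∈ φ.source, ∃ f', IsModificationOver f f' φ.source ∧
      IsLocalHomeomorphOn f' (f' ⁻¹' {y})
  · obtain ⟨y₀, hy₀, f₀, hf₀, hreg₀⟩ := h
    exact ⟨parity (f₀ ⁻¹' {y₀}), fun y₁ hy₁ f₁ hf₁ hreg₁ =>
      parity_fiber_eq_of_isModificationOver hy₁ hy₀ hφ hproper hf₁ hf₀ hreg₁ hreg₀⟩
  · exact ⟨0, fun y hy f' hf' hreg => (h ⟨y, hy, f', hf', hreg⟩).elim⟩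

end ModificationInChart

variable [T2Space X] [LocallyCompactSpace X]

lemma HasParityOver.unique (E : Type*) [NormedAddCommGroup E] [NormedSpace ℝ E]
    [FiniteDimensional ℝ E] [ChartedSpace E X] [ChartedSpace E Y] {d d' : ZMod 2}
    (hf : Continuous f) (hV : IsOpen V) (hV' : IsOpen V') (h : HasParityOver f V d)
    (h' : HasParityOver f V' d') (hy : y ∈ V ∩ V') (hfy : IsCompact (f ⁻¹' {y})) : d = d' := by
  obtain ⟨φ, hyφ, hφV, hφ, hφy⟩ :=
    exists_openPartialHomeomorph_target_eq_univ (E := E) (hV.inter hV') hy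
  obtain ⟨f', hf', hreg⟩ := exists_isModificationOver_isLocalHomeomorphOn hf hyφ hφ hφy hfy
  rw [← h hy.1 (hf'.mono (hφV.trans inter_subset_left)) hreg,
    ← h' hy.2 (hf'.mono (hφV.trans inter_subset_right)) hreg]

theorem parity_fiber_eq_of_isPreconnected (E : Type*) [NormedAddCommGroup E] [NormedSpace ℝ E]
    [FiniteDimensional ℝ E] [ChartedSpace E X] [ChartedSpace E Y] {S : Set Y} {y₀ y₁ : Y}
    (hf : Continuous f) (hS : IsOpen S) (hSc : IsPreconnected S)
    (hproper : ∀ K ⊆ S, IsCompact K → IsCompact (f ⁻¹' K)) (hy₀ : y₀ ∈ S) (hy₁ : y₁ ∈ S)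
    (hreg₀ : IsLocalHomeomorphOn f (f ⁻¹' {y₀}))
    (hreg₁ : IsLocalHomeomorphOn f (f ⁻¹' {y₁})) :
    parity (f ⁻¹' {y₀}) = parity (f ⁻¹' {y₁}) := by
  let D (P : ZMod 2 → Prop) : Set Y :=
    {y | ∃ V, IsOpen V ∧ y ∈ V ∧ V ⊆ S ∧ ∃ d, P d ∧ HasParityOver f V d}
  have hDo (P) : IsOpen (D P) := isOpen_iff_mem_nhds.2 fun y ⟨V, hV, hyV, h⟩ =>
    mem_of_superset (hV.mem_nhds hyV) fun z hz => ⟨V, hV, hz, h⟩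
  have hD {y} (hy : y ∈ S) : ∃ V, IsOpen V ∧ y ∈ V ∧ V ⊆ S ∧ ∃ d, HasParityOver f V d := by
    obtain ⟨φ, hyφ, hφS, hφ, -⟩ := exists_openPartialHomeomorph_target_eq_univ (E := E) hS hy
    exact ⟨φ.source, φ.open_source, hyφ, hφS,
      exists_hasParityOver hφ fun K hK => hproper K (hK.trans hφS)⟩
  obtain ⟨V₀, hV₀, hy₀V₀, hV₀S, d, hd⟩ := hD hy₀
  have hdisj : Disjoint (D (· = d)) (D (· ≠ d)) := disjoint_left.2
    fun y ⟨V, hV, hyV, hVS, d₁, hd₁, hfV⟩ ⟨V', hV', hyV', _, d₂, hd₂, hfV'⟩ =>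
      hd₂ (hd₁ ▸ (hfV.unique E hf hV hV' hfV' ⟨hyV, hyV'⟩
        (hproper _ (singleton_subset_iff.2 (hVS hyV)) isCompact_singleton)).symm)
  have hSD : S ⊆ D (· = d) ∪ D (· ≠ d) := fun y hy => by
    obtain ⟨V, hV, hyV, hVS, d', hd'⟩ := hD hy
    exact (eq_or_ne d' d).imp (fun h => ⟨V, hV, hyV, hVS, d', h, hd'⟩)
      fun h => ⟨V, hV, hyV, hVS, d', h, hd'⟩
  obtain ⟨V₁, -, hy₁V₁, -, _, rfl, hd₁⟩ := hSc.subset_left_of_subset_union (hDo _) (hDo _) hdisj hSD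
    ⟨y₀, hy₀, V₀, hV₀, hy₀V₀, hV₀S, d, rfl, hd⟩ hy₁
  rw [hd hy₀V₀ (.refl hf) hreg₀, hd₁ hy₁V₁ (.refl hf) hreg₁]

end FiberParity

section Ends

variable {X : Type*} [TopologicalSpace X]

lemma isPreconnected_compl_singleton_of_mem_nhds [PreconnectedSpace X] [T1Space X] {p : X}
    {B : Set X} (hB : B ∈ 𝓝 p) (hBp : IsPreconnected (B \ {p})) :
    IsPreconnected ({p}ᶜ : Set X) := by
  have hcover : ∀ u v : Set X, IsOpen u → IsOpen v → {p}ᶜ ⊆ u ∪ v → {p}ᶜ ∩ (u ∩ v) = ∅ →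
      B \ {p} ⊆ u → {p}ᶜ ⊆ u := by
    intro u v hu hv huv hdisj hBu
    have hpu : IsOpen (insert p u) := isOpen_iff_mem_nhds.2 fun x hx => by
      rcases hx with rfl | hx
      · exact mem_of_superset hB fun z hz => or_iff_not_imp_left.2 fun hzp => hBu ⟨hz, hzp⟩
      · exact mem_of_superset (hu.mem_nhds hx) (subset_insert p u)
    have hdisj' : Disjoint (insert p u) (v ∩ {p}ᶜ) := disjoint_left.2 fun x hx hxv =>
      (hdisj.subset ⟨hxv.2, hx.resolve_left hxv.2, hxv.1⟩ : x ∈ (∅ : Set X))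
    have huniv : univ ⊆ insert p u := isPreconnected_univ.subset_left_of_subset_union hpu
      (hv.inter isOpen_compl_singleton) hdisj'
      (fun x _ => (eq_or_ne x p).elim (fun h => .inl (.inl h))
        fun h => (huv h).imp (.inr ·) fun hxv => ⟨hxv, h⟩)
      ⟨p, mem_univ p, mem_insert p u⟩
    exact fun x hxp => (huniv (mem_univ x)).resolve_left hxp
  have hBsub : B \ {p} ⊆ {p}ᶜ := fun x hx => hx.2
  refine isPreconnected_iff_subset_of_disjoint.2 fun u v hu hv huv hdisj => ?_
  have hBdisj : (B \ {p}) ∩ (u ∩ v) = ∅ :=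
    subset_empty_iff.1 ((inter_subset_inter_left _ hBsub).trans hdisj.subset)
  refine (isPreconnected_iff_subset_of_disjoint.1 hBp u v hu hv (hBsub.trans huv) hBdisj).imp
    (hcover u v hu hv huv hdisj) (hcover v u hv hu ?_ ?_)
  · rwa [union_comm]
  · rwa [inter_comm v u]

lemma isPreconnected_compl_singleton_of_chartedSpace {E : Type*} [NormedAddCommGroup E]
    [NormedSpace ℝ E] [ChartedSpace E X] [PreconnectedSpace X] [T1Space X]
    (hrank : 1 < Module.rank ℝ E) (p : X) : IsPreconnected ({p}ᶜ : Set X) := by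
  obtain ⟨φ, hp, -, hφ, hφp⟩ :=
    exists_openPartialHomeomorph_target_eq_univ (E := E) isOpen_univ (mem_univ p)
  have hpunctured : φ.symm '' {0}ᶜ = φ.source \ {p} := by
    have h := φ.symm_image_target_inter_eq' {0}ᶜ
    rw [hφ, univ_inter] at h
    refine h.trans (ext fun x => ?_)
    exact and_congr_right fun hx => not_congr ⟨fun h0 => φ.injOn hx hp (h0.trans hφp.symm),
      fun hxp => (congrArg φ hxp).trans hφp⟩
  refine isPreconnected_compl_singleton_of_mem_nhds (φ.open_source.mem_nhds hp) ?_
  rw [← hpunctured]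
  exact (isConnected_compl_singleton_of_one_lt_rank hrank 0).isPreconnected.image _
    (φ.continuousOn_symm.mono (hφ ▸ subset_univ _))

lemma frontier_connectedComponentIn_compl_subset [LocallyConnectedSpace X] {K : Set X}
    (hK : IsClosed K) (x : X) : frontier (connectedComponentIn Kᶜ x) ⊆ K := by
  intro z hz
  by_contra hzK
  have hzz : z ∈ connectedComponentIn Kᶜ z := mem_connectedComponentIn hzK
  obtain ⟨w, hwz, hwx⟩ :=
    mem_closure_iff.1 hz.1 _ hK.isOpen_compl.connectedComponentIn hzz
  refine hz.2 ?_
  rwa [hK.isOpen_compl.connectedComponentIn.interior_eq, connectedComponentIn_eq hwx,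
    ← connectedComponentIn_eq hwz]

lemma connectedComponentIn_compl_inter_frontier_nonempty [LocallyConnectedSpace X]
    [PreconnectedSpace X] {K L : Set X} (hK : IsClosed K) (hKne : K.Nonempty) (hL : IsClosed L)
    (hKL : K ⊆ interior L) {x : X} (hx : x ∉ L) :
    (connectedComponentIn Kᶜ x ∩ frontier L).Nonempty := by
  set C := connectedComponentIn Kᶜ x
  have hxC : x ∈ C := mem_connectedComponentIn fun h => hx (interior_subset (hKL h))
  by_contra! hCL
  have hCLc : C ⊆ Lᶜ := by
    refine isPreconnected_connectedComponentIn.subset_left_of_subset_union hL.isOpen_compl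
      isOpen_interior (disjoint_compl_left.mono_right interior_subset) (fun z hz => ?_) ⟨x, hxC, hx⟩
    by_contra hz'
    rw [mem_union, not_or, notMem_compl_iff] at hz'
    exact hCL.subset ⟨hz, subset_closure hz'.1, hz'.2⟩
  obtain ⟨z, hz⟩ : (frontier C).Nonempty := nonempty_frontier_iff.2
    ⟨⟨x, hxC⟩, fun h => hKne.ne_empty (compl_univ_iff.1 (univ_subset_iff.1
      (h ▸ connectedComponentIn_subset Kᶜ x)))⟩
  have hzL : z ∈ interior L := hKL (frontier_connectedComponentIn_compl_subset hK x hz)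
  obtain ⟨w, hwL, hwC⟩ := mem_closure_iff.1 hz.1 _ isOpen_interior hzL
  exact hCLc hwC (interior_subset hwL)

theorem exists_not_isCompact_closure_connectedComponentIn_compl [T2Space X] [LocallyCompactSpace X]
    [LocallyConnectedSpace X] [ConnectedSpace X] [NoncompactSpace X] {K : Set X}
    (hK : IsCompact K) : ∃ x ∈ Kᶜ, ¬ IsCompact (closure (connectedComponentIn Kᶜ x)) := by
  rcases K.eq_empty_or_nonempty with rfl | hKne
  · obtain ⟨x⟩ := (inferInstance : Nonempty X)
    refine ⟨x, notMem_empty x, ?_⟩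
    simpa [connectedComponentIn_univ] using noncompact_univ X
  by_contra! hcompact
  obtain ⟨L, hL, hKL, -⟩ := exists_compact_between hK isOpen_univ (subset_univ K)
  have hLK : frontier L ⊆ Kᶜ := fun x hx h => hx.2 (hKL h)
  obtain ⟨t, ht, hcover⟩ := (hL.of_isClosed_subset isClosed_frontier
    hL.isClosed.frontier_subset).elim_nhds_subcover (connectedComponentIn Kᶜ)
    fun x hx => hK.isClosed.isOpen_compl.connectedComponentIn.mem_nhds
      (mem_connectedComponentIn (hLK hx))
  have hbounded : IsCompact (L ∪ ⋃ x ∈ t, closure (connectedComponentIn Kᶜ x)) :=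
    hL.union (t.finite_toSet.isCompact_biUnion fun x hx => hcompact x (hLK (ht x hx)))
  refine noncompact_univ X (univ_subset_iff.1 (fun x _ => or_iff_not_imp_left.2 fun hxL => ?_) ▸
    hbounded)
  obtain ⟨z, hzx, hzL⟩ := connectedComponentIn_compl_inter_frontier_nonempty hK.isClosed hKne
    hL.isClosed hKL hxL
  obtain ⟨y, hy, hzy⟩ := mem_iUnion₂.1 (hcover hzL)
  refine mem_iUnion₂.2 ⟨y, hy, subset_closure ?_⟩
  rw [connectedComponentIn_eq hzy, ← connectedComponentIn_eq hzx]
  exact mem_connectedComponentIn fun h => hxL (interior_subset (hKL h))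

lemma exists_mem_notMem_of_not_isCompact_closure [R1Space X] {A Q : Set X}
    (hA : ¬ IsCompact (closure A)) (hQ : IsCompact Q) : ∃ y ∈ A, y ∉ Q :=
  not_subset.1 fun h => hA (hQ.closure_of_subset h)

lemma exists_continuous_eqOn_const_compl_eqOn_id [R1Space X] [LocallyCompactSpace X]
    [ContractibleSpace X] {K A : Set X} (hK : IsCompact K) (hAK : frontier A ⊆ K) :
    ∃ (p : X) (L : Set X) (g : X → X), IsCompact L ∧ Continuous g ∧
      EqOn g (fun _ => p) Aᶜ ∧ EqOn g id (A \ L) := by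
  classical
  obtain ⟨u, huK, hL, -, hu⟩ :=
    exists_continuousMap_one_of_isCompact_subset_isOpen hK isOpen_univ (subset_univ K)
  obtain ⟨p, ⟨H⟩⟩ := id_nullhomotopic X
  let h : X → X := fun x => H (⟨u x, hu x⟩, x)
  have hh : Continuous h := by fun_prop
  refine ⟨p, tsupport u, A.piecewise h fun _ => p, hL, ?_, piecewise_eqOn_compl _ _ _,
    fun x hx => ?_⟩
  · refine hh.piecewise (fun x hx => ?_) continuous_const
    have hux : (⟨u x, hu x⟩ : unitInterval) = 1 := Subtype.ext (huK (hAK hx))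
    exact (congrArg (fun s => H (s, x)) hux).trans (H.apply_one x)
  · have hux : (⟨u x, hu x⟩ : unitInterval) = 0 :=
      Subtype.ext (image_eq_zero_of_notMem_tsupport (f := u) hx.2)
    exact (piecewise_eq_of_mem _ _ _ hx.1).trans
      ((congrArg (fun s => H (s, x)) hux).trans (H.apply_zero x))

section EqOnIdConst

variable [T2Space X] {A L : Set X} {p : X} {g : X → X}

lemma isCompact_preimage_of_eqOn_const_of_eqOn_id (hg : Continuous g) (hL : IsCompact L)
    (hconst : EqOn g (fun _ => p) Aᶜ) (hid : EqOn g id (A \ L)) {D : Set X} (hD : IsCompact D)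
    (hp : p ∉ D) : IsCompact (g ⁻¹' D) := by
  refine (hL.union hD).of_isClosed_subset (hD.isClosed.preimage hg) fun x hx => ?_
  have hxA : x ∈ A := not_not.1 fun h => hp (by simpa only [mem_preimage, hconst h] using hx)
  refine or_iff_not_imp_left.2 fun hxL => ?_
  simpa only [mem_preimage, hid ⟨hxA, hxL⟩, id] using hx

omit [TopologicalSpace X] [T2Space X] in
lemma preimage_singleton_of_eqOn_const_of_eqOn_id (hconst : EqOn g (fun _ => p) Aᶜ)
    (hid : EqOn g id (A \ L)) {y : X} (hy : y ∉ L ∪ g '' L ∪ {p}) : g ⁻¹' {y} = {y} ∩ A := by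
  simp only [mem_union, mem_singleton_iff, not_or] at hy
  obtain ⟨⟨hyL, hygL⟩, hyp⟩ := hy
  refine Subset.antisymm (fun x hx => ?_) ?_
  · have hxA : x ∈ A := not_not.1 fun h => hyp (hx.symm.trans (hconst h))
    exact ⟨(hid ⟨hxA, fun h => hygL ⟨x, h, hx⟩⟩).symm.trans hx, hxA⟩
  · rintro _ ⟨rfl, hA⟩
    exact hid ⟨hA, hyL⟩

lemma isLocalHomeomorphOn_fiber_of_eqOn_const_of_eqOn_id (hA : IsOpen A) (hL : IsCompact L)
    (hconst : EqOn g (fun _ => p) Aᶜ) (hid : EqOn g id (A \ L)) {y : X}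
    (hy : y ∉ L ∪ g '' L ∪ {p}) : IsLocalHomeomorphOn g (g ⁻¹' {y}) := by
  refine isLocalHomeomorphOn_of_eqOn_isOpen
    (Homeomorph.refl X).isLocalHomeomorph.isLocalHomeomorphOn (hA.sdiff hL.isClosed) ?_ hid
  rw [preimage_singleton_of_eqOn_const_of_eqOn_id hconst hid hy]
  rintro _ ⟨rfl, hyA⟩
  exact ⟨hyA, fun h => hy (.inl (.inl h))⟩

end EqOnIdConst

theorem isCompact_closure_or_of_disjoint_of_frontier_subset {E : Type*} [NormedAddCommGroup E]
    [NormedSpace ℝ E] [FiniteDimensional ℝ E] (hrank : 1 < Module.rank ℝ E) [ChartedSpace E X]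
    [T2Space X] [LocallyCompactSpace X] [ContractibleSpace X] {K A B : Set X} (hK : IsCompact K)
    (hA : IsOpen A) (hAK : frontier A ⊆ K) (hAB : Disjoint A B) :
    IsCompact (closure A) ∨ IsCompact (closure B) := by
  by_contra! hnoncompact
  obtain ⟨p, L, g, hL, hg, hconst, hid⟩ := exists_continuous_eqOn_const_compl_eqOn_id hK hAK
  have hQ : IsCompact (L ∪ g '' L ∪ {p}) := (hL.union (hL.image hg)).union isCompact_singleton
  obtain ⟨a, haA, ha⟩ := exists_mem_notMem_of_not_isCompact_closure hnoncompact.1 hQ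
  obtain ⟨b, hbB, hb⟩ := exists_mem_notMem_of_not_isCompact_closure hnoncompact.2 hQ
  have hparity : parity (g ⁻¹' {a}) = parity (g ⁻¹' {b}) := by
    refine parity_fiber_eq_of_isPreconnected E (S := {p}ᶜ) hg isOpen_compl_singleton
      (isPreconnected_compl_singleton_of_chartedSpace hrank p) (fun D hDp hD => ?_)
      (fun h => ha (.inr h)) (fun h => hb (.inr h))
      (isLocalHomeomorphOn_fiber_of_eqOn_const_of_eqOn_id hA hL hconst hid ha)
      (isLocalHomeomorphOn_fiber_of_eqOn_const_of_eqOn_id hA hL hconst hid hb)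
    exact isCompact_preimage_of_eqOn_const_of_eqOn_id hg hL hconst hid hD fun h => hDp h rfl
  have hfiber_a : g ⁻¹' {a} = {a} := by
    rw [preimage_singleton_of_eqOn_const_of_eqOn_id hconst hid ha]
    exact inter_eq_left.2 (singleton_subset_iff.2 haA)
  have hfiber_b : g ⁻¹' {b} = ∅ := by
    rw [preimage_singleton_of_eqOn_const_of_eqOn_id hconst hid hb]
    exact singleton_inter_eq_empty.2 fun h => disjoint_left.1 hAB h hbB
  rw [hfiber_a, hfiber_b, parity_singleton] at hparity
  simp [parity] at hparity

end Ends

end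

/-- **Lemma 2.1.** A connected, noncompact, contractible topological manifold (without
boundary) of dimension at least 2 has exactly one end. -/
theorem contractible_hasOneEnd
    (n : ℕ) (hn : 2 ≤ n) (M : Type*) [TopologicalSpace M] [T2Space M]
    [ChartedSpace (EuclideanSpace ℝ (Fin n)) M]
    [ConnectedSpace M] [NoncompactSpace M] [ContractibleSpace M] :
    HasOneEnd M := by
  have : LocallyCompactSpace M := ChartedSpace.locallyCompactSpace (EuclideanSpace ℝ (Fin n)) M
  have : LocallyConnectedSpace M := ChartedSpace.locallyConnectedSpace (EuclideanSpace ℝ (Fin n)) M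
  have hrank : 1 < Module.rank ℝ (EuclideanSpace ℝ (Fin n)) := by
    rw [← Module.finrank_eq_rank, finrank_euclideanSpace_fin]
    exact_mod_cast hn
  intro K hK
  obtain ⟨x, hx, hxc⟩ := exists_not_isCompact_closure_connectedComponentIn_compl hK
  refine ⟨_, ⟨⟨x, hx, rfl⟩, hxc⟩, ?_⟩
  rintro _ ⟨⟨y, -, rfl⟩, hyc⟩
  by_contra hne
  have hdisj : Disjoint (connectedComponentIn Kᶜ y) (connectedComponentIn Kᶜ x) :=
    Set.disjoint_left.2 fun z hzy hzx =>
      hne ((connectedComponentIn_eq hzy).trans (connectedComponentIn_eq hzx).symm)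
  exact (isCompact_closure_or_of_disjoint_of_frontier_subset hrank hK
    hK.isClosed.isOpen_compl.connectedComponentIn
    (frontier_connectedComponentIn_compl_subset hK.isClosed y) hdisj).elim hyc hxc
end

section
/- Let M be the interior of a handlebody of genus γ, and let Ω₁ ⋐ Ω₂ ⋐ ⋯ ⋐ M be a C¹ exhaustion of M such that each Ω_i and each complement M ∖ Ω_i is connected. Then for all sufficiently large i, the genus of the surface ∂Ω_i is at least γ. -/
/-- `A ⋐ B` : the closure of `A` is compact and contained in the interior of `B`. -/
def CptSub {M : Type*} [TopologicalSpace M] (A B : Set M) : Prop :=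
  IsCompact (closure A) ∧ closure A ⊆ interior B

/-- The standard planar domain with `γ` holes: the open unit disk in `ℂ ≅ ℝ²` with `γ`
disjoint closed round disks removed.  It is a (non-compact) model for the interior of a
disk with `γ` holes. -/
def planarDomain (γ : ℕ) : Set ℂ :=
  Metric.ball 0 1 \
    ⋃ k ∈ Finset.range γ, Metric.closedBall ((((2 * k + 1 : ℝ)) / γ - 1 : ℝ) : ℂ) (1 / (4 * γ))

/-- A concrete model of the interior of the handlebody of genus `γ` (the compact
orientable 3-manifold obtained by attaching `γ` one-handles to a closed 3-ball): since
the genus-`γ` handlebody is diffeomorphic to `P × [0,1]` where `P` is a closed disk with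
`γ` holes, its interior is diffeomorphic to `planarDomain γ × ℝ`, realized here as an
open subset of `ℂ × ℝ ≅ ℝ³`. -/
def openHandlebody (γ : ℕ) : Set (ℂ × ℝ) :=
  (planarDomain γ) ×ˢ (Set.univ : Set ℝ)

/-- A concrete model of the closed orientable surface of genus `γ` : the topological
boundary of the solid `P̄ × [0,1]`, where `P` is the standard planar domain with `γ`
holes.  (`P̄ × [0,1]` is a genus-`γ` handlebody, so its boundary is the genus-`γ`
surface.) -/
def genusSurface (γ : ℕ) : Set (ℂ × ℝ) :=
  frontier ((planarDomain γ) ×ˢ Set.Ioo (0 : ℝ) 1)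

/-- `E` is a `C¹` domain in (an open subset of) `ℂ × ℝ ≅ ℝ³` : `E` is open and near each
boundary point the boundary admits a `C¹` local defining function with nonvanishing
differential. -/
def IsC1DomainAmbient (E : Set (ℂ × ℝ)) : Prop :=
  IsOpen E ∧ ∀ x ∈ frontier E, ∃ U : Set (ℂ × ℝ), IsOpen U ∧ x ∈ U ∧
    ∃ f : ℂ × ℝ → ℝ, ContDiffOn ℝ 1 f U ∧ (∀ y ∈ U, fderiv ℝ f y ≠ 0) ∧
      E ∩ U = {y ∈ U | f y < 0}

/-!
Nowhere zero continuous functions modulo those with a continuous logarithm form the Bruschlinsky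
group, isomorphic to `H¹(·; ℤ)`. On the surface of genus `γ'` it is generated by `2 γ'` classes:
the functions `z - c` for the centres `c` of the holes, and a twist of the top face for each hole.

Once `Ω` contains a circle around each of the `γ` holes of the handlebody, `∂Ω` carries `2 γ`
independent classes. The functions `z - c` are nowhere zero on the closure of `Ω` and are detected
by these circles; the linking numbers with the circles are given by functions that are nowhere zero
off `Ω` and are detected by the vertical axes of the holes, closed up at infinity. As `ℝ³` has no
first cohomology, Mayer–Vietoris for `closure Ω` and `Ωᶜ` separates the two families on `∂Ω`. Hence
`2 γ ≤ 2 γ'`.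
-/

open Set Topology unitInterval

section HasLogOn

variable {X Y : Type*} [TopologicalSpace X] [TopologicalSpace Y]

/-- `f` has a continuous logarithm on `S`. For nowhere zero continuous `f` this says that the class
of `f` in the Bruschlinsky group `[S, ℂˣ] = H¹(S; ℤ)` vanishes. -/
def HasLogOn (f : X → ℂ) (S : Set X) : Prop :=
  ∃ u : X → ℂ, ContinuousOn u S ∧ ∀ x ∈ S, Complex.exp (u x) = f x

namespace HasLogOn

variable {f g : X → ℂ} {S T : Set X}

theorem mono (hf : HasLogOn f T) (hST : S ⊆ T) : HasLogOn f S :=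
  let ⟨u, hu, hexp⟩ := hf
  ⟨u, hu.mono hST, fun x hx => hexp x (hST hx)⟩

theorem congr (hf : HasLogOn f S) (hfg : EqOn f g S) : HasLogOn g S :=
  let ⟨u, hu, hexp⟩ := hf
  ⟨u, hu, fun x hx => (hexp x hx).trans (hfg hx)⟩

theorem comp {φ : Y → X} {T : Set Y} (hf : HasLogOn f S) (hφ : ContinuousOn φ T)
    (hTS : MapsTo φ T S) : HasLogOn (f ∘ φ) T :=
  let ⟨u, hu, hexp⟩ := hf
  ⟨u ∘ φ, hu.comp hφ hTS, fun y hy => hexp (φ y) (hTS hy)⟩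

theorem exp {u : X → ℂ} (hu : ContinuousOn u S) : HasLogOn (fun x => Complex.exp (u x)) S :=
  ⟨u, hu, fun _ _ => rfl⟩

theorem of_mem_slitPlane (hf : ContinuousOn f S) (h : ∀ x ∈ S, f x ∈ Complex.slitPlane) :
    HasLogOn f S :=
  ⟨fun x => Complex.log (f x), hf.clog h,
    fun x hx => Complex.exp_log (Complex.slitPlane_ne_zero (h x hx))⟩

theorem mul (hf : HasLogOn f S) (hg : HasLogOn g S) : HasLogOn (fun x => f x * g x) S := by
  obtain ⟨u, hu, hu_exp⟩ := hf
  obtain ⟨v, hv, hv_exp⟩ := hg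
  exact ⟨u + v, hu.add hv, fun x hx => by
    rw [Pi.add_apply, Complex.exp_add, hu_exp x hx, hv_exp x hx]⟩

theorem zpow (hf : HasLogOn f S) (n : ℤ) : HasLogOn (fun x => f x ^ n) S := by
  obtain ⟨u, hu, hexp⟩ := hf
  exact ⟨fun x => n * u x, continuousOn_const.mul hu, fun x hx => by
    rw [Complex.exp_int_mul, hexp x hx]⟩

theorem prod {ι : Type*} {s : Finset ι} {f : ι → X → ℂ} (hf : ∀ i ∈ s, HasLogOn (f i) S) :
    HasLogOn (fun x => ∏ i ∈ s, f i x) S := by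
  classical
  induction s using Finset.induction_on with
  | empty => exact ⟨0, continuousOn_const, by simp⟩
  | insert i s hi ih =>
    simp only [Finset.prod_insert hi]
    exact (hf i (Finset.mem_insert_self i s)).mul
      (ih fun j hj => hf j (Finset.mem_insert_of_mem hj))

theorem of_mul_right (hfg : HasLogOn (fun x => f x * g x) S) (hg : HasLogOn g S) :
    HasLogOn f S := by
  have hg_ne : ∀ x ∈ S, g x ≠ 0 := by
    obtain ⟨v, -, hexp⟩ := hg
    exact fun x hx => hexp x hx ▸ Complex.exp_ne_zero (v x)
  refine (hfg.mul (hg.zpow (-1))).congr fun x hx => ?_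
  simp only [zpow_neg_one, mul_inv_cancel_right₀ (hg_ne x hx)]

theorem of_prod {ι : Type*} [Fintype ι] {f : ι → X → ℂ} (h : HasLogOn (fun x => ∏ i, f i x) S)
    (k : ι) (hf : ∀ j, j ≠ k → HasLogOn (f j) S) : HasLogOn (f k) S := by
  classical
  refine of_mul_right (g := fun x => ∏ j ∈ Finset.univ.erase k, f j x) ?_
    (prod fun j hj => hf j (Finset.ne_of_mem_erase hj))
  exact h.congr fun x _ => (Finset.mul_prod_erase _ (f · x) (Finset.mem_univ k)).symm

theorem union {u v : X → ℂ} (hS : IsClosed S) (hT : IsClosed T) (hu : ContinuousOn u S)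
    (hv : ContinuousOn v T) (hu_exp : ∀ x ∈ S, Complex.exp (u x) = f x)
    (hv_exp : ∀ x ∈ T, Complex.exp (v x) = f x) (huv : EqOn u v (S ∩ T)) :
    HasLogOn f (S ∪ T) := by
  classical
  have hw_right : EqOn (S.piecewise u v) v T := fun x hx => by
    by_cases hxS : x ∈ S
    · rw [piecewise_eq_of_mem _ _ _ hxS, huv ⟨hxS, hx⟩]
    · exact piecewise_eq_of_notMem _ _ _ hxS
  have hw_left : EqOn (S.piecewise u v) u S := piecewise_eqOn S u v
  refine ⟨S.piecewise u v, (hu.congr hw_left).union_of_isClosed (hv.congr hw_right) hS hT, ?_⟩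
  rintro x (hx | hx)
  · rw [hw_left hx, hu_exp x hx]
  · rw [hw_right hx, hv_exp x hx]

theorem iUnion {ι : Type*} [Finite ι] {S : ι → Set X} (hS : ∀ i, IsClosed (S i))
    (hdisj : Pairwise (Function.onFun Disjoint S)) (hf : ∀ i, HasLogOn f (S i)) :
    HasLogOn f (⋃ i, S i) := by
  choose u hu hexp using hf
  let w : X → ℂ := fun x => by
    classical exact if hx : ∃ i, x ∈ S i then u hx.choose x else 0
  have hw : ∀ i, EqOn w (u i) (S i) := fun i x hx => by
    have hx' : ∃ j, x ∈ S j := ⟨i, hx⟩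
    have hi : hx'.choose = i := by
      by_contra hne
      exact (hdisj hne).notMem_of_mem_left hx'.choose_spec hx
    simp only [w, dif_pos hx', hi]
  refine ⟨w, (locallyFinite_of_finite S).continuousOn_iUnion hS fun i => (hu i).congr (hw i), ?_⟩
  intro x hx
  obtain ⟨i, hi⟩ := mem_iUnion.1 hx
  rw [hw i hi, hexp i x hi]

theorem exists_extension [NormalSpace X] (hS : IsClosed S) (hf : HasLogOn f S) :
    ∃ v : X → ℂ, Continuous v ∧ ∀ x ∈ S, Complex.exp (v x) = f x := by
  obtain ⟨u, hu, hexp⟩ := hf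
  obtain ⟨v, hv⟩ := ContinuousMap.exists_restrict_eq hS ⟨S.domRestrict u, hu.domRestrict⟩
  refine ⟨v, v.continuous, fun x hx => ?_⟩
  have hvu : v x = u x := congr_arg (fun k => k ⟨x, hx⟩) hv
  rw [hvu, hexp x hx]

end HasLogOn

theorem sub_eq_sub_of_exp_eq_exp {S : Set X} (hS : IsPreconnected S) {u v : X → ℂ}
    (hu : ContinuousOn u S) (hv : ContinuousOn v S)
    (h : ∀ x ∈ S, Complex.exp (u x) = Complex.exp (v x)) {x y : X} (hx : x ∈ S) (hy : y ∈ S) :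
    u x - v x = u y - v y := by
  refine Complex.isCoveringMap_exp.constOn_of_comp hS (hu.sub hv) (fun a ha b hb => ?_) hx hy
  simp [Complex.exp_sub, h a ha, h b hb]

theorem exists_forall_eq_add_two_pi_mul_int {S : Set X} (hS : IsPreconnected S) {u v : X → ℂ}
    (hu : ContinuousOn u S) (hv : ContinuousOn v S)
    (h : ∀ x ∈ S, Complex.exp (u x) = Complex.exp (v x)) :
    ∃ n : ℤ, ∀ x ∈ S, u x = v x + n * (2 * Real.pi * Complex.I) := by
  rcases S.eq_empty_or_nonempty with rfl | ⟨y, hy⟩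
  · exact ⟨0, by simp⟩
  obtain ⟨n, hn⟩ := Complex.exp_eq_exp_iff_exists_int.1 (h y hy)
  refine ⟨n, fun x hx => ?_⟩
  linear_combination sub_eq_sub_of_exp_eq_exp hS hu hv h hx hy + hn

theorem exists_continuous_log_homotopy {f : I × X → ℂ} (hf : Continuous f) (hf₀ : ∀ p, f p ≠ 0)
    {u₀ : X → ℂ} (hu₀ : Continuous u₀) (hexp : ∀ x, Complex.exp (u₀ x) = f (0, x)) :
    ∃ u : I × X → ℂ, Continuous u ∧ (∀ p, Complex.exp (u p) = f p) ∧ ∀ x, u (0, x) = u₀ x := by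
  let H : C(I × X, {z : ℂ // z ≠ 0}) := ⟨fun p => ⟨f p, hf₀ p⟩, by fun_prop⟩
  have hH : ∀ x, H (0, x) = (⟨_, (u₀ x).exp_ne_zero⟩ : {z : ℂ // z ≠ 0}) :=
    fun x => Subtype.ext (hexp x).symm
  let L := Complex.isCoveringMap_exp.liftHomotopy H ⟨u₀, hu₀⟩ hH
  refine ⟨L, L.continuous, fun p => ?_,
    fun x => Complex.isCoveringMap_exp.liftHomotopy_zero H ⟨u₀, hu₀⟩ hH x⟩
  exact congr_arg Subtype.val
    (congr_fun (Complex.isCoveringMap_exp.liftHomotopy_lifts H ⟨u₀, hu₀⟩ hH) p)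

theorem exists_continuousOn_extend [Nonempty Y] {S : Set X} {w : S → Y} (hw : Continuous w) :
    ∃ u : X → Y, ContinuousOn u S ∧ ∀ x : S, u x = w x := by
  let y : Y := Classical.arbitrary Y
  have h : ∀ x : S, Function.extend Subtype.val w (fun _ => y) x = w x :=
    Subtype.val_injective.extend_apply w _
  refine ⟨Function.extend Subtype.val w fun _ => y, ?_, h⟩
  rw [continuousOn_iff_continuous_domRestrict]
  exact hw.congr fun x => (h x).symm

theorem hasLogOn_of_contractibleSpace {f : X → ℂ} {S : Set X} [ContractibleSpace S]
    (hf : ContinuousOn f S) (hf₀ : ∀ x ∈ S, f x ≠ 0) : HasLogOn f S := by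
  obtain ⟨p, ⟨H⟩⟩ := id_nullhomotopic S
  obtain ⟨u, hu, hexp, -⟩ := exists_continuous_log_homotopy (f := fun q => f (H.symm q))
    (u₀ := fun _ => Complex.log (f p)) (hf.comp_continuous (by fun_prop) fun q => (H.symm q).2)
    (fun q => hf₀ _ (H.symm q).2) continuous_const
    (fun x => by simpa using Complex.exp_log (hf₀ p p.2))
  obtain ⟨v, hv, hvu⟩ := exists_continuousOn_extend (w := fun x : S => u (1, x)) (by fun_prop)
  refine ⟨v, hv, fun x hx => ?_⟩
  rw [hvu ⟨x, hx⟩, hexp]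
  simp

/-- Exactness of `H¹(S ∪ T) → H¹(S) ⊕ H¹(T) → H¹(S ∩ T)`, the first group being zero. -/
theorem HasLogOn.left_and_right_of_mul_inter [NormalSpace X] {f g : X → ℂ} {S T : Set X}
    [ContractibleSpace ↥(S ∪ T)] (hS : IsClosed S) (hT : IsClosed T) (hf : ContinuousOn f S)
    (hf₀ : ∀ x ∈ S, f x ≠ 0) (hg : ContinuousOn g T) (hg₀ : ∀ x ∈ T, g x ≠ 0)
    (h : HasLogOn (fun x => f x * g x) (S ∩ T)) : HasLogOn f S ∧ HasLogOn g T := by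
  classical
  obtain ⟨v, hv, hexp⟩ := h.exists_extension (hS.inter hT)
  let F : X → ℂ := S.piecewise f fun x => Complex.exp (v x) * (g x)⁻¹
  have hFS : EqOn F f S := piecewise_eqOn S _ _
  have hFT : EqOn F (fun x => Complex.exp (v x) * (g x)⁻¹) T := fun x hx => by
    by_cases hxS : x ∈ S
    · simp only [hFS hxS, hexp x ⟨hxS, hx⟩, mul_inv_cancel_right₀ (hg₀ x hx)]
    · exact piecewise_eq_of_notMem _ _ _ hxS
  have hF : ContinuousOn F (S ∪ T) := (hf.congr hFS).union_of_isClosed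
    (((by fun_prop : ContinuousOn (fun x => Complex.exp (v x)) T).mul (hg.inv₀ hg₀)).congr hFT)
    hS hT
  have hF₀ : ∀ x ∈ S ∪ T, F x ≠ 0 := by
    rintro x (hx | hx)
    · exact hFS hx ▸ hf₀ x hx
    · exact hFT hx ▸ mul_ne_zero (Complex.exp_ne_zero _) (inv_ne_zero (hg₀ x hx))
  have hFlog : HasLogOn F (S ∪ T) := hasLogOn_of_contractibleSpace hF hF₀
  refine ⟨(hFlog.mono subset_union_left).congr hFS, ?_⟩
  refine ((HasLogOn.exp hv.continuousOn).mul
    ((hFlog.mono subset_union_right).zpow (-1))).congr fun x hx => ?_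
  simp [hFT hx, mul_left_comm]

theorem hasLogOn_of_convex {E : Type*} [AddCommGroup E] [Module ℝ E] [TopologicalSpace E]
    [IsTopologicalAddGroup E] [ContinuousSMul ℝ E] {f : E → ℂ} {S : Set E} (hS : Convex ℝ S)
    (hf : ContinuousOn f S) (hf₀ : ∀ x ∈ S, f x ≠ 0) : HasLogOn f S := by
  rcases S.eq_empty_or_nonempty with rfl | hne
  · exact ⟨0, continuousOn_const, by simp⟩
  have := hS.contractibleSpace hne
  exact hasLogOn_of_contractibleSpace hf hf₀

end HasLogOn

section Circle

variable {c : ℂ} {r : ℝ}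

theorem hasLogOn_sub_const_closedBall {a : ℂ} (h : r < dist c a) :
    HasLogOn (fun z => z - a) (Metric.closedBall c r) :=
  hasLogOn_of_convex (convex_closedBall c r) (by fun_prop) fun z hz hza => by
    rw [sub_eq_zero.1 hza, Metric.mem_closedBall, dist_comm] at hz
    exact absurd hz (not_le.2 h)

theorem circleMap_sub_center_zpow (hr : 0 < r) (θ : ℝ) (n : ℤ) :
    (circleMap c r θ - c) ^ n = Complex.exp (n * Real.log r + n * Complex.I * θ) := by
  have hr_exp : Complex.exp (Real.log r) = r := by rw [← Complex.ofReal_exp, Real.exp_log hr]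
  rw [circleMap_sub_center, circleMap_zero, ← hr_exp, ← Complex.exp_add, ← Complex.exp_int_mul]
  ring_nf

theorem eq_zero_of_hasLogOn_sub_center_zpow (hr : 0 < r) {n : ℤ}
    (h : HasLogOn (fun z => (z - c) ^ n) (Metric.sphere c r)) : n = 0 := by
  obtain ⟨u, hu, hexp⟩ := h
  have hmem : ∀ θ, circleMap c r θ ∈ Metric.sphere c r := circleMap_mem_sphere c hr.le
  have hsub := sub_eq_sub_of_exp_eq_exp isPreconnected_univ (u := fun θ : ℝ => u (circleMap c r θ))
    (v := fun θ => n * Real.log r + n * Complex.I * θ)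
    (hu.comp_continuous (continuous_circleMap c r) hmem).continuousOn (by fun_prop)
    (fun θ _ => (hexp _ (hmem θ)).trans (circleMap_sub_center_zpow hr θ n))
    (mem_univ (2 * Real.pi)) (mem_univ 0)
  have hperiod : circleMap c r (2 * Real.pi) = circleMap c r 0 := by
    simpa using periodic_circleMap c r 0
  simp only [hperiod] at hsub
  push_cast at hsub
  have : (n : ℂ) * (Complex.I * (2 * Real.pi)) = 0 := by linear_combination -hsub
  simpa [Real.pi_ne_zero] using this

theorem circleMap_arg_sub {z : ℂ} (hz : z ∈ Metric.sphere c r) :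
    circleMap c r (Complex.arg (z - c)) = z := by
  rw [circleMap, ← mem_sphere_iff_norm.1 hz, Complex.norm_mul_exp_arg_mul_I, add_sub_cancel]

/-- The periodic function descends to the circle through the continuous `Real.Angle`-valued
argument. -/
theorem continuousOn_comp_arg_sub_of_periodic (hr : r ≠ 0) {v : ℝ → ℂ} (hv : Continuous v)
    (hper : Function.Periodic v (2 * Real.pi)) :
    ContinuousOn (fun z => v (Complex.arg (z - c))) (Metric.sphere c r) := by
  have hlift : Continuous (hper.lift : Real.Angle → ℂ) := continuous_quot_lift _ hv
  intro z hz
  have hz : z - c ≠ 0 := sub_ne_zero.2 (Metric.ne_of_mem_sphere hz hr)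
  exact (hlift.continuousAt.comp ((Complex.continuousAt_arg_coe_angle hz).comp
    (f := fun z => z - c) (by fun_prop))).continuousWithinAt

theorem exists_hasLogOn_mul_sub_center_zpow (hr : 0 < r) {f : ℂ → ℂ}
    (hf : ContinuousOn f (Metric.sphere c r)) (hf₀ : ∀ z ∈ Metric.sphere c r, f z ≠ 0) :
    ∃ n : ℤ, HasLogOn (fun z => f z * (z - c) ^ n) (Metric.sphere c r) := by
  have hmem : ∀ θ, circleMap c r θ ∈ Metric.sphere c r := circleMap_mem_sphere c hr.le
  have hper := periodic_circleMap c r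
  obtain ⟨g, hg, hg_exp⟩ := hasLogOn_of_convex (f := fun θ : ℝ => f (circleMap c r θ)) convex_univ
    (hf.comp_continuous (continuous_circleMap c r) hmem).continuousOn fun θ _ => hf₀ _ (hmem θ)
  rw [continuousOn_univ] at hg
  obtain ⟨n, hn⟩ := exists_forall_eq_add_two_pi_mul_int isPreconnected_univ
    (u := fun θ => g (θ + 2 * Real.pi)) (v := g) (by fun_prop) (by fun_prop)
    (fun θ _ => by simp only [hg_exp _ trivial, hper θ])
  let v : ℝ → ℂ := fun θ => g θ + ((-n : ℤ) * Real.log r + (-n : ℤ) * Complex.I * θ)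
  have hv_per : Function.Periodic v (2 * Real.pi) := fun θ => by
    simp only [v, hn θ trivial]
    push_cast
    ring
  refine ⟨-n, fun z => v (Complex.arg (z - c)),
    continuousOn_comp_arg_sub_of_periodic hr.ne' (by fun_prop) hv_per, fun z hz => ?_⟩
  have h := circleMap_sub_center_zpow (c := c) hr (Complex.arg (z - c)) (-n)
  rw [circleMap_arg_sub hz] at h
  simp only [v]
  rw [Complex.exp_add (g _), hg_exp _ trivial, ← h]
  simp only [circleMap_arg_sub hz]

end Circle

section PlanarDomain

theorem interior_iUnion_of_pairwise_disjoint_isClosed {X ι : Type*} [TopologicalSpace X] [Finite ι]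
    {S : ι → Set X} (hS : ∀ i, IsClosed (S i)) (hdisj : Pairwise (Function.onFun Disjoint S)) :
    interior (⋃ i, S i) = ⋃ i, interior (S i) := by
  refine Subset.antisymm (fun x hx => ?_)
    (iUnion_subset fun i => interior_mono (subset_iUnion S i))
  obtain ⟨i, hi⟩ := mem_iUnion.1 (interior_subset hx)
  refine mem_iUnion.2 ⟨i, mem_interior_iff_mem_nhds.2 ?_⟩
  have hU : (⋃ j : {j // j ≠ i}, S j)ᶜ ∈ 𝓝 x := by
    refine (isClosed_iUnion_of_finite fun j : {j // j ≠ i} => hS j).compl_mem_nhds ?_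
    simp only [mem_iUnion, not_exists]
    exact fun j => (hdisj j.2.symm).notMem_of_mem_left hi
  filter_upwards [mem_interior_iff_mem_nhds.1 hx, hU] with y hy hyU
  obtain ⟨j, hj⟩ := mem_iUnion.1 hy
  by_contra hyi
  exact hyU (mem_iUnion.2 ⟨⟨j, fun hji => hyi (hji ▸ hj)⟩, hj⟩)

/-- The centre of the `k`-th hole of `planarDomain γ`. -/
noncomputable def holeCenter (γ k : ℕ) : ℂ := ((2 * k + 1 : ℝ) / γ - 1 : ℝ)

/-- The common radius of the holes of `planarDomain γ`. -/
noncomputable def holeRadius (γ : ℕ) : ℝ := 1 / (4 * γ)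

theorem planarDomain_eq (γ : ℕ) : planarDomain γ =
    Metric.ball 0 1 \ ⋃ k : Fin γ, Metric.closedBall (holeCenter γ k) (holeRadius γ) := by
  ext z
  simp only [planarDomain, mem_sdiff, mem_iUnion, Finset.mem_range, holeCenter, holeRadius,
    not_exists]
  exact and_congr_right fun _ => ⟨fun h k => h k k.2, fun h k hk => h ⟨k, hk⟩⟩

theorem isOpen_planarDomain (γ : ℕ) : IsOpen (planarDomain γ) := by
  rw [planarDomain_eq]
  exact Metric.isOpen_ball.sdiff (isClosed_iUnion_of_finite fun _ => Metric.isClosed_closedBall)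

variable {γ : ℕ}

theorem holeRadius_pos (k : Fin γ) : 0 < holeRadius γ := by
  have : 0 < (γ : ℝ) := by exact_mod_cast k.pos
  unfold holeRadius
  positivity

theorem norm_holeCenter_le (k : Fin γ) : ‖holeCenter γ k‖ ≤ 1 - 4 * holeRadius γ := by
  have hγ : 0 < (γ : ℝ) := by exact_mod_cast k.pos
  have hk : (k : ℝ) + 1 ≤ γ := by exact_mod_cast k.2
  have hr : 4 * holeRadius γ = 1 / γ := by unfold holeRadius; field_simp
  rw [holeCenter, Complex.norm_real, Real.norm_eq_abs, abs_le, hr]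
  constructor <;> rw [← sub_nonneg] <;> field_simp <;> linarith [(k : ℕ).cast_nonneg (α := ℝ)]

theorem le_dist_holeCenter {j k : Fin γ} (hjk : j ≠ k) :
    8 * holeRadius γ ≤ dist (holeCenter γ j) (holeCenter γ k) := by
  have : 0 < (γ : ℝ) := by exact_mod_cast k.pos
  have hsub : holeCenter γ j - holeCenter γ k = (8 * holeRadius γ * ((j : ℤ) - k : ℤ) : ℝ) := by
    unfold holeCenter holeRadius
    push_cast
    field_simp
    ring
  have hone : (1 : ℝ) ≤ |((j : ℤ) - k : ℤ)| := by
    rw [← Int.cast_one, Int.cast_le]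
    exact Int.one_le_abs (sub_ne_zero.2 (by simpa using Fin.val_ne_of_ne hjk))
  rw [dist_eq_norm, hsub, Complex.norm_real, Real.norm_eq_abs, abs_mul,
    abs_of_pos (by linarith [holeRadius_pos k]), ← Int.cast_abs]
  exact le_mul_of_one_le_right (by linarith [holeRadius_pos k]) hone

theorem closedBall_holeCenter_subset_ball {ρ : ℝ} (k : Fin γ) (hρ : ρ < 4 * holeRadius γ) :
    Metric.closedBall (holeCenter γ k) ρ ⊆ Metric.ball 0 1 :=
  Metric.closedBall_subset_ball' (by
    rw [dist_zero_right]
    linarith [norm_holeCenter_le k])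

theorem disjoint_closedBall_holeCenter {ρ ρ' : ℝ} {j k : Fin γ} (hjk : j ≠ k)
    (hρ : ρ + ρ' < 8 * holeRadius γ) :
    Disjoint (Metric.closedBall (holeCenter γ j) ρ) (Metric.closedBall (holeCenter γ k) ρ') :=
  Metric.closedBall_disjoint_closedBall (hρ.trans_le (le_dist_holeCenter hjk))

theorem pairwise_disjoint_hole : Pairwise (Function.onFun Disjoint fun k : Fin γ =>
    Metric.closedBall (holeCenter γ k) (holeRadius γ)) :=
  fun j _ hjk => disjoint_closedBall_holeCenter hjk (by linarith [holeRadius_pos j])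

theorem closure_planarDomain (γ : ℕ) : closure (planarDomain γ) =
    Metric.closedBall 0 1 \ ⋃ k : Fin γ, Metric.ball (holeCenter γ k) (holeRadius γ) := by
  have hclosed : IsClosed (⋃ k : Fin γ, Metric.closedBall (holeCenter γ k) (holeRadius γ)) :=
    isClosed_iUnion_of_finite fun _ => Metric.isClosed_closedBall
  have hinterior : interior (⋃ k : Fin γ, Metric.closedBall (holeCenter γ k) (holeRadius γ)) =
      ⋃ k : Fin γ, Metric.ball (holeCenter γ k) (holeRadius γ) := by
    rw [interior_iUnion_of_pairwise_disjoint_isClosed (fun _ => Metric.isClosed_closedBall)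
      pairwise_disjoint_hole]
    exact iUnion_congr fun k => interior_closedBall _ (holeRadius_pos k).ne'
  have hdisj : Disjoint (Metric.ball (0 : ℂ) 1)ᶜ
      (⋃ k : Fin γ, Metric.closedBall (holeCenter γ k) (holeRadius γ)) :=
    disjoint_compl_left_iff_subset.2 (iUnion_subset fun k =>
      closedBall_holeCenter_subset_ball k (by linarith [holeRadius_pos k]))
  rw [planarDomain_eq, ← compl_compl (_ \ _), closure_compl, sdiff_eq, compl_inter, compl_compl,
    interior_union_of_disjoint_closure, interior_compl, closure_ball _ one_ne_zero, hinterior,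
    compl_union, compl_compl, sdiff_eq]
  rwa [hclosed.closure_eq, Metric.isOpen_ball.isClosed_compl.closure_eq]

theorem holeRadius_le_dist {z : ℂ} (hz : z ∈ closure (planarDomain γ)) (k : Fin γ) :
    holeRadius γ ≤ dist z (holeCenter γ k) := by
  rw [closure_planarDomain] at hz
  exact not_lt.1 fun h => hz.2 (mem_iUnion.2 ⟨k, h⟩)

theorem sub_holeCenter_ne_zero {z : ℂ} (hz : z ∈ closure (planarDomain γ)) (k : Fin γ) :
    z - holeCenter γ k ≠ 0 := by
  rw [← norm_pos_iff, ← dist_eq_norm]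
  exact (holeRadius_pos k).trans_le (holeRadius_le_dist hz k)

theorem frontier_planarDomain (γ : ℕ) : frontier (planarDomain γ) =
    Metric.sphere 0 1 ∪ ⋃ k : Fin γ, Metric.sphere (holeCenter γ k) (holeRadius γ) := by
  have hsub : ∀ {k : Fin γ} {z : ℂ}, dist z (holeCenter γ k) = holeRadius γ → dist z 0 < 1 :=
    fun {k} z hz => closedBall_holeCenter_subset_ball k (by linarith [holeRadius_pos k]) hz.le
  have hdist : ∀ {k : Fin γ} {z : ℂ}, dist z (holeCenter γ k) = holeRadius γ →
      ∀ j : Fin γ, holeRadius γ ≤ dist z (holeCenter γ j) := fun {k} z hz j => by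
    by_contra! hj
    rcases eq_or_ne j k with rfl | hjk
    · exact hj.ne hz
    · exact (pairwise_disjoint_hole hjk).notMem_of_mem_left hj.le hz.le
  rw [(isOpen_planarDomain γ).frontier_eq, closure_planarDomain, planarDomain_eq]
  ext z
  simp only [mem_sdiff, mem_union, mem_iUnion, Metric.mem_closedBall, Metric.mem_ball,
    Metric.mem_sphere, not_exists, not_lt, not_and, not_forall, not_not]
  constructor
  · rintro ⟨⟨hle, hge⟩, hz⟩
    refine hle.eq_or_lt.imp_right fun hlt => ?_
    obtain ⟨k, hk⟩ := hz hlt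
    exact ⟨k, le_antisymm hk (hge k)⟩
  · rintro (hz | ⟨k, hz⟩)
    · refine ⟨⟨hz.le, fun j => ?_⟩, fun hlt => absurd hz hlt.ne⟩
      by_contra! hj
      exact hz.not_lt (closedBall_holeCenter_subset_ball j (by linarith [holeRadius_pos j]) hj.le)
    · exact ⟨⟨(hsub hz).le, hdist hz⟩, fun _ => ⟨k, le_of_eq hz⟩⟩

theorem sphere_subset_frontier_planarDomain (k : Fin γ) :
    Metric.sphere (holeCenter γ k) (holeRadius γ) ⊆ frontier (planarDomain γ) := by
  rw [frontier_planarDomain]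
  exact (subset_iUnion (fun j : Fin γ => Metric.sphere (holeCenter γ j) (holeRadius γ)) k).trans
    subset_union_right

theorem hasLogOn_closure_planarDomain {f : ℂ → ℂ} (hf : ContinuousOn f (closure (planarDomain γ)))
    (hf₀ : ∀ z ∈ closure (planarDomain γ), f z ≠ 0)
    (hlog : ∀ k : Fin γ, HasLogOn f (Metric.sphere (holeCenter γ k) (holeRadius γ))) :
    HasLogOn f (closure (planarDomain γ)) := by
  let T := ⋃ k : Fin γ, Metric.closedBall (holeCenter γ k) (holeRadius γ)
  have hT : IsClosed T := isClosed_iUnion_of_finite fun _ => Metric.isClosed_closedBall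
  have hunion : closure (planarDomain γ) ∪ T = Metric.closedBall 0 1 := by
    have hTball : T ⊆ Metric.closedBall 0 1 := iUnion_subset fun k =>
      (closedBall_holeCenter_subset_ball k (by linarith [holeRadius_pos k])).trans
        Metric.ball_subset_closedBall
    rw [closure_planarDomain]
    refine Subset.antisymm (union_subset sdiff_subset hTball) fun z hz => ?_
    refine or_iff_not_imp_right.2 fun hzT => ⟨hz, fun h => hzT ?_⟩
    exact iUnion_mono (fun _ => Metric.ball_subset_closedBall) h
  have hinter : closure (planarDomain γ) ∩ T =
      ⋃ k : Fin γ, Metric.sphere (holeCenter γ k) (holeRadius γ) := by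
    rw [inter_iUnion]
    refine iUnion_congr fun k => Subset.antisymm
      (fun z hz => le_antisymm hz.2 (holeRadius_le_dist hz.1 k)) fun z hz =>
      ⟨frontier_subset_closure (sphere_subset_frontier_planarDomain k hz), le_of_eq hz⟩
  have : ContractibleSpace ↥(closure (planarDomain γ) ∪ T) := by
    rw [hunion]
    exact (convex_closedBall 0 1).contractibleSpace (Metric.nonempty_closedBall.2 zero_le_one)
  refine (HasLogOn.left_and_right_of_mul_inter (g := fun _ => 1) isClosed_closure hT hf hf₀
    continuousOn_const (fun _ _ => one_ne_zero) ?_).1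
  simp only [mul_one, hinter]
  exact HasLogOn.iUnion (fun _ => Metric.isClosed_sphere) (fun j k hjk =>
    (pairwise_disjoint_hole hjk).mono Metric.sphere_subset_closedBall
      Metric.sphere_subset_closedBall) hlog

end PlanarDomain

section GenusSurface

theorem exists_log_prod_Icc {X : Type*} [TopologicalSpace X] {W : Set X} {f : X × ℝ → ℂ}
    {u₀ : X → ℂ} (hf : ContinuousOn f (W ×ˢ Icc 0 1)) (hf₀ : ∀ x ∈ W ×ˢ Icc 0 1, f x ≠ 0)
    (hu₀ : ContinuousOn u₀ W) (hexp : ∀ z ∈ W, Complex.exp (u₀ z) = f (z, 0)) :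
    ∃ u : X × ℝ → ℂ, ContinuousOn u (W ×ˢ Icc 0 1) ∧
      (∀ x ∈ W ×ˢ Icc 0 1, Complex.exp (u x) = f x) ∧ ∀ z ∈ W, u (z, 0) = u₀ z := by
  obtain ⟨v, hv, hv_exp, hv₀⟩ := exists_continuous_log_homotopy
    (f := fun p : I × W => f (p.2, p.1)) (u₀ := fun z => u₀ z)
    (hf.comp_continuous (by fun_prop) fun p => ⟨p.2.2, p.1.2⟩) (fun p => hf₀ _ ⟨p.2.2, p.1.2⟩)
    hu₀.domRestrict (fun z => hexp z z.2)
  obtain ⟨u, hu, huv⟩ := exists_continuousOn_extend (S := W ×ˢ Icc (0 : ℝ) 1)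
    (w := fun x => v (⟨x.1.2, x.2.2⟩, ⟨x.1.1, x.2.1⟩)) (by fun_prop)
  refine ⟨u, hu, fun x hx => ?_, fun z hz => ?_⟩
  · rw [huv ⟨x, hx⟩, hv_exp]
  · rw [huv ⟨(z, 0), hz, left_mem_Icc.2 zero_le_one⟩]
    exact hv₀ ⟨z, hz⟩

theorem hasLogOn_bottom_union_walls {X : Type*} [TopologicalSpace X] {S W : Set X}
    {f : X × ℝ → ℂ} (hS : IsClosed S) (hW : IsClosed W) (hWS : W ⊆ S)
    (hf : ContinuousOn f (W ×ˢ Icc 0 1)) (hf₀ : ∀ x ∈ W ×ˢ Icc 0 1, f x ≠ 0)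
    (hbottom : HasLogOn (fun z => f (z, 0)) S) : HasLogOn f (S ×ˢ {0} ∪ W ×ˢ Icc 0 1) := by
  obtain ⟨u₀, hu₀, hexp₀⟩ := hbottom
  obtain ⟨u, hu, hexp, huu₀⟩ :=
    exists_log_prod_Icc hf hf₀ (hu₀.mono hWS) fun z hz => hexp₀ z (hWS hz)
  refine HasLogOn.union (hS.prod isClosed_singleton) (hW.prod isClosed_Icc)
    (hu₀.comp continuousOn_fst fun x hx => hx.1) hu ?_ hexp ?_
  · rintro ⟨z, t⟩ ⟨hz, rfl⟩
    exact hexp₀ z hz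
  · rintro ⟨z, t⟩ ⟨⟨hz, rfl⟩, hzW, -⟩
    exact (huu₀ z hzW).symm

variable {γ : ℕ}

theorem genusSurface_eq (γ : ℕ) : genusSurface γ =
    (closure (planarDomain γ) ×ˢ {0} ∪ frontier (planarDomain γ) ×ˢ Icc 0 1) ∪
      closure (planarDomain γ) ×ˢ {1} := by
  rw [genusSurface, frontier_prod_eq, frontier_Ioo one_pos, closure_Ioo zero_ne_one,
    union_right_comm, ← prod_union]
  rfl

theorem fst_mem_closure_of_mem_genusSurface {x : ℂ × ℝ} (hx : x ∈ genusSurface γ) :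
    x.1 ∈ closure (planarDomain γ) := by
  rw [genusSurface_eq] at hx
  rcases hx with (hx | hx) | hx
  exacts [hx.1, frontier_subset_closure hx.1, hx.1]

theorem bottom_mem_genusSurface {z : ℂ} (hz : z ∈ closure (planarDomain γ)) :
    (z, 0) ∈ genusSurface γ :=
  genusSurface_eq γ ▸ Or.inl (Or.inl ⟨hz, rfl⟩)

theorem top_mem_genusSurface {z : ℂ} (hz : z ∈ closure (planarDomain γ)) :
    (z, 1) ∈ genusSurface γ :=
  genusSurface_eq γ ▸ Or.inr ⟨hz, rfl⟩

/-- A radial cutoff around the `k`-th hole of `planarDomain γ`, equal to `1` on its boundary circle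
and to `0` on the other boundary circles. -/
noncomputable def holeCutoff (γ k : ℕ) (z : ℂ) : ℝ :=
  max 0 (2 - dist z (holeCenter γ k) / holeRadius γ)

theorem continuous_holeCutoff (k : ℕ) : Continuous (holeCutoff γ k) := by
  unfold holeCutoff
  fun_prop

theorem holeCutoff_eq_one {k : Fin γ} {z : ℂ}
    (hz : z ∈ Metric.sphere (holeCenter γ k) (holeRadius γ)) : holeCutoff γ k z = 1 := by
  rw [holeCutoff, hz, div_self (holeRadius_pos k).ne']
  norm_num

theorem holeCutoff_eq_zero {k : Fin γ} {z : ℂ}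
    (hz : z ∉ Metric.closedBall (holeCenter γ k) (2 * holeRadius γ)) : holeCutoff γ k z = 0 := by
  have := (lt_div_iff₀ (holeRadius_pos k)).2 (not_le.1 hz)
  exact max_eq_left (by linarith)

theorem holeCutoff_eq_zero_of_mem_sphere_ne {j k : Fin γ} (hjk : j ≠ k) {z : ℂ}
    (hz : z ∈ Metric.sphere (holeCenter γ k) (holeRadius γ)) : holeCutoff γ j z = 0 :=
  holeCutoff_eq_zero ((disjoint_closedBall_holeCenter hjk.symm
    (by linarith [holeRadius_pos k])).notMem_of_mem_left (Metric.sphere_subset_closedBall hz))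

theorem holeCutoff_eq_zero_of_norm_eq_one (k : Fin γ) {z : ℂ}
    (hz : z ∈ Metric.sphere (0 : ℂ) 1) : holeCutoff γ k z = 0 :=
  holeCutoff_eq_zero fun h =>
    hz.not_lt (closedBall_holeCenter_subset_ball k (by linarith [holeRadius_pos k]) h)

/-- The integer ambiguities of `u` on the boundary circles are interpolated by the cutoffs. -/
theorem exists_extension_of_log_on_frontier {f u : ℂ → ℂ}
    (hf : ContinuousOn f (closure (planarDomain γ)))
    (hf₀ : ∀ z ∈ closure (planarDomain γ), f z ≠ 0)
    (hu : ContinuousOn u (frontier (planarDomain γ)))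
    (hexp : ∀ z ∈ frontier (planarDomain γ), Complex.exp (u z) = f z) :
    ∃ (b : Fin γ → ℤ) (v : ℂ → ℂ), ContinuousOn v (closure (planarDomain γ)) ∧
      EqOn v u (frontier (planarDomain γ)) ∧ ∀ z ∈ closure (planarDomain γ), Complex.exp (v z) =
        f z * ∏ k : Fin γ, Complex.exp (2 * Real.pi * Complex.I * holeCutoff γ k z) ^ b k := by
  have hhole (k : Fin γ) := sphere_subset_frontier_planarDomain k
  have houter : Metric.sphere (0 : ℂ) 1 ⊆ frontier (planarDomain γ) :=
    frontier_planarDomain γ ▸ subset_union_left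
  have hsphere : ∀ (c : ℂ) (r : ℝ), IsPreconnected (Metric.sphere c r) :=
    isPreconnected_sphere (by rw [Complex.rank_real_complex]; norm_num)
  obtain ⟨w, hw, hw_exp⟩ := hasLogOn_closure_planarDomain hf hf₀ fun k =>
    ⟨u, hu.mono (hhole k), fun z hz => hexp z (hhole k hz)⟩
  have hdiff : ∀ S ⊆ frontier (planarDomain γ), IsPreconnected S →
      ∃ n : ℤ, ∀ z ∈ S, u z = w z + n * (2 * Real.pi * Complex.I) := fun S hSP hS =>
    exists_forall_eq_add_two_pi_mul_int hS (hu.mono hSP)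
      (hw.mono (hSP.trans frontier_subset_closure)) fun z hz =>
      (hexp z (hSP hz)).trans (hw_exp z (frontier_subset_closure (hSP hz))).symm
  obtain ⟨m, hm⟩ := hdiff _ houter (hsphere _ _)
  choose n hn using fun k => hdiff _ (hhole k) (hsphere _ _)
  refine ⟨fun k => n k - m, fun z => w z + m * (2 * Real.pi * Complex.I) +
    ∑ k, (n k - m : ℤ) * (2 * Real.pi * Complex.I * holeCutoff γ k z), ?_, fun z hz => ?_,
    fun z hz => ?_⟩
  · have := continuous_holeCutoff (γ := γ)
    fun_prop
  · rw [frontier_planarDomain] at hz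
    rcases hz with hz | hz
    · simp [hm z hz, holeCutoff_eq_zero_of_norm_eq_one _ hz]
    · obtain ⟨k, hk⟩ := mem_iUnion.1 hz
      simp only
      rw [Finset.sum_eq_single k (fun j _ hjk => by
        simp [holeCutoff_eq_zero_of_mem_sphere_ne hjk hk]) (by simp), holeCutoff_eq_one hk,
        hn k z hk]
      push_cast
      ring
  · simp only [Complex.exp_add, Complex.exp_sum, Complex.exp_int_mul, Complex.exp_two_pi_mul_I,
      one_zpow, mul_one, hw_exp z hz]

/-- On `genusSurface γ`, the class in `H¹` that is trivial off the top face and there winds once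
along each arc from the `k`-th hole to another boundary circle. -/
noncomputable def topTwist (γ k : ℕ) (x : ℂ × ℝ) : ℂ :=
  if x.2 = 1 then Complex.exp (2 * Real.pi * Complex.I * holeCutoff γ k x.1) else 1

theorem topTwist_ne_zero (k : ℕ) (x : ℂ × ℝ) : topTwist γ k x ≠ 0 := by
  unfold topTwist
  split_ifs
  exacts [Complex.exp_ne_zero _, one_ne_zero]

theorem topTwist_eq_one (k : Fin γ) {x : ℂ × ℝ}
    (hx : x ∈ closure (planarDomain γ) ×ˢ {0} ∪ frontier (planarDomain γ) ×ˢ Icc 0 1) :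
    topTwist γ k x = 1 := by
  refine ite_eq_right_iff.2 fun hx₁ => ?_
  rcases hx with ⟨-, hx₀⟩ | ⟨hx, -⟩
  · exact absurd (hx₀.symm.trans hx₁) zero_ne_one
  rw [frontier_planarDomain] at hx
  rcases hx with hx | hx
  · simp [holeCutoff_eq_zero_of_norm_eq_one k hx]
  obtain ⟨j, hj⟩ := mem_iUnion.1 hx
  rcases eq_or_ne k j with rfl | hkj
  · simp [holeCutoff_eq_one hj]
  · simp [holeCutoff_eq_zero_of_mem_sphere_ne hkj hj]

theorem exists_hasLogOn_mul_prod_topTwist {f : ℂ × ℝ → ℂ} (hf : ContinuousOn f (genusSurface γ))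
    (hf₀ : ∀ x ∈ genusSurface γ, f x ≠ 0)
    (hlog : ∀ k : Fin γ,
      HasLogOn (fun z => f (z, 0)) (Metric.sphere (holeCenter γ k) (holeRadius γ))) :
    ∃ b : Fin γ → ℤ,
      HasLogOn (fun x => f x * ∏ k : Fin γ, topTwist γ k x ^ b k) (genusSurface γ) := by
  have hwalls : frontier (planarDomain γ) ×ˢ Icc 0 1 ⊆ genusSurface γ :=
    genusSurface_eq γ ▸ subset_union_right.trans subset_union_left
  have hbottom : HasLogOn (fun z => f (z, 0)) (closure (planarDomain γ)) :=
    hasLogOn_closure_planarDomain (hf.comp (by fun_prop) fun z hz => bottom_mem_genusSurface hz)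
      (fun z hz => hf₀ _ (bottom_mem_genusSurface hz)) hlog
  obtain ⟨u, hu, hu_exp⟩ := hasLogOn_bottom_union_walls isClosed_closure isClosed_frontier
    frontier_subset_closure (hf.mono hwalls) (fun x hx => hf₀ x (hwalls hx)) hbottom
  have hrim : MapsTo (fun z : ℂ => (z, (1 : ℝ))) (frontier (planarDomain γ))
      (closure (planarDomain γ) ×ˢ {0} ∪ frontier (planarDomain γ) ×ˢ Icc 0 1) := fun z hz =>
    Or.inr ⟨hz, right_mem_Icc.2 zero_le_one⟩
  obtain ⟨b, v, hv, hvu, hv_exp⟩ := exists_extension_of_log_on_frontier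
    (f := fun z => f (z, 1)) (u := fun z => u (z, 1))
    (hf.comp (by fun_prop) fun z hz => top_mem_genusSurface hz)
    (fun z hz => hf₀ _ (top_mem_genusSurface hz)) (hu.comp (by fun_prop) hrim)
    fun z hz => hu_exp _ (hrim hz)
  rw [genusSurface_eq]
  refine ⟨b, HasLogOn.union ((isClosed_closure.prod isClosed_singleton).union
    (isClosed_frontier.prod isClosed_Icc)) (isClosed_closure.prod isClosed_singleton) hu
    (hv.comp continuousOn_fst fun x hx => hx.1) (fun x hx => ?_) ?_ ?_⟩
  · simp [topTwist_eq_one _ hx, hu_exp x hx]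
  · rintro ⟨z, t⟩ ⟨hz, rfl⟩
    simpa [topTwist] using hv_exp z hz
  · rintro ⟨z, t⟩ ⟨hzt | hzt, -, rfl⟩
    · exact absurd hzt.2 one_ne_zero
    · exact (hvu hzt.1).symm

end GenusSurface

section LogSpansOn

/-- The classes of the nowhere zero functions `g i` generate the Bruschlinsky group of `S`. -/
def LogSpansOn {X κ : Type*} [TopologicalSpace X] [Fintype κ] (g : κ → X → ℂ) (S : Set X) : Prop :=
  (∀ i, ∀ x ∈ S, g i x ≠ 0) ∧ ∀ f : X → ℂ, ContinuousOn f S → (∀ x ∈ S, f x ≠ 0) →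
    ∃ v : κ → ℤ, HasLogOn (fun x => f x * ∏ i, g i x ^ v i) S

theorem logSpansOn_genusSurface (γ : ℕ) :
    LogSpansOn (Sum.elim (fun (k : Fin γ) x => x.1 - holeCenter γ k) fun k : Fin γ => topTwist γ k)
      (genusSurface γ) := by
  have hne : ∀ (k : Fin γ), ∀ x ∈ genusSurface γ, x.1 - holeCenter γ k ≠ 0 := fun k x hx =>
    sub_holeCenter_ne_zero (fst_mem_closure_of_mem_genusSurface hx) k
  refine ⟨Sum.forall.2 ⟨hne, fun k x _ => topTwist_ne_zero k x⟩, fun f hf hf₀ => ?_⟩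
  have hmaps : ∀ k : Fin γ, MapsTo (fun z : ℂ => (z, (0 : ℝ)))
      (Metric.sphere (holeCenter γ k) (holeRadius γ)) (genusSurface γ) := fun k z hz =>
    bottom_mem_genusSurface (frontier_subset_closure (sphere_subset_frontier_planarDomain k hz))
  choose a ha using fun k : Fin γ => exists_hasLogOn_mul_sub_center_zpow (holeRadius_pos k)
    (hf.comp (by fun_prop) (hmaps k)) fun z hz => hf₀ _ (hmaps k hz)
  have hlog : ∀ k : Fin γ, HasLogOn (fun z => f (z, 0) * ∏ j : Fin γ, (z - holeCenter γ j) ^ a j)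
      (Metric.sphere (holeCenter γ k) (holeRadius γ)) := fun k => by
    have hother : ∀ j ∈ Finset.univ.erase k, HasLogOn (fun z => (z - holeCenter γ j) ^ a j)
        (Metric.sphere (holeCenter γ k) (holeRadius γ)) := fun j hj =>
      ((hasLogOn_sub_const_closedBall (by
        linarith [le_dist_holeCenter (Finset.ne_of_mem_erase hj).symm, holeRadius_pos k])).zpow
        (a j)).mono Metric.sphere_subset_closedBall
    refine ((ha k).mul (HasLogOn.prod hother)).congr fun z _ => ?_
    simp only [Function.comp_apply, mul_assoc]
    rw [Finset.mul_prod_erase _ (fun j : Fin γ => (z - holeCenter γ j) ^ a j) (Finset.mem_univ k)]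
  obtain ⟨b, hb⟩ := exists_hasLogOn_mul_prod_topTwist
    (f := fun x => f x * ∏ k : Fin γ, (x.1 - holeCenter γ k) ^ a k)
    (hf.mul (continuousOn_finsetProd _ fun k _ =>
      ContinuousOn.zpow₀ (by fun_prop) _ fun x hx => Or.inl (hne k x hx)))
    (fun x hx => mul_ne_zero (hf₀ x hx)
      (Finset.prod_ne_zero_iff.2 fun k _ => zpow_ne_zero _ (hne k x hx))) hlog
  refine ⟨Sum.elim a b, hb.congr fun x _ => ?_⟩
  simp [Fintype.prod_sum_type, mul_assoc]

theorem prod_zpow_eq_zpow_sum {ι G₀ : Type*} [CommGroupWithZero G₀] {z : G₀} (hz : z ≠ 0)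
    (s : Finset ι) (n : ι → ℤ) : ∏ i ∈ s, z ^ n i = z ^ ∑ i ∈ s, n i := by
  classical
  induction s using Finset.induction_on with
  | empty => simp
  | insert i s hi ih => rw [Finset.prod_insert hi, Finset.sum_insert hi, zpow_add₀ hz, ih]

theorem LogSpansOn.exists_hasLogOn_prod_zpow {X κ ι : Type*} [TopologicalSpace X] [Fintype κ]
    [Fintype ι] {g : κ → X → ℂ} {S : Set X} (hg : LogSpansOn g S)
    (hcard : Fintype.card κ < Fintype.card ι) {F : ι → X → ℂ} (hF : ∀ s, ContinuousOn (F s) S)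
    (hF₀ : ∀ s, ∀ x ∈ S, F s x ≠ 0) :
    ∃ c : ι → ℤ, c ≠ 0 ∧ HasLogOn (fun x => ∏ s, F s x ^ c s) S := by
  choose v hv using fun s => hg.2 (F s) (hF s) (hF₀ s)
  have hdep : ¬ LinearIndependent ℤ v := fun hv_indep => by
    have := hv_indep.fintype_card_le_finrank
    rw [Module.finrank_fintype_fun_eq_card] at this
    exact this.not_gt hcard
  obtain ⟨c, hc, s, hs⟩ := Fintype.not_linearIndependent_iff.1 hdep
  refine ⟨c, fun h => hs (congr_fun h s), ?_⟩
  refine (HasLogOn.prod fun s (_ : s ∈ Finset.univ) => (hv s).zpow (c s)).congr fun x hx => ?_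
  have hg_one : ∏ s, (∏ i, g i x ^ v s i) ^ c s = 1 := by
    simp_rw [← Finset.prod_zpow, ← zpow_mul]
    rw [Finset.prod_comm]
    refine Finset.prod_eq_one fun i _ => ?_
    have hi : ∑ s, v s i * c s = 0 := by
      simpa [Finset.sum_apply, mul_comm] using congr_fun hc i
    rw [prod_zpow_eq_zpow_sum (hg.1 i x hx), hi, zpow_zero]
  simp only [mul_zpow, Finset.prod_mul_distrib, hg_one, mul_one]

end LogSpansOn

section CircleLinking

theorem log_sq_of_re_pos {z : ℂ} (hz : 0 < z.re) : Complex.log (z ^ 2) = 2 * Complex.log z := by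
  have hz₀ : z ≠ 0 := fun h => hz.ne' (by simp [h])
  have harg := abs_lt.1 (Complex.abs_arg_lt_pi_div_two_iff.2 (Or.inl hz))
  have him : (2 * Complex.log z).im = 2 * Complex.arg z := by simp [Complex.log_im]
  rw [← Complex.log_exp (x := 2 * Complex.log z) (by linarith) (by linarith), two_mul,
    Complex.exp_add, Complex.exp_log hz₀, pow_two]

theorem log_neg_of_im_neg {z : ℂ} (hz : z.im < 0) :
    Complex.log (-z) = Complex.log z + Real.pi * Complex.I := by
  rw [Complex.log, Complex.log, norm_neg, Complex.arg_neg_eq_arg_add_pi_of_im_neg hz]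
  push_cast
  ring

/-- A complex function on `ℂ × ℝ ≅ ℝ³` vanishing exactly on the horizontal circle of centre `(c, 0)`
and radius `ρ`; its class in the complement of the circle is the linking number with the circle. -/
noncomputable def circleLinking (c : ℂ) (ρ : ℝ) (x : ℂ × ℝ) : ℂ :=
  (dist x.1 c : ℂ) ^ 2 + (x.2 + ρ * Complex.I) ^ 2

variable {c : ℂ} {ρ : ℝ}

theorem continuous_circleLinking : Continuous (circleLinking c ρ) := by
  unfold circleLinking
  fun_prop

theorem circleLinking_eq (c : ℂ) (ρ : ℝ) (x : ℂ × ℝ) :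
    circleLinking c ρ x = ⟨dist x.1 c ^ 2 + x.2 ^ 2 - ρ ^ 2, 2 * ρ * x.2⟩ := by
  apply Complex.ext <;> simp [circleLinking, pow_two] <;> ring

theorem mem_sphere_prod_of_circleLinking_eq_zero (hρ : 0 < ρ) {x : ℂ × ℝ}
    (h : circleLinking c ρ x = 0) : x ∈ Metric.sphere c ρ ×ˢ ({0} : Set ℝ) := by
  rw [circleLinking_eq] at h
  obtain ⟨hre, him⟩ := Complex.ext_iff.1 h
  have ht : x.2 = 0 := by simpa [hρ.ne'] using him
  have hdist : dist x.1 c ^ 2 = ρ ^ 2 := by simpa [ht, sub_eq_zero] using hre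
  exact ⟨(pow_left_inj₀ dist_nonneg hρ.le two_ne_zero).1 hdist, ht⟩

theorem circleLinking_mem_slitPlane {x : ℂ × ℝ} (h : ρ ^ 2 < dist x.1 c ^ 2 + x.2 ^ 2) :
    circleLinking c ρ x ∈ Complex.slitPlane := by
  rw [circleLinking_eq]
  exact Or.inl (sub_pos.2 h)

theorem circleLinking_mem_slitPlane_of_mem_sphere (hρ : 0 ≤ ρ) {T : ℝ} (hT : ‖c‖ + ρ < T)
    {x : ℂ × ℝ} (hx : x ∈ Metric.sphere 0 T) : circleLinking c ρ x ∈ Complex.slitPlane := by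
  apply circleLinking_mem_slitPlane
  rw [mem_sphere_zero_iff_norm, Prod.norm_def] at hx
  rcases max_choice ‖x.1‖ ‖x.2‖ with h | h <;> rw [h] at hx
  · have : ρ < dist x.1 c := by
      rw [dist_eq_norm]
      linarith [norm_sub_norm_le x.1 c]
    nlinarith
  · have : ρ < |x.2| := by
      rw [← Real.norm_eq_abs]
      linarith [norm_nonneg c]
    nlinarith [sq_abs x.2, sq_nonneg (dist x.1 c)]

theorem log_circleLinking_pole_sub (hρ : 0 < ρ) {T : ℝ} (hT : 0 < T) :
    Complex.log (circleLinking c ρ (c, T)) - Complex.log (circleLinking c ρ (c, -T)) =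
      2 * Complex.log (T + ρ * Complex.I) - 2 * Complex.log ((-T : ℝ) + ρ * Complex.I) +
        2 * Real.pi * Complex.I := by
  have hnorth : circleLinking c ρ (c, T) = (T + ρ * Complex.I) ^ 2 := by
    simp [circleLinking]
  have hsouth : circleLinking c ρ (c, -T) = (T - ρ * Complex.I) ^ 2 := by
    simp only [circleLinking, dist_self]
    push_cast
    ring
  have hneg : ((-T : ℝ) + ρ * Complex.I : ℂ) = -(T - ρ * Complex.I) := by
    push_cast
    ring
  rw [hnorth, hsouth, hneg, log_neg_of_im_neg (by simpa), log_sq_of_re_pos (by simpa),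
    log_sq_of_re_pos (by simpa)]
  ring

/-- Following the sphere from the north to the south pole and returning along the axis links the
circle once: there is a logarithm of `circleLinking` on the sphere, and twice a logarithm of
`t + ρ I` is one on the axis, but they differ by `2 π I` between the poles. -/
theorem eq_zero_of_hasLogOn_circleLinking_zpow (hρ : 0 < ρ) {T : ℝ} (hT : ‖c‖ + ρ < T) {n : ℤ}
    (h : HasLogOn (fun x => circleLinking c ρ x ^ n) (Metric.sphere 0 T ∪ {c} ×ˢ univ)) :
    n = 0 := by
  obtain ⟨u, hu, hexp⟩ := h
  have hT₀ : 0 < T := by linarith [norm_nonneg c]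
  have haxis : ∀ t : ℝ, (c, t) ∈ Metric.sphere (0 : ℂ × ℝ) T ∪ {c} ×ˢ univ := fun t =>
    Or.inr ⟨rfl, trivial⟩
  have hpole : ∀ t : ℝ, |t| = T → (c, t) ∈ Metric.sphere (0 : ℂ × ℝ) T := fun t ht => by
    rw [mem_sphere_zero_iff_norm, Prod.norm_mk, Real.norm_eq_abs, ht, max_eq_right (by linarith)]
  have hline : ∀ t : ℝ, (t + ρ * Complex.I : ℂ) ∈ Complex.slitPlane := fun t =>
    Or.inr (by simp [hρ.ne'])
  have hslit : ∀ x ∈ Metric.sphere (0 : ℂ × ℝ) T, circleLinking c ρ x ∈ Complex.slitPlane :=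
    fun x hx => circleLinking_mem_slitPlane_of_mem_sphere hρ.le hT hx
  have hsphere : IsPreconnected (Metric.sphere (0 : ℂ × ℝ) T) := isPreconnected_sphere
    (by rw [← Module.finrank_eq_rank, Module.finrank_prod]; norm_num) _ _
  have hsub_sphere := sub_eq_sub_of_exp_eq_exp hsphere (hu.mono subset_union_left)
    (v := fun x => n * Complex.log (circleLinking c ρ x))
    (continuousOn_const.mul (continuous_circleLinking.continuousOn.clog hslit))
    (fun x hx => by
      rw [hexp x (Or.inl hx), Complex.exp_int_mul,
        Complex.exp_log (Complex.slitPlane_ne_zero (hslit x hx))])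
    (hpole T (abs_of_pos hT₀)) (hpole (-T) (by rw [abs_neg, abs_of_pos hT₀]))
  have hsub_axis := sub_eq_sub_of_exp_eq_exp isPreconnected_univ (u := fun t : ℝ => u (c, t))
    (v := fun t => n * (2 * Complex.log (t + ρ * Complex.I)))
    (hu.comp_continuous (by fun_prop) haxis).continuousOn
    (continuousOn_const.mul (continuousOn_const.mul
      (ContinuousOn.clog (by fun_prop) fun t _ => hline t)))
    (fun t _ => by
      rw [hexp _ (haxis t), Complex.exp_int_mul, two_mul, Complex.exp_add,
        Complex.exp_log (Complex.slitPlane_ne_zero (hline t))]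
      simp [circleLinking, pow_two])
    (mem_univ T) (mem_univ (-T))
  have : (n : ℂ) * (2 * Real.pi * Complex.I) = 0 := by
    linear_combination hsub_axis - hsub_sphere - n * log_circleLinking_pole_sub hρ hT₀ (c := c)
  simpa [Real.pi_ne_zero] using this

theorem eq_zero_of_hasLogOn_prod_fst_sub {ι : Type*} [Fintype ι] {c : ι → ℂ} {ρ : ι → ℝ}
    (hρ : ∀ k, 0 < ρ k) (hdist : ∀ j k, j ≠ k → ρ k < dist (c k) (c j)) {S : Set (ℂ × ℝ)}
    (hcircle : ∀ k, Metric.sphere (c k) (ρ k) ×ˢ {0} ⊆ S) {a : ι → ℤ}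
    (h : HasLogOn (fun x => ∏ k, (x.1 - c k) ^ a k) S) : a = 0 := by
  funext k
  have hk : HasLogOn (fun z => ∏ j, (z - c j) ^ a j) (Metric.sphere (c k) (ρ k)) :=
    h.comp (φ := fun z => (z, 0)) (by fun_prop) fun z hz => hcircle k ⟨hz, rfl⟩
  exact eq_zero_of_hasLogOn_sub_center_zpow (hρ k) (hk.of_prod k fun j hjk =>
    ((hasLogOn_sub_const_closedBall (hdist j k hjk)).zpow (a j)).mono
      Metric.sphere_subset_closedBall)

theorem eq_zero_of_hasLogOn_prod_circleLinking {ι : Type*} [Fintype ι] {c : ι → ℂ} {ρ : ι → ℝ}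
    (hρ : ∀ k, 0 < ρ k) (hdist : ∀ j k, j ≠ k → ρ j < dist (c k) (c j)) {S : Set (ℂ × ℝ)} {T : ℝ}
    (hT : ∀ k, ‖c k‖ + ρ k < T) (hsphere : Metric.sphere 0 T ⊆ S)
    (haxis : ∀ k, {c k} ×ˢ univ ⊆ S) {b : ι → ℤ}
    (h : HasLogOn (fun x => ∏ k, circleLinking (c k) (ρ k) x ^ b k) S) : b = 0 := by
  funext k
  refine eq_zero_of_hasLogOn_circleLinking_zpow (hρ k) (hT k)
    ((h.mono (union_subset hsphere (haxis k))).of_prod k fun j hjk => HasLogOn.zpow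
      (.of_mem_slitPlane continuous_circleLinking.continuousOn ?_) _)
  rintro x (hx | hx)
  · exact circleLinking_mem_slitPlane_of_mem_sphere (hρ j).le (hT j) hx
  · apply circleLinking_mem_slitPlane
    rw [mem_singleton_iff.1 hx.1]
    nlinarith [hρ j, hdist j k hjk]

theorem eq_zero_of_hasLogOn_frontier {ι : Type*} [Fintype ι] {c : ι → ℂ} {ρ : ι → ℝ}
    (hρ : ∀ k, 0 < ρ k) (hdist : ∀ j k, j ≠ k → ρ j < dist (c j) (c k)) {Ω : Set (ℂ × ℝ)}
    (hΩ : IsOpen Ω) (hbdd : Bornology.IsBounded Ω) (haxis : ∀ k, ∀ x ∈ closure Ω, x.1 ≠ c k)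
    (hcircle : ∀ k, Metric.sphere (c k) (ρ k) ×ˢ {0} ⊆ Ω) {a b : ι → ℤ}
    (h : HasLogOn (fun x => (∏ k, (x.1 - c k) ^ a k) * ∏ k, circleLinking (c k) (ρ k) x ^ b k)
      (frontier Ω)) : a = 0 ∧ b = 0 := by
  have hunion : closure Ω ∪ Ωᶜ = univ :=
    eq_univ_of_univ_subset (union_compl_self Ω ▸ union_subset_union_left _ subset_closure)
  have : ContractibleSpace ↥(closure Ω ∪ Ωᶜ) := by
    rw [hunion]
    exact convex_univ.contractibleSpace univ_nonempty
  have hsub₀ : ∀ k, ∀ x ∈ closure Ω, x.1 - c k ≠ 0 := fun k x hx => sub_ne_zero.2 (haxis k x hx)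
  have hlink₀ : ∀ k, ∀ x ∈ Ωᶜ, circleLinking (c k) (ρ k) x ≠ 0 := fun k x hx hx₀ =>
    hx (hcircle k (mem_sphere_prod_of_circleLinking_eq_zero (hρ k) hx₀))
  rw [hΩ.frontier_eq, sdiff_eq] at h
  obtain ⟨hfst, hlink⟩ := HasLogOn.left_and_right_of_mul_inter isClosed_closure hΩ.isClosed_compl
    (continuousOn_finsetProd _ fun k _ =>
      ContinuousOn.zpow₀ (by fun_prop) _ fun x hx => Or.inl (hsub₀ k x hx))
    (fun x hx => Finset.prod_ne_zero_iff.2 fun k _ => zpow_ne_zero _ (hsub₀ k x hx))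
    (continuousOn_finsetProd _ fun k _ =>
      continuous_circleLinking.continuousOn.zpow₀ _ fun x hx => Or.inl (hlink₀ k x hx))
    (fun x hx => Finset.prod_ne_zero_iff.2 fun k _ => zpow_ne_zero _ (hlink₀ k x hx)) h
  obtain ⟨R, hR⟩ := hbdd.subset_ball 0
  obtain ⟨T, hT, hRT⟩ := ((Filter.eventually_all.2 fun k =>
    Filter.eventually_gt_atTop (‖c k‖ + ρ k)).and (Filter.eventually_ge_atTop R)).exists
  have hsphere : Metric.sphere 0 T ⊆ Ωᶜ := fun x hx hxΩ =>
    (hRT.trans_eq hx.symm).not_gt (hR hxΩ)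
  have hline : ∀ k, {c k} ×ˢ univ ⊆ Ωᶜ := fun k x hx hxΩ =>
    haxis k x (subset_closure hxΩ) hx.1
  exact ⟨eq_zero_of_hasLogOn_prod_fst_sub hρ (fun j k hjk => hdist k j hjk.symm)
    (fun k => (hcircle k).trans subset_closure) hfst,
    eq_zero_of_hasLogOn_prod_circleLinking hρ (fun j k hjk => dist_comm (c j) _ ▸ hdist j k hjk) hT
      hsphere hline hlink⟩

end CircleLinking

section Handlebody

variable {γ : ℕ}

/-- A circle in `openHandlebody γ` around the `k`-th hole. -/
def coreCircle (γ k : ℕ) : Set (ℂ × ℝ) :=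
  Metric.sphere (holeCenter γ k) (2 * holeRadius γ) ×ˢ {0}

theorem isCompact_coreCircle (k : ℕ) : IsCompact (coreCircle γ k) :=
  (isCompact_sphere _ _).prod isCompact_singleton

theorem coreCircle_subset_openHandlebody (k : Fin γ) : coreCircle γ k ⊆ openHandlebody γ := by
  have hr := holeRadius_pos k
  refine prod_mono (fun z hz => ?_) (subset_univ _)
  rw [planarDomain_eq]
  have hz' := Metric.sphere_subset_closedBall hz
  refine ⟨closedBall_holeCenter_subset_ball k (by linarith) hz', fun h => ?_⟩
  obtain ⟨j, hj⟩ := mem_iUnion.1 h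
  rcases eq_or_ne j k with rfl | hjk
  · rw [Metric.mem_closedBall, hz] at hj
    linarith
  · exact (disjoint_closedBall_holeCenter hjk (by linarith)).notMem_of_mem_left hj hz'

theorem exists_continuousOn_leftInvOn_of_homeomorph {X Y : Type*} [TopologicalSpace X]
    [TopologicalSpace Y] [Nonempty X] [Nonempty Y] {S : Set X} {T : Set Y} (e : S ≃ₜ T) :
    ∃ (φ : X → Y) (ψ : Y → X), ContinuousOn φ S ∧ MapsTo φ S T ∧ ContinuousOn ψ T ∧
      MapsTo ψ T S ∧ LeftInvOn ψ φ S := by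
  obtain ⟨φ, hφ, hφe⟩ := exists_continuousOn_extend (w := fun x => (e x : Y)) (by fun_prop)
  obtain ⟨ψ, hψ, hψe⟩ := exists_continuousOn_extend (w := fun y => (e.symm y : X)) (by fun_prop)
  refine ⟨φ, ψ, hφ, fun x hx => ?_, hψ, fun y hy => ?_, fun x hx => ?_⟩
  · exact hφe ⟨x, hx⟩ ▸ (e _).2
  · exact hψe ⟨y, hy⟩ ▸ (e.symm _).2
  · rw [hφe ⟨x, hx⟩, hψe, e.symm_apply_apply]

theorem genus_le_of_frontier_homeomorph {Ω : Set (ℂ × ℝ)} (hΩ : IsOpen Ω)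
    (hbdd : Bornology.IsBounded Ω) (hsub : closure Ω ⊆ openHandlebody γ)
    (hcore : ∀ k : Fin γ, coreCircle γ k ⊆ Ω) {γ' : ℕ} (e : frontier Ω ≃ₜ genusSurface γ') :
    γ ≤ γ' := by
  by_contra! hlt
  obtain ⟨φ, ψ, hφ, hφ_maps, hψ, hψ_maps, hψφ⟩ := exists_continuousOn_leftInvOn_of_homeomorph e
  let F : Fin γ ⊕ Fin γ → ℂ × ℝ → ℂ := Sum.elim (fun k x => x.1 - holeCenter γ k)
    fun k => circleLinking (holeCenter γ k) (2 * holeRadius γ)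
  have hF : ∀ s, Continuous (F s) := Sum.forall.2
    ⟨fun _ => by simp only [F, Sum.elim_inl]; fun_prop, fun _ => continuous_circleLinking⟩
  have haxis : ∀ k : Fin γ, ∀ x ∈ closure Ω, x.1 - holeCenter γ k ≠ 0 := fun k x hx =>
    sub_holeCenter_ne_zero (subset_closure (hsub hx).1) k
  have hρ : ∀ _ : Fin γ, 0 < 2 * holeRadius γ := fun k => by linarith [holeRadius_pos k]
  have hF₀ : ∀ s, ∀ x ∈ frontier Ω, F s x ≠ 0 := by
    rw [hΩ.frontier_eq]
    exact Sum.forall.2 ⟨fun k x hx => haxis k x hx.1, fun k x hx hx₀ =>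
      hx.2 (hcore k (mem_sphere_prod_of_circleLinking_eq_zero (hρ k) hx₀))⟩
  obtain ⟨c, hc, hlog⟩ := (logSpansOn_genusSurface γ').exists_hasLogOn_prod_zpow
    (F := fun s => F s ∘ ψ) (by simp only [Fintype.card_sum, Fintype.card_fin]; omega)
    (fun s => (hF s).comp_continuousOn hψ) fun s y hy => hF₀ s _ (hψ_maps hy)
  have hlog' := (hlog.comp hφ hφ_maps).congr (g := fun x => ∏ s, F s x ^ c s) fun x hx => by
    simp [hψφ hx]
  simp only [Fintype.prod_sum_type] at hlog'
  obtain ⟨ha, hb⟩ := eq_zero_of_hasLogOn_frontier hρ (fun j k hjk => by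
    linarith [le_dist_holeCenter hjk, holeRadius_pos k]) hΩ hbdd
    (fun k x hx => sub_ne_zero.1 (haxis k x hx)) hcore hlog'
  exact hc (funext (Sum.forall.2 ⟨congr_fun ha, congr_fun hb⟩))

theorem handlebody_exhaustion_genus_lower_bound_general (γ : ℕ) (Ω : ℕ → Set (ℂ × ℝ))
    (hopen : ∀ i, IsOpen (Ω i)) (hmono : Monotone Ω) (hin : ∀ i, CptSub (Ω i) (openHandlebody γ))
    (hexh : (⋃ i, Ω i) = openHandlebody γ) :
    ∃ N : ℕ, ∀ i ≥ N, ∀ γ' : ℕ,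
      Nonempty ((frontier (Ω i)) ≃ₜ (genusSurface γ')) → γ ≤ γ' := by
  have hcompact : IsCompact (⋃ k : Fin γ, coreCircle γ k) :=
    isCompact_iUnion fun k => isCompact_coreCircle k
  obtain ⟨N, hN⟩ := hcompact.elim_directed_cover Ω hopen
    (hexh ▸ iUnion_subset coreCircle_subset_openHandlebody) hmono.directed_le
  refine ⟨N, fun i hi γ' ⟨e⟩ => genus_le_of_frontier_homeomorph (hopen i)
    ((hin i).1.isBounded.subset subset_closure) ((hin i).2.trans interior_subset) (fun k => ?_) e⟩
  exact (subset_iUnion (fun k : Fin γ => coreCircle γ k) k).trans (hN.trans (hmono hi))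

end Handlebody

/-- **Lemma 2.8.** Let `M` be the interior of the handlebody of genus `γ` (realized by
the concrete model `openHandlebody γ ⊆ ℂ × ℝ ≅ ℝ³`), and let `Ω₁ ⋐ Ω₂ ⋐ ⋯` be a `C¹`
exhaustion of `M` such that each `Ω i` and each complement `M \ Ω i` is connected.  Then
for all sufficiently large `i` the genus of the closed surface `∂Ω i` is at least `γ`,
i.e. whenever `∂Ω i` is homeomorphic to the standard closed surface of genus `γ'`, then
`γ' ≥ γ`. -/
theorem handlebody_exhaustion_genus_lower_bound
    (γ : ℕ) (Ω : ℕ → Set (ℂ × ℝ))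
    (hdom : ∀ i, IsC1DomainAmbient (Ω i))
    (hnest : ∀ i, CptSub (Ω i) (Ω (i + 1)))
    (hin : ∀ i, CptSub (Ω i) (openHandlebody γ))
    (hexh : (⋃ i, Ω i) = openHandlebody γ)
    (hconn : ∀ i, IsConnected (Ω i))
    (hcconn : ∀ i, IsConnected (openHandlebody γ \ Ω i)) :
    ∃ N : ℕ, ∀ i ≥ N, ∀ γ' : ℕ,
      Nonempty ((frontier (Ω i)) ≃ₜ (genusSurface γ')) → γ ≤ γ' :=
  handlebody_exhaustion_genus_lower_bound_general γ Ω (fun i => (hdom i).1)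
    (monotone_nat_of_le_succ fun i => subset_closure.trans ((hnest i).2.trans interior_subset))
    hin hexh
end
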